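/- arXiv:2409.09270 — 7 statements merged into one kernel-verified Lean document; each statement's English description precedes it below -/
import Mathlib

section
/- Let d ≥ 1, δ > 0, and let γ̃ : (0,∞) → ℝ satisfy the radial kernel conditions with horizon δ in dimension d. Let x ∈ ℝ^d and let u : ℝ^d → ℝ be four times continuously differentiable on the closed ball B̄_δ(x), with M₄ := sup_{|y−x|≤δ} ‖D⁴u(y)‖ < ∞ (operator norm of the fourth derivative). Then the integral 2∫_{B_δ(x)} (u(y) − u(x)) γ̃(|y−x|) dy exists and |2∫_{B_δ(x)} (u(y) − u(x)) γ̃(|y−x|) dy − Δu(x)| ≤ (d/12) δ² M₄, where Δu(x) is the Laplacian of u at x. -/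
open MeasureTheory Metric Set

noncomputable section

/-- Surface measure of the unit sphere in `ℝ^d`, expressed as `d` times the volume
of the unit ball. -/
def unitSphereArea (d : ℕ) : ℝ :=
  d * (volume (ball (0 : EuclideanSpace ℝ (Fin d)) 1)).toReal

/-- The radial kernel conditions with horizon `δ` in dimension `d`. -/
def RadialKernel (d : ℕ) (δ : ℝ) (γ : ℝ → ℝ) : Prop :=
  Measurable γ ∧ (∀ s, 0 < s → s < δ → 0 < γ s) ∧ (∀ s, δ ≤ s → γ s = 0) ∧
    IntegrableOn γ (Ioo 0 δ) ∧
    unitSphereArea d * (∫ s in Ioo 0 δ, s ^ (d + 1) * γ s) = d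

lemma aux_int (f f' : ℝ → ℝ) (c : ℝ) (n : ℕ) (h0 : f 0 = 0)
    (hf : ∀ t ∈ Icc (0:ℝ) 1, HasDerivWithinAt f (f' t) (Icc 0 1) t)
    (hb : ∀ t ∈ Icc (0:ℝ) 1, |f' t| ≤ c * t ^ n) :
    ∀ t ∈ Icc (0:ℝ) 1, |f t| ≤ c / (n + 1) * t ^ (n + 1) := by
  have := image_norm_le_of_norm_deriv_right_le_deriv_boundary (f := f) (f' := f') (a := 0) (b := 1)
    (B := fun t => c / (n + 1) * t ^ (n + 1)) (B' := fun t => c * t ^ n)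
    (fun t ht => (hf t ht).continuousWithinAt)
    (fun t ht => (hf t ⟨ht.1, ht.2.le⟩).mono_of_mem_nhdsWithin
      (Icc_mem_nhdsGE_of_mem ht))
    (by simp [h0])
    (fun t => by
      have h := (hasDerivAt_pow (n+1) t).const_mul (c / (n + 1))
      refine h.congr_deriv ?_
      have : (n:ℝ) + 1 ≠ 0 := by positivity
      push_cast
      field_simp)
    (fun t ht => hb t ⟨ht.1, ht.2.le⟩)
  intro t ht
  exact this ht

lemma taylor1 (a0 a1 a2 a3 a4 : ℝ → ℝ) (C : ℝ)
    (h0 : ∀ t ∈ Icc (-1:ℝ) 1, HasDerivWithinAt a0 (a1 t) (Icc (-1) 1) t)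
    (h1 : ∀ t ∈ Icc (-1:ℝ) 1, HasDerivWithinAt a1 (a2 t) (Icc (-1) 1) t)
    (h2 : ∀ t ∈ Icc (-1:ℝ) 1, HasDerivWithinAt a2 (a3 t) (Icc (-1) 1) t)
    (h3 : ∀ t ∈ Icc (-1:ℝ) 1, HasDerivWithinAt a3 (a4 t) (Icc (-1) 1) t)
    (hC : ∀ t ∈ Icc (-1:ℝ) 1, |a4 t| ≤ C) :
    |a0 1 + a0 (-1) - 2 * a0 0 - a2 0| ≤ C / 12 := by
  have P : ∀ (a b : ℝ → ℝ), (∀ t ∈ Icc (-1:ℝ) 1, HasDerivWithinAt a (b t) (Icc (-1) 1) t) →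
      ∀ t ∈ Icc (0:ℝ) 1, HasDerivWithinAt a (b t) (Icc 0 1) t := fun a b h t ht =>
    (h t ⟨by linarith [ht.1], ht.2⟩).mono (Icc_subset_Icc (by norm_num) le_rfl)
  have N : ∀ (a b : ℝ → ℝ), (∀ t ∈ Icc (-1:ℝ) 1, HasDerivWithinAt a (b t) (Icc (-1) 1) t) →
      ∀ t ∈ Icc (0:ℝ) 1, HasDerivWithinAt (fun s => a (-s)) (-b (-t)) (Icc 0 1) t := by
    intro a b h t ht
    have := (h (-t) ⟨by linarith [ht.2], by linarith [ht.1]⟩).comp t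
      ((hasDerivAt_neg t).hasDerivWithinAt (s := Icc 0 1))
      (fun s hs => ⟨by linarith [hs.2], by linarith [hs.1]⟩)
    simpa [Function.comp_def] using this
  have e3 := aux_int (fun t => a3 t - a3 (-t)) (fun t => a4 t + a4 (-t)) (2 * C) 0 (by simp)
    (fun t ht => ((P _ _ h3 t ht).sub (N _ _ h3 t ht)).congr_deriv (by ring))
    (fun t ht => by
      have := hC t ⟨by linarith [ht.1], ht.2⟩
      have := hC (-t) ⟨by linarith [ht.2], by linarith [ht.1]⟩
      have := abs_add_le (a4 t) (a4 (-t))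
      simp; linarith)
  have e2 := aux_int (fun t => a2 t + a2 (-t) - 2 * a2 0) (fun t => a3 t - a3 (-t)) _ 1
    (by simp; ring)
    (fun t ht => 
      (((P _ _ h2 t ht).add (N _ _ h2 t ht)).sub_const (2 * a2 0)).congr_deriv (by ring))
    e3
  have e1 := aux_int (fun t => a1 t - a1 (-t) - 2 * a2 0 * t)
    (fun t => a2 t + a2 (-t) - 2 * a2 0) _ 2
    (by simp)
    (fun t ht => 
      (((P _ _ h1 t ht).sub (N _ _ h1 t ht)).sub
        (((hasDerivAt_id t).const_mul (2 * a2 0)).hasDerivWithinAt)).congr_deriv (by simp))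
    e2
  have e0 := aux_int (fun t => a0 t + a0 (-t) - 2 * a0 0 - a2 0 * t ^ 2)
    (fun t => a1 t - a1 (-t) - 2 * a2 0 * t) _ 3
    (by simp; ring)
    (fun t ht => 
      ((((P _ _ h0 t ht).add (N _ _ h0 t ht)).sub_const (2 * a0 0)).sub
        (((hasDerivAt_pow 2 t).const_mul (a2 0)).hasDerivWithinAt)).congr_deriv (by simp; ring))
    e1 1 (by simp)
  norm_num at e0
  convert e0 using 1
  ring

lemma taylorE {E : Type*} [NormedAddCommGroup E] [NormedSpace ℝ E] (S : Set E) (hS : UniqueDiffOn ℝ S)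
    (u : E → ℝ) (hu : ContDiffOn ℝ 4 u S) (M : ℝ)
    (hM : ∀ y ∈ S, ‖iteratedFDerivWithin ℝ 4 u S y‖ ≤ M) (x h : E)
    (hh : ∀ t ∈ Icc (-1:ℝ) 1, x + t • h ∈ S) :
    |u (x + h) + u (x - h) - 2 * u x - iteratedFDerivWithin ℝ 2 u S x (fun _ => h)|
      ≤ M * ‖h‖ ^ 4 / 12 := by
  let a : ℕ → ℝ → ℝ := fun k t => iteratedFDerivWithin ℝ k u S (x + t • h) (fun _ => h)
  have ha : ∀ k : ℕ, k < 4 → ∀ t ∈ Icc (-1:ℝ) 1,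
      HasDerivWithinAt (a k) (a (k+1) t) (Icc (-1) 1) t := by
    intro k hk t ht
    have hd := (hu.differentiableOn_iteratedFDerivWithin (m := k) (by exact_mod_cast hk) hS
      (x + t • h) (hh t ht)).hasFDerivWithinAt
    have hl : HasDerivWithinAt (fun t : ℝ => x + t • h) h (Icc (-1) 1) t := by
      simpa using (((hasDerivAt_id t).smul_const h).const_add x).hasDerivWithinAt
    have h2 := hd.comp_hasDerivWithinAt t hl hh
    have h3 := ((ContinuousMultilinearMap.apply ℝ (fun _ : Fin k => E) ℝ (fun _ => h)).hasFDerivAt).comp_hasDerivWithinAt t h2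
    exact h3
  have := taylor1 (a 0) (a 1) (a 2) (a 3) (a 4) (M * ‖h‖ ^ 4) (ha 0 (by norm_num))
    (ha 1 (by norm_num)) (ha 2 (by norm_num)) (ha 3 (by norm_num)) (by
      intro t ht
      refine ((iteratedFDerivWithin ℝ 4 u S (x + t • h)).le_opNorm (fun _ => h)).trans ?_
      simp only [Finset.prod_const, Finset.card_univ, Fintype.card_fin]
      gcongr
      exact hM _ (hh t ht))
  simpa [a, sub_eq_add_neg] using this

/-- truncated kernel -/
def gk (δ : ℝ) (γ : ℝ → ℝ) : ℝ → ℝ := (Ioo 0 δ).indicator γ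

lemma gk_nonneg {d δ γ} (hγ : RadialKernel d δ γ) (s : ℝ) : 0 ≤ gk δ γ s :=
  indicator_nonneg (fun s hs => (hγ.2.1 s hs.1 hs.2).le) s

lemma gk_int {d δ γ} (hd : 1 ≤ d) (hγ : RadialKernel d δ γ) (k : ℕ) :
    Integrable (fun h : EuclideanSpace ℝ (Fin d) => ‖h‖ ^ k * gk δ γ ‖h‖) := by
  have : Nonempty (Fin d) := ⟨⟨0, hd⟩⟩
  rw [integrable_fun_norm_addHaar volume (f := fun s => s ^ k * gk δ γ s)]
  have h1 : IntegrableOn (fun s : ℝ => (s ^ (d - 1) * s ^ k) * γ s) (Ioo 0 δ) :=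
    hγ.2.2.2.1.continuousOn_mul_of_subset (K := Icc 0 δ) (by fun_prop) isCompact_Icc measurableSet_Ioo
      Ioo_subset_Icc_self
  refine Integrable.integrableOn ?_
  rw [← integrable_indicator_iff measurableSet_Ioo] at h1
  refine h1.congr (Filter.Eventually.of_forall fun s => ?_)
  by_cases hs : s ∈ Ioo 0 δ <;> simp [gk, hs, mul_assoc]

lemma gk_mom {d δ γ} (hd : 1 ≤ d) (hγ : RadialKernel d δ γ) :
    ∫ h : EuclideanSpace ℝ (Fin d), ‖h‖ ^ 2 * gk δ γ ‖h‖ = d := by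
  have : Nonempty (Fin d) := ⟨⟨0, hd⟩⟩
  rw [integral_fun_norm_addHaar volume (f := fun s => s ^ 2 * gk δ γ s)]
  conv_rhs => rw [← hγ.2.2.2.2]
  have : ∫ y in Ioi (0:ℝ), y ^ (d - 1) • (y ^ 2 * gk δ γ y) = ∫ s in Ioo 0 δ, s ^ (d + 1) * γ s := by
    rw [← integral_indicator measurableSet_Ioo, ← integral_indicator measurableSet_Ioi]
    congr 1
    ext s
    by_cases hs : s ∈ Ioo 0 δ
    · have h0 : s ∈ Ioi (0:ℝ) := hs.1
      rw [indicator_of_mem hs, indicator_of_mem h0, gk, indicator_of_mem hs, smul_eq_mul, ← mul_assoc,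
        ← pow_add]
      congr 2; omega
    · simp [gk, hs]
  simp only [finrank_euclideanSpace, Fintype.card_fin]
  rw [this]
  simp [unitSphereArea, Measure.real, mul_assoc]

lemma coord_int {d δ γ} (hd : 1 ≤ d) (hγ : RadialKernel d δ γ) (i j : Fin d) :
    Integrable (fun h : EuclideanSpace ℝ (Fin d) => h i * h j * gk δ γ ‖h‖) := by
  refine (gk_int hd hγ 2).mono' ?_ ?_
  · have : Measurable (gk δ γ) := hγ.1.indicator measurableSet_Ioo
    have h2 : Measurable (fun h : EuclideanSpace ℝ (Fin d) => gk δ γ ‖h‖) := this.comp measurable_norm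
    have h3 : Measurable (fun h : EuclideanSpace ℝ (Fin d) => h i * h j) := by fun_prop
    exact (h3.mul h2).aestronglyMeasurable
  · refine Filter.Eventually.of_forall fun h => ?_
    rw [norm_mul, norm_mul, Real.norm_of_nonneg (gk_nonneg hγ _), pow_two]
    have := gk_nonneg hγ ‖h‖
    gcongr <;> exact PiLp.norm_apply_le _ _

lemma coord_ne {d δ} {γ : ℝ → ℝ} (i j : Fin d) (hij : i ≠ j) :
    ∫ h : EuclideanSpace ℝ (Fin d), h i * h j * gk δ γ ‖h‖ = 0 := by
  let e : EuclideanSpace ℝ (Fin d) ≃ₗᵢ[ℝ] EuclideanSpace ℝ (Fin d) :=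
    LinearIsometryEquiv.piLpCongrRight 2
      (fun k => if k = i then LinearIsometryEquiv.neg ℝ else LinearIsometryEquiv.refl ℝ ℝ)
  have := e.measurePreserving.integral_comp e.toHomeomorph.measurableEmbedding
    (fun h => h i * h j * gk δ γ ‖h‖)
  have h2 : ∀ h, (e h) i * (e h) j * gk δ γ ‖e h‖ = - (h i * h j * gk δ γ ‖h‖) := by
    intro h
    rw [e.norm_map]
    simp [e, LinearIsometryEquiv.piLpCongrRight_apply, hij.symm]
  simp only [h2, integral_neg] at this
  linarith

lemma coord_eq {d δ} {γ : ℝ → ℝ} (i j : Fin d) :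
    ∫ h : EuclideanSpace ℝ (Fin d), h i * h i * gk δ γ ‖h‖ =
    ∫ h : EuclideanSpace ℝ (Fin d), h j * h j * gk δ γ ‖h‖ := by
  let e : EuclideanSpace ℝ (Fin d) ≃ₗᵢ[ℝ] EuclideanSpace ℝ (Fin d) :=
    LinearIsometryEquiv.piLpCongrLeft 2 ℝ ℝ (Equiv.swap i j)
  have := e.measurePreserving.integral_comp e.toHomeomorph.measurableEmbedding
    (fun h => h j * h j * gk δ γ ‖h‖)
  rw [← this]
  congr 1; ext h
  rw [e.norm_map]
  simp [e, LinearIsometryEquiv.piLpCongrLeft_apply, Equiv.piCongrLeft']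

lemma coord_one {d δ γ} (hd : 1 ≤ d) (hγ : RadialKernel d δ γ) (i : Fin d) :
    ∫ h : EuclideanSpace ℝ (Fin d), h i * h i * gk δ γ ‖h‖ = 1 := by
  have h1 := gk_mom hd hγ
  have h2 : ∀ h : EuclideanSpace ℝ (Fin d), ‖h‖ ^ 2 * gk δ γ ‖h‖
      = ∑ j, h j * h j * gk δ γ ‖h‖ := by
    intro h
    rw [EuclideanSpace.real_norm_sq_eq, Finset.sum_mul]
    simp [pow_two]
  simp only [h2] at h1
  rw [integral_finsetSum _ (fun j _ => coord_int hd hγ j j)] at h1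
  rw [Finset.sum_congr rfl (fun j _ => coord_eq j i)] at h1
  simp at h1
  have : (d:ℝ) ≠ 0 := by positivity
  field_simp at h1
  simpa only [← pow_two] using h1

lemma bilin {d δ γ} (hd : 1 ≤ d) (hγ : RadialKernel d δ γ)
    (B : ContinuousMultilinearMap ℝ (fun _ : Fin 2 => EuclideanSpace ℝ (Fin d)) ℝ) :
    Integrable (fun h : EuclideanSpace ℝ (Fin d) => B (fun _ => h) * gk δ γ ‖h‖) ∧
    ∫ h : EuclideanSpace ℝ (Fin d), B (fun _ => h) * gk δ γ ‖h‖ =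
      ∑ i : Fin d, B ![EuclideanSpace.single i 1, EuclideanSpace.single i 1] := by
  let b : Fin d → Fin d → ℝ := fun i j => B ![EuclideanSpace.single i 1, EuclideanSpace.single j 1]
  have h1 : ∀ h : EuclideanSpace ℝ (Fin d), B (fun _ => h) * gk δ γ ‖h‖ =
      ∑ i, ∑ j, b i j * (h i * h j * gk δ γ ‖h‖) := by
    intro h
    have hs : h = ∑ i, h i • EuclideanSpace.single i (1:ℝ) := by
      ext k
      simp [Pi.single_apply]
    conv_lhs => rw [show (fun _ : Fin 2 => h) = fun _ => ∑ i, h i • EuclideanSpace.single i (1:ℝ) from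
      funext fun _ => hs]
    rw [B.map_sum]
    simp_rw [B.map_smul_univ (fun k => h _) _]
    rw [← (finTwoArrowEquiv (Fin d)).symm.sum_comp, Fintype.sum_prod_type, Finset.sum_mul]
    refine Finset.sum_congr rfl fun i _ => ?_
    rw [Finset.sum_mul]
    refine Finset.sum_congr rfl fun j _ => ?_
    have : (fun k : Fin 2 => EuclideanSpace.single ((finTwoArrowEquiv (Fin d)).symm (i, j) k) (1:ℝ))
      = ![EuclideanSpace.single i 1, EuclideanSpace.single j 1] := by
      ext k; fin_cases k <;> simp
    rw [this]
    simp [b]; ring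
  have hi : ∀ i j, Integrable
      (fun h : EuclideanSpace ℝ (Fin d) => b i j * (h i * h j * gk δ γ ‖h‖)) :=
    fun i j => (coord_int hd hγ i j).const_mul _
  simp only [h1]
  refine ⟨integrable_finsetSum _ fun i _ => integrable_finsetSum _ fun j _ => hi i j, ?_⟩
  rw [integral_finsetSum _ fun i _ => integrable_finsetSum _ fun j _ => hi i j]
  refine Finset.sum_congr rfl fun i _ => ?_
  rw [integral_finsetSum _ fun j _ => hi i j, Finset.sum_eq_single i]
  · rw [integral_const_mul, coord_one hd hγ]; simp [b]
  · intro j _ hj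
    rw [integral_const_mul, coord_ne i j hj.symm, mul_zero]
  · simp

/-- second-order consistency of the nonlocal operator with the Laplacian. -/
theorem stmt0 (d : ℕ) (hd : 1 ≤ d) (δ : ℝ) (hδ : 0 < δ) (γ : ℝ → ℝ)
    (hγ : RadialKernel d δ γ)
    (x : EuclideanSpace ℝ (Fin d)) (u : EuclideanSpace ℝ (Fin d) → ℝ)
    (hu : ContDiffOn ℝ 4 u (closedBall x δ)) (M₄ : ℝ)
    (hM₄ : ∀ y ∈ closedBall x δ, ‖iteratedFDerivWithin ℝ 4 u (closedBall x δ) y‖ ≤ M₄) :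
    IntegrableOn (fun y => (u y - u x) * γ ‖y - x‖) (ball x δ) ∧
      |2 * (∫ y in ball x δ, (u y - u x) * γ ‖y - x‖) -
          ∑ i : Fin d, iteratedFDerivWithin ℝ 2 u (closedBall x δ) x
            ![EuclideanSpace.single i 1, EuclideanSpace.single i 1]| ≤
        (d / 12) * δ ^ 2 * M₄ := by
  have hind : (ball x δ).indicator (fun y => (u y - u x) * γ ‖y - x‖) =
      fun y => (u y - u x) * gk δ γ ‖y - x‖ := by
    ext y
    by_cases hy : y ∈ ball x δ
    · rw [indicator_of_mem hy]
      rcases eq_or_ne y x with rfl | hne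
      · simp
      · rw [gk, indicator_of_mem]
        exact ⟨norm_pos_iff.2 (sub_ne_zero.2 hne), by rwa [mem_ball_iff_norm] at hy⟩
    · rw [indicator_of_notMem hy, gk, indicator_of_notMem, mul_zero]
      intro h; exact hy (by rw [mem_ball_iff_norm]; exact h.2)
  have hg0 : Integrable (fun h : EuclideanSpace ℝ (Fin d) => gk δ γ ‖h‖) := by
    simpa using gk_int hd hγ 0
  have hgi : Integrable (fun y : EuclideanSpace ℝ (Fin d) => gk δ γ ‖y - x‖) :=
    hg0.comp_sub_right x
  have hI : Integrable (fun y => (u y - u x) * gk δ γ ‖y - x‖) := by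
    have h1 : IntegrableOn (fun y => (u y - u x) * gk δ γ ‖y - x‖) (closedBall x δ) :=
      (hgi.integrableOn).continuousOn_mul (hu.continuousOn.sub continuousOn_const)
        (isCompact_closedBall x δ)
    have h2 := h1.mono_set ball_subset_closedBall
    rw [← integrable_indicator_iff measurableSet_ball] at h2
    rwa [← hind, indicator_indicator, inter_self, hind] at h2
  refine ⟨by rw [← integrable_indicator_iff measurableSet_ball, hind]; exact hI, ?_⟩
  rw [← integral_indicator measurableSet_ball, hind]
  have hP : Integrable (fun h => (u (x + h) - u x) * gk δ γ ‖h‖) := by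
    simpa using hI.comp_add_left x
  have hN : Integrable (fun h => (u (x - h) - u x) * gk δ γ ‖h‖) := by
    simpa [sub_eq_add_neg] using hP.comp_neg
  have eP : ∫ y, (u y - u x) * gk δ γ ‖y - x‖ = ∫ h, (u (x + h) - u x) * gk δ γ ‖h‖ := by
    rw [← integral_add_left_eq_self _ x]; simp
  have eN : ∫ h, (u (x + h) - u x) * gk δ γ ‖h‖ = ∫ h, (u (x - h) - u x) * gk δ γ ‖h‖ := by
    rw [← integral_neg_eq_self]; simp [sub_eq_add_neg]
  obtain ⟨bI, bE⟩ := bilin hd hγ (iteratedFDerivWithin ℝ 2 u (closedBall x δ) x)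
  rw [← bE, two_mul]
  nth_rewrite 2 [eP]
  rw [eN, eP, ← integral_add hP hN, ← integral_sub (by exact hP.add hN) bI]
  have hM : 0 ≤ M₄ := (norm_nonneg _).trans (hM₄ x (mem_closedBall_self hδ.le))
  have hUD : UniqueDiffOn ℝ (closedBall x δ) :=
    uniqueDiffOn_convex (convex_closedBall x δ) (by
      rw [interior_closedBall x hδ.ne']; exact ⟨x, mem_ball_self hδ⟩)
  have hb : Integrable (fun h : EuclideanSpace ℝ (Fin d) =>
      M₄ * δ ^ 2 / 12 * (‖h‖ ^ 2 * gk δ γ ‖h‖)) := (gk_int hd hγ 2).const_mul _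
  have key := norm_integral_le_of_norm_le hb (f := fun h => (u (x + h) - u x) * gk δ γ ‖h‖
    + (u (x - h) - u x) * gk δ γ ‖h‖
    - iteratedFDerivWithin ℝ 2 u (closedBall x δ) x (fun _ => h) * gk δ γ ‖h‖) (by
      refine Filter.Eventually.of_forall fun h => ?_
      by_cases hh : ‖h‖ ∈ Ioo 0 δ
      · have ht := taylorE (closedBall x δ) hUD u hu M₄ hM₄ x h (by
          intro t ht
          rw [mem_closedBall_iff_norm, add_sub_cancel_left, norm_smul]
          have : ‖t‖ ≤ 1 := abs_le.2 ht
          nlinarith [hh.2, norm_nonneg h])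
        have hg := gk_nonneg hγ ‖h‖
        rw [show (u (x + h) - u x) * gk δ γ ‖h‖ + (u (x - h) - u x) * gk δ γ ‖h‖
          - iteratedFDerivWithin ℝ 2 u (closedBall x δ) x (fun _ => h) * gk δ γ ‖h‖
          = (u (x + h) + u (x - h) - 2 * u x
            - iteratedFDerivWithin ℝ 2 u (closedBall x δ) x (fun _ => h)) * gk δ γ ‖h‖ by ring,
          norm_mul, Real.norm_of_nonneg hg, ← mul_assoc]
        refine mul_le_mul_of_nonneg_right (ht.trans ?_) hg
        have : ‖h‖ ^ 2 ≤ δ ^ 2 := pow_le_pow_left₀ (norm_nonneg h) hh.2.le 2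
        have h3 : M₄ * ‖h‖ ^ 2 * ‖h‖ ^ 2 ≤ M₄ * ‖h‖ ^ 2 * δ ^ 2 := by gcongr
        linarith
      · have : gk δ γ ‖h‖ = 0 := indicator_of_notMem hh _
        simp [this])
  rw [integral_const_mul, gk_mom hd hγ] at key
  refine key.trans (le_of_eq (by ring))
end
end

section
/- (Nonlocal stability bound.) Let d ≥ 1, let Ω ⊂ ℝ^d be bounded and open, let δ > 0, and let Ω_δ^c, Ω̂_δ be as defined. Let k : Ω̂_δ × Ω̂_δ → [0,∞) be measurable and satisfy: (i) k(x,y) = 0 whenever |y−x| ≥ δ; (ii) sup_{x∈Ω} ∫_{Ω̂_δ} k(x,y) dy < ∞; (iii) ∫_{Ω̂_δ} (y−x) k(x,y) dy = 0 for every x ∈ Ω; (iv) there exists η > 0 such that 2∫_{Ω̂_δ} |y−x|² k(x,y) dy ≥ η for every x ∈ Ω. Suppose x* ∈ ℝ^d and R > 0 are such that Ω̂_δ is contained in the closed ball B̄_R(x*). Then for every bounded measurable u : Ω̂_δ → ℝ, sup_{x∈Ω} |u(x)| ≤ sup_{x∈Ω_δ^c} |u(x)| + (2R²/η) · sup_{x∈Ω}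 |L_k u(x)|, where L_k u(x) = 2∫_{Ω̂_δ} (u(y) − u(x)) k(x,y) dy. -/
open MeasureTheory Metric Set

noncomputable section

/-- The part of the complement of `Ω` within distance `δ` of the boundary. -/
def omegaC {d : ℕ} (Ω : Set (EuclideanSpace ℝ (Fin d))) (δ : ℝ) :
    Set (EuclideanSpace ℝ (Fin d)) :=
  {y | y ∉ Ω ∧ infDist y (frontier Ω) < δ}

/-- `Ω̂_δ = Ω ∪ Ω_δ^c`. -/
def hatΩ {d : ℕ} (Ω : Set (EuclideanSpace ℝ (Fin d))) (δ : ℝ) :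
    Set (EuclideanSpace ℝ (Fin d)) :=
  Ω ∪ omegaC Ω δ


lemma aux_int_s3 {d : ℕ} {H : Set (EuclideanSpace ℝ (Fin d))} (hH : MeasurableSet H)
    {κ g : EuclideanSpace ℝ (Fin d) → ℝ} (hκ : IntegrableOn κ H) (hg : Measurable g)
    (M : ℝ) (hM : ∀ y ∈ H, |g y| ≤ M) : IntegrableOn (fun y => g y * κ y) H := by
  refine Integrable.bdd_mul (c := M) hκ hg.aestronglyMeasurable ?_
  filter_upwards [ae_restrict_mem hH] with y hy
  exact hM y hy

lemma aux_phi {d : ℕ} {H : Set (EuclideanSpace ℝ (Fin d))} (hH : MeasurableSet H)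
    {κ : EuclideanSpace ℝ (Fin d) → ℝ} (hκ : IntegrableOn κ H)
    (x xs : EuclideanSpace ℝ (Fin d)) (R : ℝ) (hHR : H ⊆ closedBall xs R) (hx : x ∈ H)
    (h1 : (∫ y in H, κ y • (y - x)) = 0) :
    (∫ y in H, (‖y - xs‖ ^ 2 - ‖x - xs‖ ^ 2) * κ y) = ∫ y in H, ‖y - x‖ ^ 2 * κ y := by
  have hb : ∀ y ∈ H, ‖y - x‖ ≤ 2 * R := by
    intro y hy
    have h1 := hHR hy
    have h2 := hHR hx
    rw [mem_closedBall] at h1 h2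
    rw [← dist_eq_norm]
    have := dist_triangle_right y x xs
    linarith
  have hi1 : IntegrableOn (fun y => ‖y - x‖ ^ 2 * κ y) H := by
    refine aux_int_s3 hH hκ (by fun_prop) ((2 * R) ^ 2) ?_
    intro y hy
    rw [abs_of_nonneg (by positivity)]
    exact pow_le_pow_left₀ (norm_nonneg _) (hb y hy) 2
  have hi2 : IntegrableOn (fun y => κ y • (y - x)) H := by
    refine Integrable.smul_bdd hκ (2 * R) ?_ ?_
    · exact (by fun_prop : Measurable fun y => y - x).aestronglyMeasurable
    · filter_upwards [ae_restrict_mem hH] with y hy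
      exact hb y hy
  have h2 : (∫ y in H, inner ℝ (x - xs) (κ y • (y - x))) = 0 := by
    have := integral_inner (𝕜 := ℝ) hi2 (x - xs)
    rw [this, h1, inner_zero_right]
  have hi3 : IntegrableOn (fun y => inner ℝ (x - xs) (κ y • (y - x))) H :=
    Integrable.const_inner (𝕜 := ℝ) (x - xs) hi2
  have : (fun y => (‖y - xs‖ ^ 2 - ‖x - xs‖ ^ 2) * κ y) =
      fun y => ‖y - x‖ ^ 2 * κ y + 2 * inner ℝ (x - xs) (κ y • (y - x)) := by
    funext y
    have e : y - xs = (x - xs) + (y - x) := by abel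
    rw [e, norm_add_sq_real, inner_smul_right]
    ring
  rw [this, integral_add hi1 (hi3.const_mul 2), integral_const_mul, h2]
  ring

lemma aux_one {d : ℕ} {H Ω : Set (EuclideanSpace ℝ (Fin d))} (hH : MeasurableSet H)
    (hΩH : Ω ⊆ H)
    (k : EuclideanSpace ℝ (Fin d) → EuclideanSpace ℝ (Fin d) → ℝ)
    (hk0 : ∀ x ∈ H, ∀ y ∈ H, 0 ≤ k x y)
    (hkint : ∀ x ∈ Ω, IntegrableOn (fun y => k x y) H)
    (C : ℝ) (hC : ∀ x ∈ Ω, (∫ y in H, k x y) ≤ C) (hC0 : 0 < C)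
    (hkfirst : ∀ x ∈ Ω, (∫ y in H, k x y • (y - x)) = 0)
    (η : ℝ) (hη : 0 < η)
    (hklow : ∀ x ∈ Ω, η ≤ 2 * ∫ y in H, ‖y - x‖ ^ 2 * k x y)
    (xs : EuclideanSpace ℝ (Fin d)) (R : ℝ)
    (hcont : H ⊆ closedBall xs R)
    (u : EuclideanSpace ℝ (Fin d) → ℝ) (hum : Measurable u)
    (M : ℝ) (hM : ∀ x ∈ H, |u x| ≤ M) (F G : ℝ) (hF : 0 ≤ F)
    (hLu : ∀ x ∈ Ω, -F ≤ 2 * ∫ y in H, (u y - u x) * k x y)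
    (hG : ∀ x ∈ H, x ∉ Ω → u x ≤ G) :
    ∀ x ∈ Ω, u x ≤ G + R ^ 2 / η * F := by
  intro x0 hx0
  have key : ∀ ε : ℝ, 0 < ε → u x0 ≤ G + R ^ 2 / η * (F + ε) := by
    intro ε hε
    set a : ℝ := (F + ε) / η with ha
    have ha0 : 0 ≤ a := by positivity
    have haη : a * η = F + ε := by rw [ha]; field_simp
    have hφ : ∀ y ∈ H, ‖y - xs‖ ^ 2 ≤ R ^ 2 := by
      intro y hy
      have := hcont hy
      rw [mem_closedBall, dist_eq_norm] at this
      exact pow_le_pow_left₀ (norm_nonneg _) this 2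
    set w : EuclideanSpace ℝ (Fin d) → ℝ := fun y => u y + a * ‖y - xs‖ ^ 2 with hw
    have hbdd : BddAbove (w '' H) := by
      refine ⟨M + a * R ^ 2, ?_⟩
      rintro _ ⟨y, hy, rfl⟩
      have h1 := (abs_le.1 (hM y hy)).2
      have h2 := mul_le_mul_of_nonneg_left (hφ y hy) ha0
      simp only [hw]; linarith
    set S := sSup (w '' H) with hS
    have hwS : ∀ y ∈ H, w y ≤ S := fun y hy => le_csSup hbdd ⟨y, hy, rfl⟩
    have hwΩ : ∀ x ∈ Ω, w x ≤ S - ε / (2 * C) := by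
      intro x hx
      have hi := hkint x hx
      have i1 : IntegrableOn (fun y => (u y - u x) * k x y) H := by
        refine aux_int_s3 hH hi (by fun_prop) (2 * M) ?_
        intro y hy
        have h1 := abs_le.1 (hM y hy)
        have h2 := abs_le.1 (hM x (hΩH hx))
        exact abs_le.2 ⟨by linarith [h1.1, h2.2], by linarith [h1.2, h2.1]⟩
      have i2 : IntegrableOn (fun y => (‖y - xs‖ ^ 2 - ‖x - xs‖ ^ 2) * k x y) H := by
        refine aux_int_s3 hH hi (by fun_prop) (R ^ 2) ?_
        intro y hy
        have h1 := hφ y hy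
        have h2 := hφ x (hΩH hx)
        have h3 := sq_nonneg ‖y - xs‖
        have h4 := sq_nonneg ‖x - xs‖
        exact abs_le.2 ⟨by linarith, by linarith⟩
      have e1 : (∫ y in H, (w y - w x) * k x y) =
          (∫ y in H, (u y - u x) * k x y) + a * ∫ y in H, ‖y - x‖ ^ 2 * k x y := by
        rw [← aux_phi hH hi x xs R hcont (hΩH hx) (hkfirst x hx), ← integral_const_mul,
          ← integral_add i1 (i2.const_mul a)]
        congr 1
        funext y
        simp only [hw]; ring
      have i3 : IntegrableOn (fun y => (w y - w x) * k x y) H := by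
        have := i1.add (i2.const_mul a)
        refine this.congr (Filter.Eventually.of_forall fun y => ?_)
        simp only [hw, Pi.add_apply]; ring
      have l1 : (∫ y in H, (w y - w x) * k x y) ≤ ∫ y in H, (S - w x) * k x y := by
        refine setIntegral_mono_on i3 (hi.const_mul _) hH ?_
        intro y hy
        exact mul_le_mul_of_nonneg_right (by linarith [hwS y hy]) (hk0 x (hΩH hx) y hy)
      rw [integral_const_mul] at l1
      have l2 := mul_le_mul_of_nonneg_left (hC x hx) (sub_nonneg.2 (hwS x (hΩH hx)))
      have l3 := mul_le_mul_of_nonneg_left (hklow x hx) ha0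
      have l4 := hLu x hx
      have l5 : ε ≤ (S - w x) * (2 * C) := by nlinarith
      have := (div_le_iff₀ (by positivity : 0 < 2 * C)).2 l5
      linarith
    have hSle : S ≤ G + a * R ^ 2 := by
      by_contra hcon
      push Not at hcon
      have hpos : 0 < ε / (2 * C) := by positivity
      have : S ≤ max (G + a * R ^ 2) (S - ε / (2 * C)) := by
        refine csSup_le ⟨_, x0, hΩH hx0, rfl⟩ ?_
        rintro _ ⟨y, hy, rfl⟩
        by_cases hyΩ : y ∈ Ω
        · exact le_max_of_le_right (hwΩ y hyΩ)
        · refine le_max_of_le_left ?_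
          have h2 := mul_le_mul_of_nonneg_left (hφ y hy) ha0
          have h3 := hG y hy hyΩ
          simp only [hw]; linarith
      rcases le_max_iff.1 this with h | h <;> linarith
    have h1 := hwS x0 (hΩH hx0)
    have h2 : 0 ≤ a * ‖x0 - xs‖ ^ 2 := by positivity
    have h3 : R ^ 2 / η * (F + ε) = a * R ^ 2 := by rw [ha]; ring
    simp only [hw] at h1
    linarith
  have ht : Filter.Tendsto (fun ε : ℝ => G + R ^ 2 / η * (F + ε)) (nhdsWithin 0 (Ioi 0))
      (nhds (G + R ^ 2 / η * (F + 0))) :=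
    (Continuous.tendsto (by fun_prop) 0).mono_left nhdsWithin_le_nhds
  rw [add_zero] at ht
  refine ge_of_tendsto ht ?_
  filter_upwards [self_mem_nhdsWithin] with ε hε
  exact key ε hε

/-- nonlocal stability bound. -/
theorem stmt3 (d : ℕ) (hd : 1 ≤ d) (Ω : Set (EuclideanSpace ℝ (Fin d)))
    (hΩb : Bornology.IsBounded Ω) (hΩo : IsOpen Ω) (δ : ℝ) (hδ : 0 < δ)
    (k : EuclideanSpace ℝ (Fin d) → EuclideanSpace ℝ (Fin d) → ℝ)
    (hkm : Measurable (Function.uncurry k))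
    (hk0 : ∀ x ∈ hatΩ Ω δ, ∀ y ∈ hatΩ Ω δ, 0 ≤ k x y)
    (hksupp : ∀ x ∈ hatΩ Ω δ, ∀ y ∈ hatΩ Ω δ, δ ≤ ‖y - x‖ → k x y = 0)
    (hkint : ∀ x ∈ Ω, IntegrableOn (fun y => k x y) (hatΩ Ω δ))
    (hkbd : ∃ Cb : ℝ, ∀ x ∈ Ω, (∫ y in hatΩ Ω δ, k x y) ≤ Cb)
    (hkfirst : ∀ x ∈ Ω, (∫ y in hatΩ Ω δ, k x y • (y - x)) = 0)
    (η : ℝ) (hη : 0 < η)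
    (hklow : ∀ x ∈ Ω, η ≤ 2 * ∫ y in hatΩ Ω δ, ‖y - x‖ ^ 2 * k x y)
    (xstar : EuclideanSpace ℝ (Fin d)) (R : ℝ) (hR : 0 < R)
    (hcont : hatΩ Ω δ ⊆ closedBall xstar R)
    (u : EuclideanSpace ℝ (Fin d) → ℝ) (hum : Measurable u)
    (hub : ∃ Mu : ℝ, ∀ x ∈ hatΩ Ω δ, |u x| ≤ Mu) :
    sSup ((fun x => |u x|) '' Ω) ≤
      sSup ((fun x => |u x|) '' omegaC Ω δ) +
        (2 * R ^ 2 / η) *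
          sSup ((fun x => |2 * ∫ y in hatΩ Ω δ, (u y - u x) * k x y|) '' Ω) := by
  have hH : MeasurableSet (hatΩ Ω δ) := by
    refine hΩo.measurableSet.union (hΩo.measurableSet.compl.inter ?_)
    exact measurable_infDist measurableSet_Iio
  obtain ⟨M, hM⟩ := hub
  obtain ⟨C, hC⟩ := hkbd
  have hΩH : Ω ⊆ hatΩ Ω δ := subset_union_left
  have hcH : omegaC Ω δ ⊆ hatΩ Ω δ := subset_union_right
  set G := sSup ((fun x => |u x|) '' omegaC Ω δ) with hG
  set F := sSup ((fun x => |2 * ∫ y in hatΩ Ω δ, (u y - u x) * k x y|) '' Ω) with hF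
  have hF0 : 0 ≤ F := Real.sSup_nonneg (by rintro _ ⟨x, _, rfl⟩; exact abs_nonneg _)
  have hG0 : 0 ≤ G := Real.sSup_nonneg (by rintro _ ⟨x, _, rfl⟩; exact abs_nonneg _)
  have hGu : ∀ x ∈ hatΩ Ω δ, x ∉ Ω → |u x| ≤ G := by
    intro x hx hxΩ
    refine le_csSup ⟨M, ?_⟩ ⟨x, hx.resolve_left hxΩ, rfl⟩
    rintro _ ⟨y, hy, rfl⟩
    exact hM y (hcH hy)
  have hFu : ∀ x ∈ Ω, |2 * ∫ y in hatΩ Ω δ, (u y - u x) * k x y| ≤ F := by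
    intro x hx
    refine le_csSup ⟨2 * (2 * M * C), ?_⟩ ⟨x, hx, rfl⟩
    rintro _ ⟨z, hz, rfl⟩
    have hM0 : 0 ≤ M := (abs_nonneg _).trans (hM z (hΩH hz))
    have h1 : |∫ y in hatΩ Ω δ, (u y - u z) * k z y| ≤ ∫ y in hatΩ Ω δ, 2 * M * k z y := by
      rw [← Real.norm_eq_abs]
      refine norm_integral_le_of_norm_le ((hkint z hz).const_mul _) ?_
      filter_upwards [ae_restrict_mem hH] with y hy
      rw [Real.norm_eq_abs, abs_mul, abs_of_nonneg (hk0 z (hΩH hz) y hy)]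
      refine mul_le_mul_of_nonneg_right ?_ (hk0 z (hΩH hz) y hy)
      have := abs_sub (u y) (u z)
      linarith [hM y hy, hM z (hΩH hz)]
    rw [integral_const_mul] at h1
    have h2 := mul_le_mul_of_nonneg_left (hC z hz) (by positivity : 0 ≤ 2 * M)
    simp only [abs_mul, abs_two]
    linarith
  have hC' : ∀ x ∈ Ω, (∫ y in hatΩ Ω δ, k x y) ≤ |C| + 1 := fun x hx =>
    (hC x hx).trans (by linarith [le_abs_self C])
  have hpos : 0 < |C| + 1 := by positivity
  have up := aux_one hH hΩH k hk0 hkint (|C| + 1) hC' hpos hkfirst η hη hklow xstar R hcont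
    u hum M hM F G hF0 (fun x hx => (abs_le.1 (hFu x hx)).1)
    (fun x hx hx' => (abs_le.1 (hGu x hx hx')).2)
  have dn := aux_one hH hΩH k hk0 hkint (|C| + 1) hC' hpos hkfirst η hη hklow xstar R hcont
    (fun x => - u x) hum.neg M (fun x hx => by rw [abs_neg]; exact hM x hx) F G hF0
    (fun x hx => by
      have := (abs_le.1 (hFu x hx)).2
      have e : (∫ y in hatΩ Ω δ, (- u y - - u x) * k x y) =
          - ∫ y in hatΩ Ω δ, (u y - u x) * k x y := by
        rw [← integral_neg]; congr 1; funext y; ring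
      rw [e]; linarith)
    (fun x hx hx' => by linarith [(abs_le.1 (hGu x hx hx')).1])
  have hq : 0 ≤ R ^ 2 / η * F := by positivity
  have e2 : 2 * R ^ 2 / η * F = 2 * (R ^ 2 / η * F) := by ring
  rw [e2]
  refine Real.sSup_le ?_ (by linarith)
  rintro _ ⟨x, hx, rfl⟩
  exact abs_le.2 ⟨by linarith [dn x hx], by linarith [up x hx]⟩
end
end

section
/- (Second-order convergence of nonlocal to local solutions in the uniform norm.) Let d ≥ 1, let Ω ⊂ ℝ^d be bounded and open, let δ₀ ∈ (0,1], μ ∈ {0,1}, and A, B, M > 0. Then there is a constant C > 0, depending only on d, Ω, δ₀, A, B, M, with the following property. Let δ ∈ (0,δ₀], let γ̃ satisfy the radial kernel conditions with horizon δ in dimension d and ∫_{B_δ(0)} γ̃(|z|) dz < ∞, and let Ω_δ^c, Ω̂_δ be as defined. Let u₀ : ℝ^d → ℝ be four times continuously differentiable on an open neighborhood of the closure of Ω̂_δ with ‖D^j u₀(y)‖ ≤ M for all y ∈ Ω̂_δ and j = 0,1,2,3,4, and set f₀ = −Δu₀ on Ω. Let f_δ : Ω → ℝ satisfy sup_{x∈Ω}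 |f_δ(x) − f₀(x)| ≤ A δ², let g_δ : Ω_δ^c → ℝ satisfy sup_{x∈Ω_δ^c} |g_δ(x) − u₀(x)| ≤ B δ^{2+μ}, and let u : Ω̂_δ → ℝ be bounded and measurable with −2∫_{Ω̂_δ} (u(y) − u(x)) γ̃(|y−x|) dy = f_δ(x) for every x ∈ Ω and u = g_δ on Ω_δ^c. Then sup_{x∈Ω} |u(x) − u₀(x)| ≤ C δ². -/
open MeasureTheory Metric Set

noncomputable section

/-- The Laplacian of `u : ℝ^d → ℝ`, as the trace of the second derivative. -/
def lap (d : ℕ) (u : EuclideanSpace ℝ (Fin d) → ℝ) (x : EuclideanSpace ℝ (Fin d)) : ℝ :=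
  ∑ i : Fin d, iteratedFDeriv ℝ 2 u x ![EuclideanSpace.single i 1, EuclideanSpace.single i 1]


abbrev EE (d : ℕ) := EuclideanSpace ℝ (Fin d)

def rho (d : ℕ) (δ : ℝ) (γ : ℝ → ℝ) : Measure (EE d) :=
  (volume.restrict (ball 0 δ)).withDensity (fun z => ENNReal.ofReal (γ ‖z‖))

theorem EE_nontrivial {d : ℕ} (hd : 1 ≤ d) : Nontrivial (EE d) := by
  have : Nonempty (Fin d) := ⟨⟨0, hd⟩⟩
  infer_instance

theorem rho_int {d : ℕ} (hd : 1 ≤ d) {δ : ℝ} {γ : ℝ → ℝ} (hγ : RadialKernel d δ γ)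
    (g : EE d → ℝ) : ∫ z, g z ∂(rho d δ γ) = ∫ z in ball 0 δ, g z * γ ‖z‖ := by
  have := EE_nontrivial hd
  unfold rho
  rw [integral_withDensity_eq_integral_toReal_smul]
  · apply integral_congr_ae
    have h1 : ∀ᵐ z : EE d ∂(volume.restrict (ball 0 δ)), z ≠ 0 :=
      ae_restrict_of_ae (by simp [ae_iff])
    filter_upwards [h1, ae_restrict_mem measurableSet_ball] with z hz hb
    have : 0 < γ ‖z‖ := hγ.2.1 _ (norm_pos_iff.2 hz) (by simpa using hb)
    simp only [smul_eq_mul]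
    rw [ENNReal.toReal_ofReal this.le, mul_comm]
  · exact (hγ.1.comp measurable_norm).ennreal_ofReal
  · simp

theorem rho_fin {d : ℕ} {δ : ℝ} {γ : ℝ → ℝ}
    (hi : IntegrableOn (fun z : EE d => γ ‖z‖) (ball 0 δ)) : IsFiniteMeasure (rho d δ γ) :=
  isFiniteMeasure_withDensity_ofReal hi.2

theorem rho_ac {d : ℕ} {δ : ℝ} {γ : ℝ → ℝ} : rho d δ γ ≪ volume.restrict (ball 0 δ) :=
  withDensity_absolutelyContinuous _ _

theorem rho_ae {d : ℕ} {δ : ℝ} {γ : ℝ → ℝ} : ∀ᵐ z ∂(rho d δ γ), z ∈ ball (0 : EE d) δ :=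
  rho_ac.ae_le (ae_restrict_mem measurableSet_ball)

theorem rho_iso {d : ℕ} (hd : 1 ≤ d) {δ : ℝ} {γ : ℝ → ℝ} (hγ : RadialKernel d δ γ)
    (L : EE d ≃ₗᵢ[ℝ] EE d) (g : EE d → ℝ) :
    ∫ z, g (L z) ∂(rho d δ γ) = ∫ z, g z ∂(rho d δ γ) := by
  rw [rho_int hd hγ, rho_int hd hγ]
  have h := L.measurePreserving.setIntegral_preimage_emb
    L.toHomeomorph.measurableEmbedding (fun z => g z * γ ‖z‖) (ball 0 δ)
  rw [← h]
  have : (L : EE d → EE d) ⁻¹' ball 0 δ = ball 0 δ := by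
    ext z; simp
  rw [this]
  simp

theorem rho_odd {d : ℕ} (hd : 1 ≤ d) {δ : ℝ} {γ : ℝ → ℝ} (hγ : RadialKernel d δ γ)
    (L : EE d ≃ₗᵢ[ℝ] EE d) (g : EE d → ℝ) (hg : ∀ z, g (L z) = - g z) :
    ∫ z, g z ∂(rho d δ γ) = 0 := by
  have h := rho_iso hd hγ L g
  simp_rw [hg] at h
  rw [integral_neg] at h
  linarith

theorem rho_sq {d : ℕ} (hd : 1 ≤ d) {δ : ℝ} {γ : ℝ → ℝ} (hγ : RadialKernel d δ γ) :
    ∫ z, ‖z‖ ^ 2 ∂(rho d δ γ) = d := by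
  have := EE_nontrivial hd
  rw [rho_int hd hγ, ← integral_indicator measurableSet_ball]
  have h := integral_fun_norm_addHaar (volume : Measure (EE d))
    ((Iio δ).indicator (fun s => s ^ 2 * γ s))
  have e : ∀ z : EE d, (ball (0 : EE d) δ).indicator (fun z => ‖z‖ ^ 2 * γ ‖z‖) z =
      (Iio δ).indicator (fun s => s ^ 2 * γ s) ‖z‖ := by
    intro z
    by_cases hz : ‖z‖ < δ
    · rw [indicator_of_mem (by simpa using hz), indicator_of_mem (by simpa using hz)]
    · rw [indicator_of_notMem (by simpa using hz), indicator_of_notMem (by simpa using hz)]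
  simp_rw [e]
  rw [h]
  have h5 := hγ.2.2.2.2
  have e2 : ∫ y in Ioi (0 : ℝ), y ^ (d - 1) • (Iio δ).indicator (fun s => s ^ 2 * γ s) y =
      ∫ s in Ioo 0 δ, s ^ (d + 1) * γ s := by
    have : ∀ y : ℝ, y ^ (d - 1) • (Iio δ).indicator (fun s => s ^ 2 * γ s) y =
        (Iio δ).indicator (fun s => s ^ (d + 1) * γ s) y := by
      intro y
      by_cases hy : y ∈ Iio δ
      · rw [indicator_of_mem hy, indicator_of_mem hy, smul_eq_mul, ← mul_assoc, ← pow_add]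
        congr 2; omega
      · rw [indicator_of_notMem hy, indicator_of_notMem hy, smul_zero]
    simp_rw [this]
    rw [setIntegral_indicator measurableSet_Iio, Ioi_inter_Iio]
  rw [finrank_euclideanSpace_fin, e2]
  conv_rhs => rw [← h5]
  simp [unitSphereArea, measureReal_def, mul_assoc]

theorem rho_integrable {d : ℕ} {δ : ℝ} {γ : ℝ → ℝ}
    (hi : IntegrableOn (fun z : EE d => γ ‖z‖) (ball 0 δ)) {g : EE d → ℝ} {K : ℝ}
    (hg : AEStronglyMeasurable g (volume.restrict (ball 0 δ)))
    (hK : ∀ z ∈ ball (0 : EE d) δ, |g z| ≤ K) : Integrable g (rho d δ γ) := by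
  have := rho_fin hi
  refine Integrable.of_bound (hg.mono_ac rho_ac) K ?_
  filter_upwards [rho_ae] with z hz using hK z hz

theorem rho_cont {d : ℕ} {δ : ℝ} {γ : ℝ → ℝ}
    (hi : IntegrableOn (fun z : EE d => γ ‖z‖) (ball 0 δ)) {g : EE d → ℝ}
    (hg : Continuous g) : Integrable g (rho d δ γ) := by
  obtain ⟨K, hK⟩ := (isCompact_closedBall (0 : EE d) δ).exists_bound_of_continuousOn hg.continuousOn
  exact rho_integrable hi hg.aestronglyMeasurable (fun z hz => hK z (ball_subset_closedBall hz))

theorem rho_off {d : ℕ} (hd : 1 ≤ d) {δ : ℝ} {γ : ℝ → ℝ} (hγ : RadialKernel d δ γ)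
    {i j : Fin d} (hij : i ≠ j) : ∫ z, z i * z j ∂(rho d δ γ) = 0 := by
  refine rho_odd hd hγ (LinearIsometryEquiv.piLpCongrRight 2
    (fun k => if k = i then LinearIsometryEquiv.neg ℝ else LinearIsometryEquiv.refl ℝ ℝ)) _ ?_
  intro z
  simp [hij.symm]

theorem rho_diag {d : ℕ} (hd : 1 ≤ d) {δ : ℝ} {γ : ℝ → ℝ} (hγ : RadialKernel d δ γ)
    (hi : IntegrableOn (fun z : EE d => γ ‖z‖) (ball 0 δ))
    (i : Fin d) : ∫ z, z i * z i ∂(rho d δ γ) = 1 := by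
  have hs : ∀ j : Fin d, ∫ z, z j * z j ∂(rho d δ γ) = ∫ z, z i * z i ∂(rho d δ γ) := by
    intro j
    have h := rho_iso hd hγ (LinearIsometryEquiv.piLpCongrLeft 2 ℝ ℝ (Equiv.swap i j))
      (fun z => z i * z i)
    rw [← h]
    simp [LinearIsometryEquiv.piLpCongrLeft_apply, Equiv.piCongrLeft']
  have h2 := rho_sq hd hγ
  simp_rw [EuclideanSpace.real_norm_sq_eq] at h2
  rw [integral_finsetSum _ (fun j _ => rho_cont hi (by fun_prop))] at h2
  simp_rw [pow_two, hs] at h2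
  simp at h2
  have hd0 : (d : ℝ) ≠ 0 := by positivity
  exact mul_left_cancel₀ hd0 (by linarith)

theorem frontier_near {d : ℕ} {Ω : Set (EE d)} {x y : EE d} (hx : x ∈ Ω) (hy : y ∉ Ω) :
    ∃ p ∈ frontier Ω, dist y p ≤ dist y x := by
  obtain ⟨p, hp, h⟩ := exists_mem_frontier_infDist_compl_eq_dist (x := y) (s := Ωᶜ) hy
    (fun h => by have : x ∈ Ωᶜ := h ▸ mem_univ x
                 exact this hx)
  rw [frontier_compl] at hp
  rw [compl_compl] at h
  exact ⟨p, hp, h ▸ infDist_le_dist_of_mem hx⟩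

theorem ball_sub_hat {d : ℕ} {Ω : Set (EE d)} {δ : ℝ} {x : EE d} (hx : x ∈ Ω) :
    ball x δ ⊆ hatΩ Ω δ := by
  intro y hy
  by_cases h : y ∈ Ω
  · exact Or.inl h
  · obtain ⟨p, hp, hd⟩ := frontier_near hx h
    exact Or.inr ⟨h, (infDist_le_dist_of_mem hp).trans_lt (hd.trans_lt hy)⟩

theorem hat_norm {d : ℕ} {Ω : Set (EE d)} {δ R : ℝ} (hδ : δ ≤ 1) (hR : Ω ⊆ closedBall 0 R)
    (hne : Ω.Nonempty) {y : EE d} (hy : y ∈ hatΩ Ω δ) : ‖y‖ ≤ R + 1 := by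
  obtain ⟨x, hx⟩ := hne
  rcases hy with hy | ⟨hy, hd⟩
  · have := hR hy
    simp at this
    linarith
  · obtain ⟨p, hp, -⟩ := frontier_near hx hy
    rw [infDist_lt_iff ⟨p, hp⟩] at hd
    obtain ⟨q, hq, hd⟩ := hd
    have hq' : q ∈ closedBall (0 : EE d) R :=
      closure_minimal hR isClosed_closedBall (frontier_subset_closure hq)
    simp at hq'
    rw [dist_eq_norm] at hd
    have : ‖y‖ ≤ ‖y - q‖ + ‖q‖ := by simpa using norm_add_le (y - q) q
    linarith

theorem hat_meas {d : ℕ} {Ω : Set (EE d)} {δ : ℝ} (hΩ : IsOpen Ω) :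
    MeasurableSet (hatΩ Ω δ) := by
  refine hΩ.measurableSet.union (hΩ.measurableSet.compl.inter ?_)
  exact measurableSet_lt (continuous_infDist_pt _).measurable measurable_const

theorem rho_shift {d : ℕ} (hd : 1 ≤ d) {δ : ℝ} {γ : ℝ → ℝ} (hγ : RadialKernel d δ γ)
    {Ω : Set (EE d)} (hΩ : IsOpen Ω) {x : EE d} (hx : x ∈ Ω) (F : EE d → ℝ) :
    ∫ y in hatΩ Ω δ, F y * γ ‖y - x‖ = ∫ z, F (x + z) ∂(rho d δ γ) := by
  rw [rho_int hd hγ]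
  rw [setIntegral_eq_of_subset_of_forall_sdiff_eq_zero (hat_meas hΩ) (ball_sub_hat hx)]
  · have h := (measurePreserving_add_left (volume : Measure (EE d)) x).setIntegral_preimage_emb
      (measurableEmbedding_addLeft x) (fun y => F y * γ ‖y - x‖) (ball x δ)
    rw [← h]
    have : (fun z => x + z) ⁻¹' ball x δ = ball 0 δ := by
      ext z; simp
    rw [this]
    simp
  · intro y hy
    have : δ ≤ ‖y - x‖ := by
      have := hy.2
      rw [mem_ball, dist_eq_norm, not_lt] at this
      exact this
    rw [hγ.2.2.1 _ this, mul_zero]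

theorem rho_quad {d : ℕ} (hd : 1 ≤ d) {δ : ℝ} {γ : ℝ → ℝ} (hγ : RadialKernel d δ γ)
    (hi : IntegrableOn (fun z : EE d => γ ‖z‖) (ball 0 δ))
    (T : ContinuousMultilinearMap ℝ (fun _ : Fin 2 => EE d) ℝ) :
    ∫ z, T (fun _ => z) ∂(rho d δ γ) =
      ∑ i : Fin d, T ![EuclideanSpace.single i 1, EuclideanSpace.single i 1] := by
  have key : ∀ z : EE d, T (fun _ => z) = ∑ i : Fin d, ∑ j : Fin d,
      (z i * z j) * T ![EuclideanSpace.single i 1, EuclideanSpace.single j 1] := by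
    intro z
    have hz : z = ∑ i : Fin d, z i • EuclideanSpace.single i (1 : ℝ) := by
      simpa using ((EuclideanSpace.basisFun (Fin d) ℝ).sum_repr z).symm
    have e1 : (fun _ : Fin 2 => z) = ![z, z] := by ext i; fin_cases i <;> rfl
    have e2 : ∀ v : EE d, T ![z, v] = ∑ i : Fin d, z i * T ![EuclideanSpace.single i 1, v] := by
      intro v
      have hu : ∀ w : EE d, Function.update ![z, v] 0 w = ![w, v] := by
        intro w; ext i; fin_cases i <;> rfl
      let l : EE d →ₗ[ℝ] ℝ :=
        { toFun := fun w => T ![w, v]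
          map_add' := fun a b => by
            have := T.map_update_add ![z, v] 0 a b
            rw [hu, hu, hu] at this
            exact this
          map_smul' := fun a b => by
            have := T.map_update_smul ![z, v] 0 a b
            rw [hu, hu] at this
            exact this }
      have := congrArg l hz
      rw [map_sum] at this
      simp only [map_smul] at this
      exact this
    have e3 : ∀ v : EE d, T ![v, z] = ∑ i : Fin d, z i * T ![v, EuclideanSpace.single i 1] := by
      intro v
      have hu : ∀ w : EE d, Function.update ![v, z] 1 w = ![v, w] := by
        intro w; ext i; fin_cases i <;> rfl
      let l : EE d →ₗ[ℝ] ℝ :=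
        { toFun := fun w => T ![v, w]
          map_add' := fun a b => by
            have := T.map_update_add ![v, z] 1 a b
            rw [hu, hu, hu] at this
            exact this
          map_smul' := fun a b => by
            have := T.map_update_smul ![v, z] 1 a b
            rw [hu, hu] at this
            exact this }
      have := congrArg l hz
      rw [map_sum] at this
      simp only [map_smul] at this
      exact this
    rw [e1, e2]
    simp_rw [e3, Finset.mul_sum, mul_assoc]
  simp_rw [key]
  rw [integral_finsetSum _ (fun j _ => rho_cont hi (by fun_prop))]
  refine Finset.sum_congr rfl (fun i _ => ?_)
  rw [integral_finsetSum _ (fun j _ => rho_cont hi (by fun_prop))]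
  rw [Finset.sum_eq_single i]
  · rw [integral_mul_const, rho_diag hd hγ hi, one_mul]
  · intro j _ hj
    rw [integral_mul_const, rho_off hd hγ hj.symm, zero_mul]
  · simp

/-- Taylor expansion bound. -/
theorem taylor_bd {d : ℕ} {u : EE d → ℝ} {x z : EE d} {M : ℝ}
    (hc : ∀ t ∈ Icc (0 : ℝ) 1, ContDiffAt ℝ 4 u (x + t • z))
    (hM : ∀ t ∈ Icc (0 : ℝ) 1, ‖iteratedFDeriv ℝ 4 u (x + t • z)‖ ≤ M) :
    |u (x + z) - u x - iteratedFDeriv ℝ 1 u x (fun _ => z)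
      - iteratedFDeriv ℝ 2 u x (fun _ => z) / 2
      - iteratedFDeriv ℝ 3 u x (fun _ => z) / 6| ≤ M * ‖z‖ ^ 4 := by
  have h := map_add_eq_sum_add_integral_iteratedFDeriv (f := u) (x := x) (y := z) (n := 3)
    (by norm_num; intro t h0 h1; exact hc t ⟨h0, h1⟩)
  have hb : ‖∫ t in (0 : ℝ)..1, (1 - t) ^ 3 • iteratedFDeriv ℝ (3 + 1) u (x + t • z)
      (fun _ ↦ z)‖ ≤ (M * ‖z‖ ^ 4) * |1 - 0| := by
    apply intervalIntegral.norm_integral_le_of_norm_le_const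
    intro t ht
    rw [uIoc_of_le zero_le_one] at ht
    have h1 := (iteratedFDeriv ℝ (3 + 1) u (x + t • z)).le_opNorm (fun _ => z)
    have h2 := hM t ⟨ht.1.le, ht.2⟩
    simp only [Finset.prod_const, Finset.card_univ, Fintype.card_fin] at h1
    rw [norm_smul]
    have h3 : ‖(1 - t) ^ 3‖ ≤ 1 := by
      rw [norm_pow]
      apply pow_le_one₀ (norm_nonneg _)
      rw [Real.norm_eq_abs, abs_le]; constructor <;> linarith [ht.1, ht.2]
    calc _ ≤ 1 * (M * ‖z‖ ^ 4) := by
            refine mul_le_mul h3 (h1.trans ?_) (norm_nonneg _) zero_le_one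
            exact mul_le_mul_of_nonneg_right h2 (by positivity)
      _ = _ := one_mul _
  set I := ∫ t in (0 : ℝ)..1, (1 - t) ^ 3 • iteratedFDeriv ℝ (3 + 1) u (x + t • z) (fun _ ↦ z)
  rw [h]
  simp only [Finset.sum_range_succ, Finset.sum_range_zero, Nat.factorial]
  simp only [iteratedFDeriv_zero_apply, smul_eq_mul]
  norm_num
  rw [Real.norm_eq_abs] at hb
  simp only [sub_zero, abs_one, mul_one] at hb
  ring_nf
  ring_nf at hb
  rw [abs_mul]
  norm_num
  have := abs_nonneg I
  linarith

theorem consistency {d : ℕ} (hd : 1 ≤ d) {δ : ℝ} {γ : ℝ → ℝ} (hγ : RadialKernel d δ γ)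
    (hi : IntegrableOn (fun z : EE d => γ ‖z‖) (ball 0 δ)) {u : EE d → ℝ} {x : EE d} {M : ℝ}
    (hM0 : 0 ≤ M)
    (hu : Integrable (fun z => u (x + z)) (rho d δ γ))
    (hc : ∀ y ∈ ball x δ, ContDiffAt ℝ 4 u y)
    (hM : ∀ y ∈ ball x δ, ‖iteratedFDeriv ℝ 4 u y‖ ≤ M) :
    |2 * ∫ z, (u (x + z) - u x) ∂(rho d δ γ) - lap d u x| ≤ 2 * M * d * δ ^ 2 := by
  have := rho_fin hi
  have c1 : Continuous (fun z : EE d => iteratedFDeriv ℝ 1 u x (fun _ => z)) := by fun_prop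
  have c2 : Continuous (fun z : EE d => iteratedFDeriv ℝ 2 u x (fun _ => z)) := by fun_prop
  have c3 : Continuous (fun z : EE d => iteratedFDeriv ℝ 3 u x (fun _ => z)) := by fun_prop
  have o1 : ∫ z, iteratedFDeriv ℝ 1 u x (fun _ => z) ∂(rho d δ γ) = 0 := by
    refine rho_odd hd hγ (LinearIsometryEquiv.neg ℝ) _ (fun z => ?_)
    have := (iteratedFDeriv ℝ 1 u x).map_smul_univ (fun _ => (-1 : ℝ)) (fun _ => z)
    simpa using this
  have o3 : ∫ z, iteratedFDeriv ℝ 3 u x (fun _ => z) ∂(rho d δ γ) = 0 := by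
    refine rho_odd hd hγ (LinearIsometryEquiv.neg ℝ) _ (fun z => ?_)
    have := (iteratedFDeriv ℝ 3 u x).map_smul_univ (fun _ => (-1 : ℝ)) (fun _ => z)
    simpa [Odd.neg_one_pow (by decide : Odd 3)] using this
  have o2 : ∫ z, iteratedFDeriv ℝ 2 u x (fun _ => z) ∂(rho d δ γ) = lap d u x :=
    rho_quad hd hγ hi _
  have i1 := rho_cont hi c1
  have i2 := rho_cont hi c2
  have i3 := rho_cont hi c3
  have i0 : Integrable (fun z => u (x + z) - u x) (rho d δ γ) := hu.sub (integrable_const _)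
  have i01 := i0.sub i1
  have i012 := i01.sub (i2.div_const 2)
  have hr : ∫ z, (u (x + z) - u x - iteratedFDeriv ℝ 1 u x (fun _ => z)
      - iteratedFDeriv ℝ 2 u x (fun _ => z) / 2
      - iteratedFDeriv ℝ 3 u x (fun _ => z) / 6) ∂(rho d δ γ) =
      ∫ z, (u (x + z) - u x) ∂(rho d δ γ) - lap d u x / 2 := by
    have a1 := integral_sub i012 (i3.div_const 6)
    have a2 := integral_sub i01 (i2.div_const 2)
    have a3 := integral_sub i0 i1
    simp only [Pi.sub_apply] at a1 a2 a3
    rw [a1, a2, a3, integral_div, integral_div, o1, o2, o3]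
    ring
  have hb : |∫ z, (u (x + z) - u x - iteratedFDeriv ℝ 1 u x (fun _ => z)
      - iteratedFDeriv ℝ 2 u x (fun _ => z) / 2
      - iteratedFDeriv ℝ 3 u x (fun _ => z) / 6) ∂(rho d δ γ)| ≤ M * δ ^ 2 * d := by
    have : ∫ z, M * δ ^ 2 * ‖z‖ ^ 2 ∂(rho d δ γ) = M * δ ^ 2 * d := by
      rw [integral_const_mul, rho_sq hd hγ]
    rw [← this, ← Real.norm_eq_abs]
    apply norm_integral_le_of_norm_le (rho_cont hi (by fun_prop))
    filter_upwards [rho_ae] with z hz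
    have hz' : ‖z‖ < δ := by simpa using hz
    have hin : ∀ t ∈ Icc (0 : ℝ) 1, x + t • z ∈ ball x δ := by
      intro t ht
      simp only [mem_ball, dist_self_add_left, norm_smul, Real.norm_eq_abs, abs_of_nonneg ht.1]
      nlinarith [norm_nonneg z, ht.2]
    have := taylor_bd (fun t ht => hc _ (hin t ht)) (fun t ht => hM _ (hin t ht))
    refine this.trans ?_
    have : ‖z‖ ^ 2 ≤ δ ^ 2 := pow_le_pow_left₀ (norm_nonneg _) hz'.le 2
    have : ‖z‖ ^ 2 * ‖z‖ ^ 2 ≤ δ ^ 2 * ‖z‖ ^ 2 := mul_le_mul_of_nonneg_right this (by positivity)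
    have := mul_le_mul_of_nonneg_left this hM0
    nlinarith
  rw [hr] at hb
  rw [abs_le] at hb ⊢
  constructor <;> nlinarith [hb.1, hb.2]

theorem maxp {d : ℕ} {δ : ℝ} {γ : ℝ → ℝ}
    (hi : IntegrableOn (fun z : EE d => γ ‖z‖) (ball 0 δ)) {Ω : Set (EE d)} {w : EE d → ℝ}
    {b Mw η : ℝ} (hη : 0 < η)
    (hw : ∀ x ∈ Ω, Integrable (fun z => w (x + z)) (rho d δ γ))
    (hb : ∀ y ∈ omegaC Ω δ, w y ≤ b) (hMw : ∀ y ∈ hatΩ Ω δ, w y ≤ Mw)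
    (hL : ∀ x ∈ Ω, η ≤ ∫ z, (w (x + z) - w x) ∂(rho d δ γ)) :
    ∀ x ∈ Ω, w x ≤ b := by
  have := rho_fin hi
  intro x₀ hx₀
  by_contra hcon
  push Not at hcon
  have hbdd : BddAbove (w '' Ω) := by
    refine ⟨Mw, ?_⟩
    rintro _ ⟨y, hy, rfl⟩
    exact hMw y (Or.inl hy)
  set S := sSup (w '' Ω) with hS
  have hle : ∀ y ∈ Ω, w y ≤ S := fun y hy => le_csSup hbdd ⟨y, hy, rfl⟩
  have hle' : ∀ y ∈ hatΩ Ω δ, w y ≤ S := by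
    rintro y (hy | hy)
    · exact hle y hy
    · exact (hb y hy).trans (hcon.le.trans (hle x₀ hx₀))
  set m := (rho d δ γ).real univ with hm
  have hm0 : 0 ≤ m := measureReal_nonneg
  have hε : 0 < η / (m + 1) := by positivity
  obtain ⟨_, ⟨x, hx, rfl⟩, hlt⟩ := exists_lt_of_lt_csSup (s := w '' Ω) ⟨_, x₀, hx₀, rfl⟩
    (show S - η / (m + 1) < sSup (w '' Ω) by rw [← hS]; linarith)
  have h1 := hL x hx
  have h2 : ∫ z, (w (x + z) - w x) ∂(rho d δ γ) ≤ ∫ z, η / (m + 1) ∂(rho d δ γ) := by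
    apply integral_mono_ae ((hw x hx).sub (integrable_const _)) (integrable_const _)
    filter_upwards [rho_ae] with z hz
    have := hle' (x + z) (ball_sub_hat hx (by simpa using hz))
    simp only [Pi.sub_apply]
    linarith
  rw [integral_const, smul_eq_mul, ← hm] at h2
  have : m * (η / (m + 1)) < η := by
    rw [mul_div_assoc', div_lt_iff₀ (by positivity)]
    nlinarith
  linarith

theorem rho_barrier {d : ℕ} (hd : 1 ≤ d) {δ : ℝ} {γ : ℝ → ℝ} (hγ : RadialKernel d δ γ)
    (hi : IntegrableOn (fun z : EE d => γ ‖z‖) (ball 0 δ)) (x : EE d) :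
    ∫ z, (‖x + z‖ ^ 2 - ‖x‖ ^ 2) ∂(rho d δ γ) = d := by
  have : ∀ z : EE d, ‖x + z‖ ^ 2 - ‖x‖ ^ 2 = 2 * inner ℝ x z + ‖z‖ ^ 2 := by
    intro z; rw [norm_add_sq_real]; ring
  simp_rw [this]
  rw [integral_add (rho_cont hi (by fun_prop)) (rho_cont hi (by fun_prop)), rho_sq hd hγ,
    rho_odd hd hγ (LinearIsometryEquiv.neg ℝ) _ (fun z => by simp), zero_add]

/-- second-order convergence of nonlocal to local solutions in the
uniform norm. -/
theorem stmt4 (d : ℕ) (hd : 1 ≤ d) (Ω : Set (EuclideanSpace ℝ (Fin d)))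
    (hΩb : Bornology.IsBounded Ω) (hΩo : IsOpen Ω)
    (δ₀ : ℝ) (hδ₀ : δ₀ ∈ Ioc (0 : ℝ) 1) (μ : ℕ) (hμ : μ = 0 ∨ μ = 1)
    (A B M : ℝ) (hA : 0 < A) (hB : 0 < B) (hM : 0 < M) :
    ∃ C > 0, ∀ δ ∈ Ioc (0 : ℝ) δ₀, ∀ γ : ℝ → ℝ, RadialKernel d δ γ →
      IntegrableOn (fun z : EuclideanSpace ℝ (Fin d) => γ ‖z‖) (ball 0 δ) →
      ∀ u₀ : EuclideanSpace ℝ (Fin d) → ℝ,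
        (∃ V, IsOpen V ∧ closure (hatΩ Ω δ) ⊆ V ∧ ContDiffOn ℝ 4 u₀ V) →
        (∀ y ∈ hatΩ Ω δ, ∀ j ≤ 4, ‖iteratedFDeriv ℝ j u₀ y‖ ≤ M) →
      ∀ f : EuclideanSpace ℝ (Fin d) → ℝ,
        (∀ x ∈ Ω, |f x - (-(lap d u₀ x))| ≤ A * δ ^ 2) →
      ∀ g : EuclideanSpace ℝ (Fin d) → ℝ,
        (∀ x ∈ omegaC Ω δ, |g x - u₀ x| ≤ B * δ ^ (2 + μ)) →
      ∀ u : EuclideanSpace ℝ (Fin d) → ℝ, Measurable u →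
        (∃ Mu : ℝ, ∀ x ∈ hatΩ Ω δ, |u x| ≤ Mu) →
        (∀ x ∈ Ω, -(2 * ∫ y in hatΩ Ω δ, (u y - u x) * γ ‖y - x‖) = f x) →
        (∀ x ∈ omegaC Ω δ, u x = g x) →
      ∀ x ∈ Ω, |u x - u₀ x| ≤ C * δ ^ 2 := by
  obtain ⟨R, hR⟩ := hΩb.subset_closedBall 0
  set t₀ : ℝ := A + 2 * M * d + 1 with ht₀
  have ht₀pos : 0 < t₀ := by positivity
  refine ⟨B + t₀ * (R + 1) ^ 2, by positivity, ?_⟩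
  rintro δ ⟨hδ, hδle⟩ γ hγ hi u₀ ⟨V, hVo, hVs, hVc⟩ hM' f hf g hg u hum ⟨Mu, hMu⟩ heq hug
  have hfin := rho_fin hi
  have hδ1 : δ ≤ 1 := hδle.trans hδ₀.2
  have hCD : ∀ y ∈ hatΩ Ω δ, ContDiffAt ℝ 4 u₀ y := fun y hy =>
    hVc.contDiffAt (hVo.mem_nhds (hVs (subset_closure hy)))
  have hu0b : ∀ y ∈ hatΩ Ω δ, |u₀ y| ≤ M := by
    intro y hy
    have := hM' y hy 0 (by norm_num)
    rwa [norm_iteratedFDeriv_zero] at this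
  have hmem : ∀ x ∈ Ω, ∀ z ∈ ball (0 : EE d) δ, x + z ∈ hatΩ Ω δ := fun x hx z hz =>
    ball_sub_hat hx (by simpa using hz)
  have hIu : ∀ x ∈ Ω, Integrable (fun z => u (x + z)) (rho d δ γ) := fun x hx =>
    rho_integrable hi (hum.comp (measurable_const_add x)).aestronglyMeasurable
      (fun z hz => hMu _ (hmem x hx z hz))
  have hIu0 : ∀ x ∈ Ω, Integrable (fun z => u₀ (x + z)) (rho d δ γ) := by
    intro x hx
    refine rho_integrable hi (ContinuousOn.aestronglyMeasurable ?_ measurableSet_ball)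
      (fun z hz => hu0b _ (hmem x hx z hz))
    intro z hz
    exact ((hCD _ (hmem x hx z hz)).continuousAt.comp (f := fun z => x + z)
      (by fun_prop)).continuousWithinAt
  have hE : ∀ x ∈ Ω, |∫ z, ((u (x + z) - u₀ (x + z)) - (u x - u₀ x)) ∂(rho d δ γ)| ≤
      (A + 2 * M * d) * δ ^ 2 / 2 := by
    intro x hx
    have h1 := consistency hd hγ hi hM.le (hIu0 x hx)
      (fun y hy => hCD y (ball_sub_hat hx hy))
      (fun y hy => hM' y (ball_sub_hat hx hy) 4 le_rfl)
    have h2 := heq x hx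
    rw [rho_shift hd hγ hΩo hx (fun y => u y - u x)] at h2
    have h3 := hf x hx
    have h4 := integral_sub ((hIu x hx).sub (integrable_const (u x)))
      ((hIu0 x hx).sub (integrable_const (u₀ x)))
    simp only [Pi.sub_apply] at h4
    have h5 : ∫ z, ((u (x + z) - u₀ (x + z)) - (u x - u₀ x)) ∂(rho d δ γ) =
        ∫ z, ((u (x + z) - u x) - (u₀ (x + z) - u₀ x)) ∂(rho d δ γ) := by
      congr 1; ext z; ring
    rw [h5, h4]
    rw [abs_le] at h1 h3 ⊢
    constructor <;> linarith [h1.1, h1.2, h3.1, h3.2]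
  have main : ∀ σ : ℝ, |σ| = 1 → ∀ x ∈ Ω,
      σ * (u x - u₀ x) ≤ (B + t₀ * (R + 1) ^ 2) * δ ^ 2 := by
    intro σ hσ x hx
    have hsq : ∀ y ∈ hatΩ Ω δ, t₀ * δ ^ 2 * ‖y‖ ^ 2 ≤ t₀ * δ ^ 2 * (R + 1) ^ 2 := by
      intro y hy
      have := pow_le_pow_left₀ (norm_nonneg _) (hat_norm hδ1 hR ⟨x, hx⟩ hy) 2
      gcongr
    have hσe : ∀ a : ℝ, σ * a ≤ |a| := by
      intro a
      have := le_abs_self (σ * a)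
      rwa [abs_mul, hσ, one_mul] at this
    have hw := maxp hi (Ω := Ω) (w := fun y => σ * (u y - u₀ y) + t₀ * δ ^ 2 * ‖y‖ ^ 2)
      (b := (B + t₀ * (R + 1) ^ 2) * δ ^ 2) (Mw := (Mu + M) + t₀ * δ ^ 2 * (R + 1) ^ 2)
      (η := δ ^ 2 / 2) (by positivity) ?_ ?_ ?_ ?_ x hx
    · have : 0 ≤ t₀ * δ ^ 2 * ‖x‖ ^ 2 := by positivity
      linarith
    · intro y hy
      exact (((hIu y hy).sub (hIu0 y hy)).const_mul σ).add (rho_cont hi (by fun_prop))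
    · intro y hy
      have h1 := hg y hy
      rw [← hug y hy] at h1
      have h2 := hσe (u y - u₀ y)
      have h3 := hsq y (Or.inr hy)
      have h4 : δ ^ (2 + μ) ≤ δ ^ 2 := pow_le_pow_of_le_one hδ.le hδ1 (by omega)
      have h5 := mul_le_mul_of_nonneg_left h4 hB.le
      linarith
    · intro y hy
      have h2 := hσe (u y - u₀ y)
      have h3 := hsq y hy
      have h4 := abs_sub (u y) (u₀ y)
      have h5 := hMu y hy
      have h6 := hu0b y hy
      linarith
    · intro y hy
      have e1 : ∀ z : EE d, (σ * (u (y + z) - u₀ (y + z)) + t₀ * δ ^ 2 * ‖y + z‖ ^ 2) -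
          (σ * (u y - u₀ y) + t₀ * δ ^ 2 * ‖y‖ ^ 2) =
          σ * ((u (y + z) - u₀ (y + z)) - (u y - u₀ y)) +
            t₀ * δ ^ 2 * (‖y + z‖ ^ 2 - ‖y‖ ^ 2) := by intro z; ring
      simp_rw [e1]
      have e2 := integral_add
        ((((hIu y hy).sub (hIu0 y hy)).sub (integrable_const (u y - u₀ y))).const_mul σ)
        (rho_cont hi (g := fun z => t₀ * δ ^ 2 * (‖y + z‖ ^ 2 - ‖y‖ ^ 2)) (by fun_prop))
      simp only [Pi.sub_apply] at e2
      rw [e2, integral_const_mul, integral_const_mul, rho_barrier hd hγ hi]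
      set I := ∫ z, ((u (y + z) - u₀ (y + z)) - (u y - u₀ y)) ∂(rho d δ γ)
      have h1 := hE y hy
      have h2 : -|I| ≤ σ * I := by
        have := neg_abs_le (σ * I)
        rwa [abs_mul, hσ, one_mul] at this
      have hd1 : (1 : ℝ) ≤ d := by exact_mod_cast hd
      have h3 : t₀ * δ ^ 2 * 1 ≤ t₀ * δ ^ 2 * d :=
        mul_le_mul_of_nonneg_left hd1 (by positivity)
      have h4 : 0 ≤ (A + 2 * M * d) * δ ^ 2 := by positivity
      have h5 : t₀ * δ ^ 2 = (A + 2 * M * d) * δ ^ 2 + δ ^ 2 := by rw [ht₀]; ring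
      nlinarith [sq_nonneg δ]
  intro x hx
  have h1 := main 1 (by simp) x hx
  have h2 := main (-1) (by simp) x hx
  rw [abs_le]
  constructor <;> linarith
end
end

section
/- (Convergence of nonlocal to local solutions in the nonlocal energy norm.) Let d ≥ 1, let Ω ⊂ ℝ^d be bounded and open, let δ₀ ∈ (0,1], μ ∈ {0,1}, and A, B, M, K, K' > 0. Then there is a constant C > 0, depending only on d, Ω, δ₀, A, B, M, K, K', with the following property. Let δ ∈ (0,δ₀], let γ̃ satisfy the radial kernel conditions with horizon δ in dimension d with ∫_{B_δ(0)} γ̃(|z|) dz ≤ K δ^{-2}, and suppose the Lebesgue measure of Ω_δ^c satisfies |Ω_δ^c| ≤ K' δ. Let u₀ : ℝ^d → ℝ be four times continuously differentiable on an open neighborhood of the closure of Ω̂_δ with ‖D^j u₀(y)‖ ≤ M for all y ∈ Ω̂_δ and j = 0,1,2,3,4, and set f₀ = −Δu₀ on Ω. Let f_δ : Ω → ℝ satisfy sup_{x∈Ω} |f_δ(x) − f₀(x)| ≤ A δ², let g_δ : Ω_δ^c → ℝ satisfy sup_{x∈Ω_δ^c} |g_δ(x) − u₀(x)| ≤ B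 δ^{2+μ}, and let u : Ω̂_δ → ℝ be bounded and measurable with −2∫_{Ω̂_δ} (u(y) − u(x)) γ̃(|y−x|) dy = f_δ(x) for every x ∈ Ω and u = g_δ on Ω_δ^c. Then ‖u − u₀‖_δ ≤ C δ^{(3+μ)/2}, where ‖w‖_δ = (∫_{Ω̂_δ}∫_{Ω̂_δ} (w(y) − w(x))² γ̃(|y−x|) dy dx)^{1/2}. -/
open MeasureTheory Metric Set

noncomputable section

namespace NL
open Filter Topology

lemma taylor_one {E : Type*} [NormedAddCommGroup E] [NormedSpace ℝ E] (u : E → ℝ) (x z : E) (M : ℝ)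
    (hc : ∀ t ∈ Icc (0:ℝ) 1, ContDiffAt ℝ 4 u (x + t • z))
    (hM : ∀ t ∈ Icc (0:ℝ) 1, ‖iteratedFDeriv ℝ 4 u (x + t • z)‖ ≤ M) :
    |u (x + z) - (u x + iteratedFDeriv ℝ 1 u x (fun _ => z)
      + (1/2) * iteratedFDeriv ℝ 2 u x (fun _ => z)
      + (1/6) * iteratedFDeriv ℝ 3 u x (fun _ => z))| ≤ M * ‖z‖ ^ 4 / 6 := by
  have h := map_add_eq_sum_add_integral_iteratedFDeriv (n := 3) (f := u) (x := x) (y := z)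
    (fun t ht => by simpa using (by norm_num; exact hc t ht))
  rw [h]
  simp only [Finset.sum_range_succ, Finset.sum_range_zero, smul_eq_mul]
  have hb : ‖∫ t in (0:ℝ)..1, (1 - t)^3 * iteratedFDeriv ℝ (3 + 1) u (x + t • z) (fun _ ↦ z)‖
      ≤ M * ‖z‖ ^ 4 * |(1:ℝ) - 0| := by
    apply intervalIntegral.norm_integral_le_of_norm_le_const
    intro t ht
    rw [uIoc_of_le zero_le_one] at ht
    have h1 : ‖iteratedFDeriv ℝ 4 u (x + t • z) (fun _ ↦ z)‖ ≤ M * ‖z‖ ^ 4 := by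
      refine (ContinuousMultilinearMap.le_opNorm _ _).trans ?_
      simp only [Finset.prod_const, Finset.card_univ, Fintype.card_fin]
      gcongr
      exact hM t ⟨ht.1.le, ht.2⟩
    have h2 : |(1 - t)^3| ≤ 1 := by
      rw [abs_of_nonneg (by have := ht.2; apply pow_nonneg; linarith)]
      exact pow_le_one₀ (by linarith [ht.2]) (by linarith [ht.1])
    rw [norm_mul]
    calc _ ≤ 1 * (M * ‖z‖^4) := mul_le_mul h2 h1 (norm_nonneg _) zero_le_one
      _ = _ := one_mul _
  norm_num [Nat.factorial] at hb ⊢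
  linarith

lemma taylor_two {E : Type*} [NormedAddCommGroup E] [NormedSpace ℝ E] (u : E → ℝ) (x z : E)
    (M δ : ℝ) (hz : ‖z‖ < δ)
    (hc : ∀ y ∈ ball x δ, ContDiffAt ℝ 4 u y)
    (hM : ∀ y ∈ ball x δ, ‖iteratedFDeriv ℝ 4 u y‖ ≤ M) :
    |u (x + z) + u (x - z) - 2 * u x - fderiv ℝ (fderiv ℝ u) x z z| ≤ M * ‖z‖ ^ 4 / 3 := by
  have key : ∀ w : E, ‖w‖ < δ → ∀ t ∈ Icc (0:ℝ) 1, x + t • w ∈ ball x δ := by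
    intro w hw t ht
    simp only [mem_ball, dist_self_add_left, norm_smul, Real.norm_eq_abs, abs_of_nonneg ht.1]
    nlinarith [ht.1, ht.2, norm_nonneg w]
  have h1 := taylor_one u x z M (fun t ht => hc _ (key z hz t ht)) (fun t ht => hM _ (key z hz t ht))
  have hz' : ‖-z‖ < δ := by rwa [norm_neg]
  have h2 := taylor_one u x (-z) M (fun t ht => hc _ (key _ hz' t ht))
    (fun t ht => hM _ (key _ hz' t ht))
  have e3 : iteratedFDeriv ℝ 3 u x (fun _ => -z) = - iteratedFDeriv ℝ 3 u x (fun _ => z) := by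
    have := (iteratedFDeriv ℝ 3 u x).map_smul_univ (fun _ => (-1:ℝ)) (fun _ => z)
    simp at this
    convert this using 1; norm_num
  have e1 : iteratedFDeriv ℝ 1 u x (fun _ => -z) = - iteratedFDeriv ℝ 1 u x (fun _ => z) := by
    simp
  rw [e1, e3, norm_neg, iteratedFDeriv_two_apply, ← sub_eq_add_neg] at h2
  rw [iteratedFDeriv_two_apply] at h1
  simp only [map_neg, neg_apply, neg_neg] at h2
  rw [abs_le] at *
  constructor <;> linarith [h1.1, h1.2, h2.1, h2.2]

lemma maxP {E : Type*} [NormedAddCommGroup E] [NormedSpace ℝ E] [FiniteDimensional ℝ E]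
    [MeasurableSpace E] [BorelSpace E] (ν : Measure E) [ν.IsAddHaarMeasure]
    (H Ω : Set E) (G w : E → ℝ) (hG : Integrable G ν) (hG0 : ∀ z, 0 ≤ G z)
    (hH : MeasurableSet H) (hw : Measurable w) (B : ℝ) (hB : ∀ x, |w x| ≤ B) (η m : ℝ) (hη : 0 < η)
    (h1 : ∀ x ∈ Ω, η ≤ ∫ y in H, (w y - w x) * G (y - x) ∂ν)
    (h2 : ∀ x ∈ H, x ∉ Ω → w x ≤ m) : ∀ x ∈ H, w x ≤ m := by
  intro x0 hx0
  by_contra! hlt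
  set S := sSup (w '' H)
  have hbdd : BddAbove (w '' H) := ⟨B, by rintro _ ⟨y, _, rfl⟩; exact (abs_le.1 (hB y)).2⟩
  have hS : w x0 ≤ S := le_csSup hbdd ⟨x0, hx0, rfl⟩
  set I := ∫ z, G z ∂ν
  have hI : 0 ≤ I := integral_nonneg hG0
  set ε := min (S - m) (η / (I + 1))
  have hε : 0 < ε := lt_min (by linarith) (by positivity)
  obtain ⟨_, ⟨x, hx, rfl⟩, hxS⟩ := exists_lt_of_lt_csSup (⟨_, x0, hx0, rfl⟩ : (w '' H).Nonempty)
    (show S - ε < S by linarith)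
  have hxΩ : x ∈ Ω := by
    by_contra hn
    have := h2 x hx hn
    have := min_le_left (S - m) (η / (I + 1))
    linarith
  have hGx : Integrable (fun y => G (y - x)) ν := hG.comp_sub_right x
  have hwx : w x ≤ S := le_csSup hbdd ⟨x, hx, rfl⟩
  have : ∫ y in H, (w y - w x) * G (y - x) ∂ν ≤ ∫ y in H, (S - w x) * G (y - x) ∂ν := by
    apply setIntegral_mono_on _ _ hH
    · intro y hy
      have : w y ≤ S := le_csSup hbdd ⟨y, hy, rfl⟩
      exact mul_le_mul_of_nonneg_right (by linarith) (hG0 _)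
    · apply Integrable.integrableOn
      apply hGx.bdd_mul (c := B + B) (by fun_prop)
      exact Eventually.of_forall fun y => (abs_sub _ _).trans (add_le_add (hB _) (hB _))
    · exact (hGx.const_mul _).integrableOn
  rw [integral_const_mul] at this
  have h3 : ∫ y in H, G (y - x) ∂ν ≤ I := by
    refine (setIntegral_le_integral hGx (Eventually.of_forall fun y => hG0 _)).trans ?_
    rw [integral_sub_right_eq_self G x]
  have h4 := h1 x hxΩ
  have h5 : (S - w x) * ∫ y in H, G (y - x) ∂ν ≤ ε * I :=
    mul_le_mul (by linarith) h3 (integral_nonneg fun y => hG0 _) hε.le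
  have h6 : ε * I ≤ η / (I + 1) * I := mul_le_mul_of_nonneg_right (min_le_right _ _) hI
  have h7 : η / (I + 1) * I < η := by
    rw [div_mul_eq_mul_div, div_lt_iff₀ (by linarith)]; nlinarith
  linarith

lemma energy {E : Type*} [NormedAddCommGroup E] [NormedSpace ℝ E] [FiniteDimensional ℝ E]
    [MeasurableSpace E] [BorelSpace E] (ν : Measure E) [ν.IsAddHaarMeasure]
    (H : Set E) (G e : E → ℝ) (hGm : Measurable G) (hG : Integrable G ν)
    (hGe : ∀ z, G (-z) = G z) (hHf : ν H < ⊤)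
    (he : Measurable e) (B : ℝ) (hB : ∀ x, |e x| ≤ B) :
    ∫ x in H, ∫ y in H, (e y - e x) ^ 2 * G (y - x) ∂ν ∂ν =
      - (2 * ∫ x in H, e x * ∫ y in H, (e y - e x) * G (y - x) ∂ν ∂ν) := by
  have : IsFiniteMeasure (ν.restrict H) := ⟨by simpa using hHf⟩
  set ρ := ν.restrict H
  have hB0 : 0 ≤ B := (abs_nonneg _).trans (hB 0)
  have hGi : Integrable (fun p : E × E => G (p.2 - p.1)) (ρ.prod ρ) := by
    have hm : Measurable (fun p : E × E => G (p.2 - p.1)) := by fun_prop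
    rw [integrable_prod_iff hm.aestronglyMeasurable]
    have hx : ∀ x, Integrable (fun y => G (y - x)) ν := fun x => hG.comp_sub_right x
    refine ⟨Eventually.of_forall fun x => (hx x).integrableOn, ?_⟩
    apply Integrable.of_bound (C := ∫ z, ‖G z‖ ∂ν)
    · have : Measurable (fun p : E × E => ‖G (p.2 - p.1)‖) := by fun_prop
      exact this.stronglyMeasurable.integral_prod_right.aestronglyMeasurable
    · refine Eventually.of_forall fun x => ?_
      rw [Real.norm_of_nonneg (integral_nonneg fun y => norm_nonneg _)]
      refine (setIntegral_le_integral (hx x).norm (Eventually.of_forall fun y => norm_nonneg _)).trans ?_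
      rw [integral_sub_right_eq_self (fun z => ‖G z‖) x]
  have hF : ∀ x y, |e y - e x| ≤ B + B := fun x y => (abs_sub _ _).trans (add_le_add (hB _) (hB _))
  have i1 : Integrable (fun p : E × E => (e p.1 * (e p.2 - e p.1)) * G (p.2 - p.1)) (ρ.prod ρ) := by
    apply hGi.bdd_mul (c := B * (B + B)) (by fun_prop)
    refine Eventually.of_forall fun p => ?_
    rw [norm_mul]
    exact mul_le_mul (hB _) (hF _ _) (norm_nonneg _) hB0
  have i2 : Integrable (fun p : E × E => (e p.2 * (e p.2 - e p.1)) * G (p.2 - p.1)) (ρ.prod ρ) := by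
    apply hGi.bdd_mul (c := B * (B + B)) (by fun_prop)
    refine Eventually.of_forall fun p => ?_
    rw [norm_mul]
    exact mul_le_mul (hB _) (hF _ _) (norm_nonneg _) hB0
  have i3 : Integrable (fun p : E × E => (e p.2 - e p.1) ^ 2 * G (p.2 - p.1)) (ρ.prod ρ) := by
    convert i2.sub i1 using 2
    simp only [Pi.sub_apply]; ring
  have s1 : ∫ x, ∫ y, (e y - e x) ^ 2 * G (y - x) ∂ρ ∂ρ =
      ∫ p, (e p.2 - e p.1) ^ 2 * G (p.2 - p.1) ∂(ρ.prod ρ) :=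
    (integral_prod (fun p : E × E => (e p.2 - e p.1) ^ 2 * G (p.2 - p.1)) i3).symm
  have s2 : ∫ x, e x * ∫ y, (e y - e x) * G (y - x) ∂ρ ∂ρ =
      ∫ p, (e p.1 * (e p.2 - e p.1)) * G (p.2 - p.1) ∂(ρ.prod ρ) := by
    rw [integral_prod _ i1]
    refine integral_congr_ae (Eventually.of_forall fun x => ?_)
    simp only
    rw [← integral_const_mul]
    simp only [mul_assoc]
  have s3 : ∫ p, (e p.2 * (e p.2 - e p.1)) * G (p.2 - p.1) ∂(ρ.prod ρ) =
      - ∫ p, (e p.1 * (e p.2 - e p.1)) * G (p.2 - p.1) ∂(ρ.prod ρ) := by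
    rw [← integral_prod_swap, ← integral_neg]
    refine integral_congr_ae (Eventually.of_forall fun p => ?_)
    simp only [Prod.swap]
    rw [← hGe (p.1 - p.2), neg_sub]; ring
  rw [s1, s2]
  have : ∫ p, (e p.2 - e p.1) ^ 2 * G (p.2 - p.1) ∂(ρ.prod ρ) =
      ∫ p, (e p.2 * (e p.2 - e p.1)) * G (p.2 - p.1) ∂(ρ.prod ρ) -
      ∫ p, (e p.1 * (e p.2 - e p.1)) * G (p.2 - p.1) ∂(ρ.prod ρ) := by
    rw [← integral_sub i2 i1]
    refine integral_congr_ae (Eventually.of_forall fun p => ?_)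
    simp only; ring
  rw [this, s3]; ring

lemma int_of_bdd {E : Type*} [NormedAddCommGroup E] [MeasurableSpace E] (ν : Measure E)
    (g : ℝ → ℝ) (δ c : ℝ) (F : E → ℝ) (hg0 : ∀ s, 0 ≤ g s) (hgδ : ∀ s, δ ≤ s → g s = 0)
    (hgi : Integrable (fun z : E => g ‖z‖) ν) (hF : AEStronglyMeasurable F ν)
    (hFb : ∀ z, ‖z‖ < δ → |F z| ≤ c) : Integrable (fun z => F z * g ‖z‖) ν := by
  refine (hgi.const_mul c).mono' (hF.mul hgi.1) (Eventually.of_forall fun z => ?_)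
  rw [norm_mul, Real.norm_of_nonneg (hg0 _)]
  by_cases hz : ‖z‖ < δ
  · exact mul_le_mul_of_nonneg_right (hFb z hz) (hg0 _)
  · simp [hgδ _ (not_lt.1 hz)]

lemma moment_off {d : ℕ} (g : ℝ → ℝ) (i j : Fin d) (hij : i ≠ j) :
    ∫ z : EuclideanSpace ℝ (Fin d), (z i * z j) * g ‖z‖ = 0 := by
  let R : EuclideanSpace ℝ (Fin d) ≃ₗᵢ[ℝ] EuclideanSpace ℝ (Fin d) :=
    LinearIsometryEquiv.piLpCongrRight 2
      (fun k => if k = i then LinearIsometryEquiv.neg ℝ else LinearIsometryEquiv.refl ℝ ℝ)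
  have h := R.measurePreserving.integral_comp R.toHomeomorph.measurableEmbedding
    (fun z : EuclideanSpace ℝ (Fin d) => (z i * z j) * g ‖z‖)
  have h2 : ∀ z, (R z) i = - z i := by intro z; simp [R]
  have h3 : ∀ z, (R z) j = z j := by intro z; simp [R, hij.symm]
  simp only [h2, h3, LinearIsometryEquiv.norm_map] at h
  simp only [neg_mul, integral_neg] at h
  linarith

lemma moment_swap {d : ℕ} (g : ℝ → ℝ) (i j : Fin d) :
    ∫ z : EuclideanSpace ℝ (Fin d), (z i * z i) * g ‖z‖ =
    ∫ z : EuclideanSpace ℝ (Fin d), (z j * z j) * g ‖z‖ := by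
  let R : EuclideanSpace ℝ (Fin d) ≃ₗᵢ[ℝ] EuclideanSpace ℝ (Fin d) :=
    LinearIsometryEquiv.piLpCongrLeft 2 ℝ ℝ (Equiv.swap i j)
  have h := R.measurePreserving.integral_comp R.toHomeomorph.measurableEmbedding
    (fun z : EuclideanSpace ℝ (Fin d) => (z i * z i) * g ‖z‖)
  have h2 : ∀ z, (R z) i = z j := by
    intro z; simp [R, LinearIsometryEquiv.piLpCongrLeft_apply]
  simp only [h2, LinearIsometryEquiv.norm_map] at h
  exact h.symm

lemma coord_le {d : ℕ} (z : EuclideanSpace ℝ (Fin d)) (i : Fin d) : |z i| ≤ ‖z‖ := by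
  simpa using PiLp.norm_apply_le z i

lemma moment_diag {d : ℕ} (hd : 1 ≤ d) (g : ℝ → ℝ) (δ : ℝ) (hg0 : ∀ s, 0 ≤ g s)
    (hgδ : ∀ s, δ ≤ s → g s = 0)
    (hgi : Integrable (fun z : EuclideanSpace ℝ (Fin d) => g ‖z‖))
    (hm : ∫ z : EuclideanSpace ℝ (Fin d), ‖z‖ ^ 2 * g ‖z‖ = d) (i : Fin d) :
    ∫ z : EuclideanSpace ℝ (Fin d), (z i * z i) * g ‖z‖ = 1 := by
  have hint : ∀ j : Fin d, Integrable (fun z : EuclideanSpace ℝ (Fin d) => (z j * z j) * g ‖z‖) := by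
    intro j
    apply int_of_bdd volume g δ (δ * δ) _ hg0 hgδ hgi
    · exact Continuous.aestronglyMeasurable (by fun_prop)
    · intro z hz
      rw [abs_mul]
      have := (coord_le z j).trans hz.le
      exact mul_le_mul this this (abs_nonneg _) ((abs_nonneg _).trans this)
  have h : ∫ z : EuclideanSpace ℝ (Fin d), ‖z‖ ^ 2 * g ‖z‖ =
      ∑ j : Fin d, ∫ z : EuclideanSpace ℝ (Fin d), (z j * z j) * g ‖z‖ := by
    rw [← integral_finsetSum _ (fun j _ => hint j)]
    refine integral_congr_ae (Eventually.of_forall fun z => ?_)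
    simp only
    rw [← Finset.sum_mul, EuclideanSpace.norm_sq_eq]
    congr 1
    refine Finset.sum_congr rfl fun j _ => ?_
    rw [Real.norm_eq_abs, sq_abs, sq]
  rw [hm, Finset.sum_congr rfl (fun j _ => moment_swap g j i)] at h
  simp only [Finset.sum_const, Finset.card_univ, Fintype.card_fin, nsmul_eq_mul] at h
  have : (d : ℝ) ≠ 0 := by positivity
  exact mul_left_cancel₀ this (by rw [mul_one]; exact h.symm)

lemma moment_bilin {d : ℕ} (hd : 1 ≤ d) (g : ℝ → ℝ) (δ : ℝ) (hg0 : ∀ s, 0 ≤ g s)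
    (hgδ : ∀ s, δ ≤ s → g s = 0)
    (hgi : Integrable (fun z : EuclideanSpace ℝ (Fin d) => g ‖z‖))
    (hm : ∫ z : EuclideanSpace ℝ (Fin d), ‖z‖ ^ 2 * g ‖z‖ = d)
    (L : EuclideanSpace ℝ (Fin d) →L[ℝ] EuclideanSpace ℝ (Fin d) →L[ℝ] ℝ) :
    ∫ z : EuclideanSpace ℝ (Fin d), L z z * g ‖z‖ =
      ∑ i : Fin d, L (EuclideanSpace.single i 1) (EuclideanSpace.single i 1) := by
  have hint : ∀ i j : Fin d, Integrable (fun z : EuclideanSpace ℝ (Fin d) => (z i * z j) * g ‖z‖) := by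
    intro i j
    apply int_of_bdd volume g δ (δ * δ) _ hg0 hgδ hgi
    · exact Continuous.aestronglyMeasurable (by fun_prop)
    · intro z hz
      rw [abs_mul]
      have h1 := (coord_le z i).trans hz.le
      have h2 := (coord_le z j).trans hz.le
      exact mul_le_mul h1 h2 (abs_nonneg _) ((abs_nonneg _).trans h1)
  have hz : ∀ z : EuclideanSpace ℝ (Fin d), z = ∑ i, z i • EuclideanSpace.single i (1:ℝ) := by
    intro z
    ext k
    simp [Finset.sum_apply, Pi.single_apply]
  have hL : ∀ z : EuclideanSpace ℝ (Fin d), L z z * g ‖z‖ =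
      ∑ i, ∑ j, L (EuclideanSpace.single i 1) (EuclideanSpace.single j 1) *
        ((z i * z j) * g ‖z‖) := by
    intro z
    conv_lhs => rw [show L z z = L (∑ i, z i • EuclideanSpace.single i (1:ℝ))
      (∑ i, z i • EuclideanSpace.single i (1:ℝ)) by rw [← hz]]
    simp only [map_sum, map_smul, FunLike.coe_sum, Finset.sum_apply, FunLike.coe_smul, Pi.smul_apply, smul_eq_mul, Finset.sum_mul, Finset.mul_sum]
    rw [Finset.sum_comm]
    refine Finset.sum_congr rfl fun i _ => Finset.sum_congr rfl fun j _ => ?_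
    ring
  simp only [hL]
  rw [integral_finsetSum _ (fun i _ => integrable_finsetSum _ fun j _ => (hint i j).const_mul _)]
  refine Finset.sum_congr rfl fun i _ => ?_
  rw [integral_finsetSum _ (fun j _ => (hint i j).const_mul _)]
  rw [Finset.sum_eq_single i]
  · rw [integral_const_mul, moment_diag hd g δ hg0 hgδ hgi hm, mul_one]
  · intro j _ hj
    rw [integral_const_mul, moment_off g i j hj.symm, mul_zero]
  · simp

lemma moment_polar {d : ℕ} (hd : 1 ≤ d) (g : ℝ → ℝ) (δ : ℝ) (hgδ : ∀ s, δ ≤ s → g s = 0)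
    (h : unitSphereArea d * (∫ s in Ioo 0 δ, s ^ (d + 1) * g s) = d) :
    ∫ z : EuclideanSpace ℝ (Fin d), ‖z‖ ^ 2 * g ‖z‖ = d := by
  have : Nontrivial (EuclideanSpace ℝ (Fin d)) := by
    have : Nonempty (Fin d) := ⟨⟨0, hd⟩⟩
    infer_instance
  rw [integral_fun_norm_addHaar volume (fun s => s ^ 2 * g s)]
  simp only [finrank_euclideanSpace, Fintype.card_fin, nsmul_eq_mul, smul_eq_mul]
  rw [← mul_assoc]
  have e : ∫ y in Ioi (0:ℝ), y ^ (d - 1) * (y ^ 2 * g y) = ∫ s in Ioo 0 δ, s ^ (d + 1) * g s := by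
    rw [setIntegral_eq_of_subset_of_forall_sdiff_eq_zero measurableSet_Ioi
      (Ioo_subset_Ioi_self : Ioo 0 δ ⊆ Ioi 0)]
    · refine setIntegral_congr_fun measurableSet_Ioo fun s _ => ?_
      rw [← mul_assoc, ← pow_add]
      congr 2; omega
    · intro s hs
      have : δ ≤ s := by
        by_contra! hh
        exact hs.2 ⟨hs.1, hh⟩
      simp [hgδ s this]
  rw [e]
  exact h

lemma Lsym {d : ℕ} (g : ℝ → ℝ) (δ : ℝ) (hg0 : ∀ s, 0 ≤ g s)
    (hgδ : ∀ s, δ ≤ s → g s = 0)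
    (hgi : Integrable (fun z : EuclideanSpace ℝ (Fin d) => g ‖z‖))
    (H : Set (EuclideanSpace ℝ (Fin d))) (x : EuclideanSpace ℝ (Fin d)) (hx : ball x δ ⊆ H)
    (v : EuclideanSpace ℝ (Fin d) → ℝ) (hv : Measurable v) (c : ℝ) (hc : ∀ y, |v y| ≤ c) :
    2 * ∫ y in H, (v y - v x) * g ‖y - x‖ =
      ∫ z, (v (x + z) + v (x - z) - 2 * v x) * g ‖z‖ := by
  have e1 : ∫ y in H, (v y - v x) * g ‖y - x‖ = ∫ y, (v y - v x) * g ‖y - x‖ := by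
    apply setIntegral_eq_integral_of_forall_compl_eq_zero
    intro y hy
    have : δ ≤ ‖y - x‖ := by
      by_contra! h
      exact hy (hx (by rwa [mem_ball, dist_eq_norm]))
    rw [hgδ _ this, mul_zero]
  have e2 : ∫ y, (v y - v x) * g ‖y - x‖ = ∫ z, (v (x + z) - v x) * g ‖z‖ := by
    rw [← integral_add_left_eq_self (fun y => (v y - v x) * g ‖y - x‖) x]
    simp
  have e3 : ∫ z, (v (x + z) - v x) * g ‖z‖ = ∫ z, (v (x - z) - v x) * g ‖z‖ := by
    rw [← integral_neg_eq_self (fun z => (v (x + z) - v x) * g ‖z‖)]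
    simp [sub_eq_add_neg]
  have i1 : Integrable (fun z => (v (x + z) - v x) * g ‖z‖) := by
    apply int_of_bdd volume g δ (c + c) _ hg0 hgδ hgi
    · exact Measurable.aestronglyMeasurable (by fun_prop)
    · exact fun z _ => (abs_sub _ _).trans (add_le_add (hc _) (hc _))
  have i2 : Integrable (fun z => (v (x - z) - v x) * g ‖z‖) := by
    apply int_of_bdd volume g δ (c + c) _ hg0 hgδ hgi
    · exact Measurable.aestronglyMeasurable (by fun_prop)
    · exact fun z _ => (abs_sub _ _).trans (add_le_add (hc _) (hc _))
  rw [e1, e2, two_mul]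
  nth_rewrite 2 [e3]
  rw [← integral_add i1 i2]
  refine integral_congr_ae (Eventually.of_forall fun z => ?_)
  simp only; ring

lemma Lquad {d : ℕ} (g : ℝ → ℝ) (δ : ℝ) (hg0 : ∀ s, 0 ≤ g s)
    (hgδ : ∀ s, δ ≤ s → g s = 0)
    (hgi : Integrable (fun z : EuclideanSpace ℝ (Fin d) => g ‖z‖))
    (hm : ∫ z : EuclideanSpace ℝ (Fin d), ‖z‖ ^ 2 * g ‖z‖ = d)
    (H : Set (EuclideanSpace ℝ (Fin d))) (x : EuclideanSpace ℝ (Fin d)) (hx : ball x δ ⊆ H)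
    (hδ : 0 < δ)
    (v : EuclideanSpace ℝ (Fin d) → ℝ) (hv : Measurable v) (c : ℝ) (hc : ∀ y, |v y| ≤ c)
    (hvH : ∀ y ∈ H, v y = ‖y‖ ^ 2) :
    ∫ y in H, (v y - v x) * g ‖y - x‖ = d := by
  have h := Lsym g δ hg0 hgδ hgi H x hx v hv c hc
  have : ∫ z, (v (x + z) + v (x - z) - 2 * v x) * g ‖z‖ =
      ∫ z : EuclideanSpace ℝ (Fin d), 2 * (‖z‖ ^ 2 * g ‖z‖) := by
    refine integral_congr_ae (Eventually.of_forall fun z => ?_)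
    simp only
    by_cases hz : ‖z‖ < δ
    · rw [hvH _ (hx (by simpa using hz)), hvH _ (hx (by simpa [mem_ball, dist_eq_norm] using hz)),
        hvH _ (hx (mem_ball_self hδ))]
      have := parallelogram_law_with_norm ℝ x z
      rw [show ‖x + z‖ ^ 2 + ‖x - z‖ ^ 2 - 2 * ‖x‖ ^ 2 = 2 * ‖z‖ ^ 2 by nlinarith]
      ring
    · simp [hgδ _ (not_lt.1 hz)]
  rw [this, integral_const_mul, hm] at h
  linarith

lemma Lu0 {d : ℕ} (hd : 1 ≤ d) (g : ℝ → ℝ) (δ : ℝ) (hg0 : ∀ s, 0 ≤ g s)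
    (hgδ : ∀ s, δ ≤ s → g s = 0)
    (hgi : Integrable (fun z : EuclideanSpace ℝ (Fin d) => g ‖z‖))
    (hm : ∫ z : EuclideanSpace ℝ (Fin d), ‖z‖ ^ 2 * g ‖z‖ = d)
    (H : Set (EuclideanSpace ℝ (Fin d))) (x : EuclideanSpace ℝ (Fin d)) (hx : ball x δ ⊆ H)
    (hδ : 0 < δ) (M : ℝ) (hM : 0 < M)
    (u v : EuclideanSpace ℝ (Fin d) → ℝ) (hv : Measurable v) (c : ℝ) (hc : ∀ y, |v y| ≤ c)
    (hvH : ∀ y ∈ H, v y = u y)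
    (hu : ∀ y ∈ H, ContDiffAt ℝ 4 u y) (huM : ∀ y ∈ H, ‖iteratedFDeriv ℝ 4 u y‖ ≤ M) :
    |2 * (∫ y in H, (v y - v x) * g ‖y - x‖) - lap d u x| ≤ M * d * δ ^ 2 := by
  rw [Lsym g δ hg0 hgδ hgi H x hx v hv c hc]
  have hl : lap d u x = ∫ z : EuclideanSpace ℝ (Fin d), fderiv ℝ (fderiv ℝ u) x z z * g ‖z‖ := by
    rw [moment_bilin hd g δ hg0 hgδ hgi hm]
    simp [lap, iteratedFDeriv_two_apply]
  rw [hl, ← integral_sub]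
  · have hi : Integrable (fun z : EuclideanSpace ℝ (Fin d) => ‖z‖ ^ 2 * g ‖z‖) := by
      apply int_of_bdd volume g δ (δ ^ 2) _ hg0 hgδ hgi
      · exact Continuous.aestronglyMeasurable (by fun_prop)
      · intro z hz
        rw [abs_of_nonneg (by positivity)]
        gcongr
    have : M * d * δ ^ 2 = ∫ z : EuclideanSpace ℝ (Fin d), (M * δ ^ 2) * (‖z‖ ^ 2 * g ‖z‖) := by
      rw [integral_const_mul, hm]; ring
    rw [this, ← Real.norm_eq_abs]
    refine norm_integral_le_of_norm_le (hi.const_mul _) (Eventually.of_forall fun z => ?_)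
    by_cases hz : ‖z‖ < δ
    · have hv1 := hvH _ (hx (show x + z ∈ ball x δ by simpa using hz))
      have hv2 := hvH _ (hx (show x - z ∈ ball x δ by simpa [mem_ball, dist_eq_norm] using hz))
      have hv3 := hvH _ (hx (mem_ball_self hδ))
      rw [hv1, hv2, hv3, ← sub_mul, norm_mul, Real.norm_of_nonneg (hg0 _), ← mul_assoc]
      apply mul_le_mul_of_nonneg_right _ (hg0 _)
      refine (taylor_two u x z M δ hz (fun y hy => hu y (hx hy)) (fun y hy => huM y (hx hy))).trans ?_
      have h1 : ‖z‖ ^ 2 ≤ δ ^ 2 := by gcongr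
      have h2 : M * ‖z‖ ^ 2 * ‖z‖ ^ 2 ≤ M * δ ^ 2 * ‖z‖ ^ 2 := by gcongr
      have h3 : 0 ≤ M * ‖z‖ ^ 4 := by positivity
      nlinarith
    · simp [hgδ _ (not_lt.1 hz)]
  · apply int_of_bdd volume g δ (c + c + 2 * c) _ hg0 hgδ hgi
    · exact Measurable.aestronglyMeasurable (by fun_prop)
    · intro z _
      have a1 := abs_le.1 (hc (x + z))
      have a2 := abs_le.1 (hc (x - z))
      have a3 := abs_le.1 (hc x)
      rw [abs_le]
      constructor <;> linarith
  · apply int_of_bdd volume g δ (‖fderiv ℝ (fderiv ℝ u) x‖ * δ * δ) _ hg0 hgδ hgi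
    · exact Continuous.aestronglyMeasurable (by fun_prop)
    · intro z hz
      refine ((fderiv ℝ (fderiv ℝ u) x).le_opNorm₂ z z).trans ?_
      gcongr

lemma ball_sub_hat {d : ℕ} (Ω : Set (EuclideanSpace ℝ (Fin d))) (δ : ℝ) (ho : IsOpen Ω)
    (x : EuclideanSpace ℝ (Fin d)) (hx : x ∈ Ω) : ball x δ ⊆ hatΩ Ω δ := by
  intro y hy
  by_cases hyΩ : y ∈ Ω
  · exact Or.inl hyΩ
  · refine Or.inr ⟨hyΩ, ?_⟩
    have hs : IsPreconnected (segment ℝ x y) := (convex_segment x y).isPreconnected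
    obtain ⟨w, hw1, hw2⟩ : ∃ w ∈ segment ℝ x y, w ∈ frontier Ω := by
      by_contra! hcon
      have hcl : ∀ w ∈ segment ℝ x y, w ∈ Ω ∨ w ∉ closure Ω := by
        intro w hw
        by_contra! hh
        exact hcon w hw (by rw [ho.frontier_eq]; exact ⟨hh.2, hh.1⟩)
      obtain ⟨w, _, hw1, hw2⟩ := hs Ω (closure Ω)ᶜ ho isClosed_closure.isOpen_compl hcl
        ⟨x, left_mem_segment ℝ x y, hx⟩
        ⟨y, right_mem_segment ℝ x y, (hcl y (right_mem_segment ℝ x y)).resolve_left hyΩ⟩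
      exact hw2 (subset_closure hw1)
    refine (infDist_le_dist_of_mem hw2).trans_lt (lt_of_le_of_lt ?_ hy)
    rw [dist_comm y x, ← dist_add_dist_of_mem_segment hw1, dist_comm w y]
    linarith [dist_nonneg (x := x) (y := w)]

lemma hat_meas {d : ℕ} (Ω : Set (EuclideanSpace ℝ (Fin d))) (δ : ℝ) (h : IsOpen Ω) :
    MeasurableSet (omegaC Ω δ) := by
  apply MeasurableSet.inter h.measurableSet.compl
  exact (isOpen_lt (continuous_infDist_pt _) continuous_const).measurableSet

lemma hat_bdd {d : ℕ} (Ω : Set (EuclideanSpace ℝ (Fin d))) (R δ : ℝ) (hδ : δ ≤ 1)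
    (hne : (frontier Ω).Nonempty) (hR : Ω ⊆ closedBall 0 R) :
    ∀ x ∈ hatΩ Ω δ, ‖x‖ ≤ R + 1 := by
  intro x hx
  rcases hx with hx | hx
  · have := hR hx
    simp at this; linarith
  · obtain ⟨w, hw, hwx⟩ := (infDist_lt_iff hne).1 hx.2
    have hw' : w ∈ closedBall 0 R :=
      (closure_minimal hR isClosed_closedBall) (frontier_subset_closure hw)
    simp only [mem_closedBall, dist_zero_right] at hw'
    have := norm_sub_norm_le x w
    rw [dist_eq_norm] at hwx
    linarith

lemma core {d : ℕ} (hd : 1 ≤ d) (Ω : Set (EuclideanSpace ℝ (Fin d))) (ho : IsOpen Ω)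
    (g : ℝ → ℝ) (δ : ℝ) (hδ : 0 < δ) (hδ1 : δ ≤ 1) (hgm : Measurable g) (hg0 : ∀ s, 0 ≤ g s)
    (hgδ : ∀ s, δ ≤ s → g s = 0)
    (hgi : Integrable (fun z : EuclideanSpace ℝ (Fin d) => g ‖z‖))
    (hm : ∫ z : EuclideanSpace ℝ (Fin d), ‖z‖ ^ 2 * g ‖z‖ = d)
    (A B M K K' ρ : ℝ) (hA : 0 < A) (hB : 0 < B) (hM : 0 < M) (hK : 0 < K) (hK' : 0 < K')
    (hgK : ∫ z : EuclideanSpace ℝ (Fin d), g ‖z‖ ≤ K / δ ^ 2)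
    (hvol : volume (omegaC Ω δ) ≤ ENNReal.ofReal (K' * δ)) (hΩv : volume Ω < ⊤)
    (hρ : ∀ x ∈ hatΩ Ω δ, ‖x‖ ≤ ρ) (μ : ℕ) (hμ : μ ≤ 1)
    (u₀ U V : EuclideanSpace ℝ (Fin d) → ℝ) (hU : Measurable U) (hV : Measurable V)
    (cU cV : ℝ) (hcU : ∀ x, |U x| ≤ cU) (hcV : ∀ x, |V x| ≤ cV)
    (hU0 : ∀ x, x ∉ hatΩ Ω δ → U x = 0) (hV0 : ∀ x, x ∉ hatΩ Ω δ → V x = 0)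
    (hVu : ∀ x ∈ hatΩ Ω δ, V x = u₀ x)
    (hu : ∀ y ∈ hatΩ Ω δ, ContDiffAt ℝ 4 u₀ y)
    (huM : ∀ y ∈ hatΩ Ω δ, ‖iteratedFDeriv ℝ 4 u₀ y‖ ≤ M)
    (hUA : ∀ x ∈ Ω, |2 * (∫ y in hatΩ Ω δ, (U y - U x) * g ‖y - x‖) - lap d u₀ x| ≤ A * δ ^ 2)
    (hUB : ∀ x ∈ omegaC Ω δ, |U x - V x| ≤ B * δ ^ (2 + μ)) :
    ∫ x in hatΩ Ω δ, ∫ y in hatΩ Ω δ, ((U y - V y) - (U x - V x)) ^ 2 * g ‖y - x‖ ≤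
      ((B + (A + M * d) * ρ ^ 2) * (A + M * d) * volume.real Ω
        + 4 * (B + (A + M * d) * ρ ^ 2) * K * B * K') * δ ^ (3 + μ) := by
  set H := hatΩ Ω δ with hHdef
  have hOm := hat_meas Ω δ ho
  have hH : MeasurableSet H := ho.measurableSet.union hOm
  have hHv : volume H < ⊤ := by
    refine (measure_union_le _ _).trans_lt ?_
    exact ENNReal.add_lt_top.2 ⟨hΩv, hvol.trans_lt ENNReal.ofReal_lt_top⟩
  set Λ := A + M * d with hΛdef
  have hΛ : 0 < Λ := by positivity
  set N := B + Λ * ρ ^ 2 with hN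
  have hN0 : 0 < N := by positivity
  have hd1 : (1:ℝ) ≤ d := by exact_mod_cast hd
  have hball : ∀ x ∈ Ω, ball x δ ⊆ H := fun x hx => ball_sub_hat Ω δ ho x hx
  have hΩH : Ω ⊆ H := subset_union_left
  have hgx : ∀ x : EuclideanSpace ℝ (Fin d), Integrable (fun y => g ‖y - x‖) :=
    fun x => hgi.comp_sub_right x
  have hix : ∀ (w : EuclideanSpace ℝ (Fin d) → ℝ) (c : ℝ), Measurable w → (∀ x, |w x| ≤ c) →
      ∀ x, IntegrableOn (fun y => (w y - w x) * g ‖y - x‖) H := by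
    intro w c hw hc x
    apply Integrable.integrableOn
    apply (hgx x).bdd_mul (c := c + c) (by fun_prop)
    exact Eventually.of_forall fun y => (abs_sub _ _).trans (add_le_add (hc _) (hc _))
  set e := fun x => U x - V x with he
  have hem : Measurable e := hU.sub hV
  have heb : ∀ x, |e x| ≤ cU + cV := fun x => (abs_sub _ _).trans (add_le_add (hcU _) (hcV _))
  set P := fun x => ∫ y in H, (e y - e x) * g ‖y - x‖ with hP
  have hPΩ : ∀ x ∈ Ω, |P x| ≤ Λ * δ ^ 2 / 2 := by
    intro x hx
    have h1 : P x = (∫ y in H, (U y - U x) * g ‖y - x‖) - ∫ y in H, (V y - V x) * g ‖y - x‖ := by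
      rw [← integral_sub (hix U cU hU hcU x) (hix V cV hV hcV x)]
      refine integral_congr_ae (Eventually.of_forall fun y => ?_)
      simp only [he]; ring
    have h2 := hUA x hx
    have h3 := Lu0 hd g δ hg0 hgδ hgi hm H x (hball x hx) hδ M hM u₀ V hV cV hcV hVu hu huM
    rw [h1]
    have h4 : Λ * δ ^ 2 = A * δ ^ 2 + M * d * δ ^ 2 := by rw [hΛdef]; ring
    rw [abs_le] at *
    constructor <;> linarith [h2.1, h2.2, h3.1, h3.2]
  have hδpow : δ ^ (2 + μ) ≤ δ ^ 2 := pow_le_pow_of_le_one hδ.le hδ1 (by omega)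
  -- the barrier
  set q : EuclideanSpace ℝ (Fin d) → ℝ := H.indicator (fun y => ‖y‖ ^ 2) with hq
  have hqm : Measurable q := Measurable.indicator (by fun_prop) hH
  have hq0 : ∀ y, 0 ≤ q y := fun y => indicator_nonneg (fun _ _ => by positivity) y
  have hqρ : ∀ y, q y ≤ ρ ^ 2 := by
    intro y
    by_cases hy : y ∈ H
    · rw [hq, indicator_of_mem hy]
      have := hρ y hy
      gcongr
    · rw [hq, indicator_of_notMem hy]; positivity
  have hqb : ∀ y, |q y| ≤ ρ ^ 2 := fun y => by rw [abs_of_nonneg (hq0 y)]; exact hqρ y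
  have hqL : ∀ x ∈ Ω, ∫ y in H, (q y - q x) * g ‖y - x‖ = d := by
    intro x hx
    exact Lquad g δ hg0 hgδ hgi hm H x (hball x hx) hδ q hqm _ hqb
      (fun y hy => indicator_of_mem hy _)
  have hmax : ∀ s : ℝ, |s| = 1 → ∀ x ∈ H, s * e x + Λ * δ ^ 2 * q x ≤ N * δ ^ 2 := by
    intro s hs
    set w := fun x => s * e x + Λ * δ ^ 2 * q x with hw
    refine maxP volume H Ω (fun z => g ‖z‖) w hgi (fun z => hg0 _) hH (by fun_prop)
      (cU + cV + Λ * δ ^ 2 * ρ ^ 2) ?_ (Λ * δ ^ 2 / 2) _ (by positivity) ?_ ?_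
    · intro x
      refine (abs_add_le _ _).trans ?_
      rw [abs_mul, hs, one_mul, abs_mul, abs_of_pos (show 0 < Λ * δ ^ 2 by positivity)]
      have := heb x
      have := hqb x
      gcongr
    · intro x hx
      have h1 : ∫ y in H, (w y - w x) * g ‖y - x‖ = s * P x +
          Λ * δ ^ 2 * ∫ y in H, (q y - q x) * g ‖y - x‖ := by
        rw [hP, ← integral_const_mul, ← integral_const_mul,
          ← integral_add ((hix e _ hem heb x).const_mul _) ((hix q _ hqm hqb x).const_mul _)]
        refine integral_congr_ae (Eventually.of_forall fun y => ?_)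
        simp only [hw]; ring
      rw [h1, hqL x hx]
      have h2 : |s * P x| ≤ Λ * δ ^ 2 / 2 := by rw [abs_mul, hs, one_mul]; exact hPΩ x hx
      have h3 := (abs_le.1 h2).1
      have h4 : 0 < Λ * δ ^ 2 := by positivity
      nlinarith
    · intro x hx hxΩ
      have hxo : x ∈ omegaC Ω δ := hx.resolve_left hxΩ
      have h1 : |s * e x| ≤ B * δ ^ (2 + μ) := by rw [abs_mul, hs, one_mul]; exact hUB x hxo
      have h2 := (abs_le.1 h1).2
      have h3 : Λ * δ ^ 2 * q x ≤ Λ * δ ^ 2 * ρ ^ 2 := by have := hqρ x; gcongr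
      have h4 : B * δ ^ (2 + μ) ≤ B * δ ^ 2 := by gcongr
      simp only [hw, hN]
      nlinarith
  have hE : ∀ x, |e x| ≤ N * δ ^ 2 := by
    intro x
    by_cases hx : x ∈ H
    · have h1 := hmax 1 (by simp) x hx
      have h2 := hmax (-1) (by simp) x hx
      have h3 : 0 ≤ Λ * δ ^ 2 * q x := by have := hq0 x; positivity
      rw [abs_le]; constructor <;> linarith
    · simp only [he, hU0 x hx, hV0 x hx, sub_zero, abs_zero]; positivity
  have hPc : ∀ x, |P x| ≤ 2 * N * K := by
    intro x
    have h1 : ‖P x‖ ≤ ∫ y in H, (2 * N * δ ^ 2) * g ‖y - x‖ := by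
      refine norm_integral_le_of_norm_le ((hgx x).const_mul _).integrableOn
        (Eventually.of_forall fun y => ?_)
      rw [norm_mul, Real.norm_of_nonneg (hg0 _)]
      refine mul_le_mul_of_nonneg_right ?_ (hg0 _)
      refine (abs_sub _ _).trans ?_
      have := hE x
      have := hE y
      linarith
    refine h1.trans ?_
    rw [integral_const_mul]
    have h2 : ∫ y in H, g ‖y - x‖ ≤ K / δ ^ 2 := by
      refine (setIntegral_le_integral (hgx x) (Eventually.of_forall fun y => hg0 _)).trans ?_
      rw [integral_sub_right_eq_self (fun z => g ‖z‖) x]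
      exact hgK
    calc _ ≤ (2 * N * δ ^ 2) * (K / δ ^ 2) := by gcongr
      _ = _ := by field_simp
  have hen := energy volume H (fun z => g ‖z‖) e (by fun_prop) hgi (fun z => by simp) hHv hem _ hE
  change ∫ x in H, ∫ y in H, (e y - e x) ^ 2 * g ‖y - x‖ ≤ _
  rw [hen]
  change -(2 * ∫ x in H, e x * P x) ≤ _
  have hPm : Measurable P := by
    have : Measurable (fun p : EuclideanSpace ℝ (Fin d) × EuclideanSpace ℝ (Fin d) =>
      (e p.2 - e p.1) * g ‖p.2 - p.1‖) := by fun_prop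
    exact this.stronglyMeasurable.integral_prod_right.measurable
  have hint : IntegrableOn (fun x => e x * P x) H := by
    have : IsFiniteMeasure (volume.restrict H) := ⟨by simpa using hHv⟩
    refine Integrable.of_bound (C := N * δ ^ 2 * (2 * N * K))
      (hem.mul hPm).aestronglyMeasurable (Eventually.of_forall fun x => ?_)
    rw [norm_mul]
    exact mul_le_mul (hE x) (hPc x) (norm_nonneg _) (by positivity)
  have hdis : Disjoint Ω (omegaC Ω δ) := by
    rw [Set.disjoint_left]; intro x hx hx2; exact hx2.1 hx
  have hsplit : ∫ x in H, e x * P x = (∫ x in Ω, e x * P x) + ∫ x in omegaC Ω δ, e x * P x :=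
    setIntegral_union hdis hOm (hint.mono_set subset_union_left) (hint.mono_set subset_union_right)
  have b1 : ‖∫ x in Ω, e x * P x‖ ≤ N * δ ^ 2 * (Λ * δ ^ 2 / 2) * volume.real Ω := by
    apply norm_setIntegral_le_of_norm_le_const hΩv
    intro x hx
    rw [norm_mul]
    exact mul_le_mul (hE x) (hPΩ x hx) (norm_nonneg _) (by positivity)
  have b2 : ‖∫ x in omegaC Ω δ, e x * P x‖ ≤ B * δ ^ (2 + μ) * (2 * N * K) * (K' * δ) := by
    have : ‖∫ x in omegaC Ω δ, e x * P x‖ ≤ B * δ ^ (2 + μ) * (2 * N * K) *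
        volume.real (omegaC Ω δ) := by
      apply norm_setIntegral_le_of_norm_le_const (hvol.trans_lt ENNReal.ofReal_lt_top)
      intro x hx
      rw [norm_mul]
      exact mul_le_mul (hUB x hx) (hPc x) (norm_nonneg _) (by positivity)
    refine this.trans ?_
    have h2 : volume.real (omegaC Ω δ) ≤ K' * δ :=
      ENNReal.toReal_le_of_le_ofReal (by positivity) hvol
    gcongr
  rw [Real.norm_eq_abs] at b1 b2
  rw [hsplit]
  have p1 : δ ^ 2 * δ ^ 2 ≤ δ ^ (3 + μ) := by
    rw [← pow_add]
    exact pow_le_pow_of_le_one hδ.le hδ1 (by omega)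
  have p2 : δ ^ (2 + μ) * δ = δ ^ (3 + μ) := by rw [← pow_succ]; congr 1; omega
  have b1' : N * δ ^ 2 * (Λ * δ ^ 2 / 2) * volume.real Ω ≤
      N * Λ * volume.real Ω / 2 * δ ^ (3 + μ) := by
    calc _ = N * Λ * volume.real Ω / 2 * (δ ^ 2 * δ ^ 2) := by ring
      _ ≤ _ := by gcongr
  have b2' : B * δ ^ (2 + μ) * (2 * N * K) * (K' * δ) = 2 * N * K * B * K' * δ ^ (3 + μ) := by
    rw [← p2]; ring
  have c1 := abs_le.1 b1
  have c2 := abs_le.1 b2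
  rw [b2'] at c2
  linarith [c1.1, c2.1]
end NL

/-- convergence of nonlocal to local solutions in the nonlocal
energy norm. -/
theorem stmt5 (d : ℕ) (hd : 1 ≤ d) (Ω : Set (EuclideanSpace ℝ (Fin d)))
    (hΩb : Bornology.IsBounded Ω) (hΩo : IsOpen Ω)
    (δ₀ : ℝ) (hδ₀ : δ₀ ∈ Ioc (0 : ℝ) 1) (μ : ℕ) (hμ : μ = 0 ∨ μ = 1)
    (A B M K K' : ℝ) (hA : 0 < A) (hB : 0 < B) (hM : 0 < M) (hK : 0 < K) (hK' : 0 < K') :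
    ∃ C > 0, ∀ δ ∈ Ioc (0 : ℝ) δ₀, ∀ γ : ℝ → ℝ, RadialKernel d δ γ →
      IntegrableOn (fun z : EuclideanSpace ℝ (Fin d) => γ ‖z‖) (ball 0 δ) →
      (∫ z in ball (0 : EuclideanSpace ℝ (Fin d)) δ, γ ‖z‖) ≤ K / δ ^ 2 →
      volume (omegaC Ω δ) ≤ ENNReal.ofReal (K' * δ) →
      ∀ u₀ : EuclideanSpace ℝ (Fin d) → ℝ,
        (∃ V, IsOpen V ∧ closure (hatΩ Ω δ) ⊆ V ∧ ContDiffOn ℝ 4 u₀ V) →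
        (∀ y ∈ hatΩ Ω δ, ∀ j ≤ 4, ‖iteratedFDeriv ℝ j u₀ y‖ ≤ M) →
      ∀ f : EuclideanSpace ℝ (Fin d) → ℝ,
        (∀ x ∈ Ω, |f x - (-(lap d u₀ x))| ≤ A * δ ^ 2) →
      ∀ g : EuclideanSpace ℝ (Fin d) → ℝ,
        (∀ x ∈ omegaC Ω δ, |g x - u₀ x| ≤ B * δ ^ (2 + μ)) →
      ∀ u : EuclideanSpace ℝ (Fin d) → ℝ, Measurable u →
        (∃ Mu : ℝ, ∀ x ∈ hatΩ Ω δ, |u x| ≤ Mu) →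
        (∀ x ∈ Ω, -(2 * ∫ y in hatΩ Ω δ, (u y - u x) * γ ‖y - x‖) = f x) →
        (∀ x ∈ omegaC Ω δ, u x = g x) →
      Real.sqrt (∫ x in hatΩ Ω δ, ∫ y in hatΩ Ω δ,
          ((u y - u₀ y) - (u x - u₀ x)) ^ 2 * γ ‖y - x‖) ≤
        C * δ ^ ((3 + (μ : ℝ)) / 2) := by
  have hd0 : Nonempty (Fin d) := ⟨⟨0, hd⟩⟩
  have hnt : Nontrivial (EuclideanSpace ℝ (Fin d)) := inferInstance
  obtain ⟨R, hR⟩ := hΩb.subset_closedBall 0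
  have hΩv : volume Ω < ⊤ := hΩb.measure_lt_top
  set C0 : ℝ := (B + (A + M * d) * (R + 1) ^ 2) * (A + M * d) * volume.real Ω
        + 4 * (B + (A + M * d) * (R + 1) ^ 2) * K * B * K' with hC0
  have hC0p : 0 ≤ C0 := by positivity
  refine ⟨Real.sqrt C0 + 1, by positivity, ?_⟩
  intro δ hδ γ hγ hγi hγK hvol u₀ hu₀ hu₀M f hf g hg u hu hub hueq hug
  obtain ⟨V, hVo, hVH, hVc⟩ := hu₀
  obtain ⟨hγm, hγpos, hγδ, -, hγmom⟩ := hγ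
  obtain ⟨Mu, hMu⟩ := hub
  have hδ0 : 0 < δ := hδ.1
  have hδ1 : δ ≤ 1 := hδ.2.trans hδ₀.2
  have hne : (frontier Ω).Nonempty := by
    by_contra hcon
    rw [Set.not_nonempty_iff_eq_empty, frontier_eq_empty_iff] at hcon
    rcases hcon with h | h
    · have : omegaC Ω δ = univ := by
        ext y
        simp [omegaC, h, hδ0]
      rw [this, measure_univ_of_isAddLeftInvariant] at hvol
      exact absurd hvol (not_le.2 ENNReal.ofReal_lt_top)
    · rw [h, measure_univ_of_isAddLeftInvariant] at hΩv
      exact lt_irrefl _ hΩv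
  set G : ℝ → ℝ := (Ioi 0).indicator γ with hG
  have hGpos : ∀ s, 0 < s → G s = γ s := fun s hs => indicator_of_mem hs _
  have hGm : Measurable G := hγm.indicator measurableSet_Ioi
  have hGδ : ∀ s, δ ≤ s → G s = 0 := fun s hs => by
    rw [hGpos s (hδ0.trans_le hs)]; exact hγδ s hs
  have hG0 : ∀ s, 0 ≤ G s := by
    intro s
    by_cases hs : 0 < s
    · rw [hGpos s hs]
      by_cases h2 : s < δ
      · exact (hγpos s hs h2).le
      · rw [hγδ s (not_lt.1 h2)]
    · exact (indicator_of_notMem (s := Ioi (0:ℝ)) hs γ).ge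
  have hae : ∀ x : EuclideanSpace ℝ (Fin d), ∀ᵐ y : EuclideanSpace ℝ (Fin d),
      G ‖y - x‖ = γ ‖y - x‖ := by
    intro x
    have : ∀ᵐ y : EuclideanSpace ℝ (Fin d), y ≠ x := Measure.ae_ne volume x
    filter_upwards [this] with y hy
    exact hGpos _ (norm_pos_iff.2 (sub_ne_zero.2 hy))
  have hae0 : ∀ᵐ y : EuclideanSpace ℝ (Fin d), G ‖y‖ = γ ‖y‖ := by simpa using hae 0
  have hGib : IntegrableOn (fun z : EuclideanSpace ℝ (Fin d) => G ‖z‖) (ball 0 δ) :=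
    hγi.congr (ae_restrict_of_ae (hae0.mono fun y hy => hy.symm))
  have hGz : ∀ z : EuclideanSpace ℝ (Fin d), z ∉ ball (0 : EuclideanSpace ℝ (Fin d)) δ →
      G ‖z‖ = 0 := by
    intro z hz
    exact hGδ _ (by simpa using hz)
  have hGi : Integrable (fun z : EuclideanSpace ℝ (Fin d) => G ‖z‖) :=
    (integrableOn_iff_integrable_of_support_subset (by
      intro z hz
      by_contra h
      exact hz (hGz z h))).1 hGib
  have hGK : ∫ z : EuclideanSpace ℝ (Fin d), G ‖z‖ ≤ K / δ ^ 2 := by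
    rw [← setIntegral_eq_integral_of_forall_compl_eq_zero hGz]
    rw [integral_congr_ae (ae_restrict_of_ae hae0)]
    exact hγK
  have hmom : ∫ z : EuclideanSpace ℝ (Fin d), ‖z‖ ^ 2 * G ‖z‖ = d := by
    apply NL.moment_polar hd G δ hGδ
    rw [← hγmom]
    congr 1
    refine setIntegral_congr_fun measurableSet_Ioo fun s hs => ?_
    simp only [hGpos s hs.1]
  set H := hatΩ Ω δ with hH
  have hHm : MeasurableSet H := hΩo.measurableSet.union (NL.hat_meas Ω δ hΩo)
  have hHV : H ⊆ V := subset_closure.trans hVH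
  have hcd : ∀ y ∈ H, ContDiffAt ℝ 4 u₀ y := fun y hy => hVc.contDiffAt (hVo.mem_nhds (hHV hy))
  set W := H.indicator u₀ with hW
  have hWm : Measurable W := by
    have hc : ContinuousOn u₀ H := hVc.continuousOn.mono hHV
    classical
    have := hc.measurable_piecewise (g := 0) (continuousOn_const (c := (0:ℝ)) (s := Hᶜ)) hHm
    rwa [Set.piecewise_eq_indicator] at this
  set U := H.indicator u with hU
  have hUm : Measurable U := hu.indicator hHm
  have hWH : ∀ x ∈ H, W x = u₀ x := fun x hx => indicator_of_mem hx _
  have hUH : ∀ x ∈ H, U x = u x := fun x hx => indicator_of_mem hx _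
  have hW0 : ∀ x, x ∉ H → W x = 0 := fun x hx => indicator_of_notMem hx _
  have hU0 : ∀ x, x ∉ H → U x = 0 := fun x hx => indicator_of_notMem hx _
  have hcW : ∀ x, |W x| ≤ M := by
    intro x
    by_cases hx : x ∈ H
    · rw [hWH x hx]
      have := hu₀M x hx 0 (by norm_num)
      rwa [norm_iteratedFDeriv_zero, Real.norm_eq_abs] at this
    · rw [hW0 x hx, abs_zero]; exact hM.le
  have hcU : ∀ x, |U x| ≤ |Mu| := by
    intro x
    by_cases hx : x ∈ H
    · rw [hUH x hx]; exact (hMu x hx).trans (le_abs_self _)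
    · rw [hU0 x hx, abs_zero]; exact abs_nonneg _
  have hUA : ∀ x ∈ Ω, |2 * (∫ y in H, (U y - U x) * G ‖y - x‖) - lap d u₀ x| ≤ A * δ ^ 2 := by
    intro x hx
    have hxH : x ∈ H := Or.inl hx
    have e1 : ∫ y in H, (U y - U x) * G ‖y - x‖ = ∫ y in H, (u y - u x) * γ ‖y - x‖ := by
      apply setIntegral_congr_ae hHm
      filter_upwards [hae x] with y hy hyH
      rw [hy, hUH y hyH, hUH x hxH]
    have h1 := hueq x hx
    have h2 := hf x hx
    rw [← h1] at h2
    rw [e1]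
    rw [abs_le] at *
    constructor <;> linarith [h2.1, h2.2]
  have hUB : ∀ x ∈ omegaC Ω δ, |U x - W x| ≤ B * δ ^ (2 + μ) := by
    intro x hx
    have hxH : x ∈ H := Or.inr hx
    rw [hUH x hxH, hWH x hxH, hug x hx]
    exact hg x hx
  have hfin := NL.core hd Ω hΩo G δ hδ0 hδ1 hGm hG0 hGδ hGi hmom A B M K K' (R + 1) hA hB hM hK hK'
    hGK hvol hΩv (NL.hat_bdd Ω R δ hδ1 hne hR) μ (by omega) u₀ U W hUm hWm |Mu| M hcU hcW
    hU0 hW0 hWH hcd (fun y hy => hu₀M y hy 4 le_rfl) hUA hUB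
  have hI : ∫ x in H, ∫ y in H, ((u y - u₀ y) - (u x - u₀ x)) ^ 2 * γ ‖y - x‖ =
      ∫ x in H, ∫ y in H, ((U y - W y) - (U x - W x)) ^ 2 * G ‖y - x‖ := by
    refine setIntegral_congr_fun hHm fun x hx => ?_
    apply setIntegral_congr_ae hHm
    filter_upwards [hae x] with y hy hyH
    rw [hy, hUH y hyH, hUH x hx, hWH y hyH, hWH x hx]
  rw [hI]
  have hpow : Real.sqrt (δ ^ (3 + μ)) = δ ^ ((3 + (μ : ℝ)) / 2) := by
    rw [Real.sqrt_eq_rpow, ← Real.rpow_natCast, ← Real.rpow_mul hδ0.le]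
    congr 1
    push_cast; ring
  calc _ ≤ Real.sqrt (C0 * δ ^ (3 + μ)) := Real.sqrt_le_sqrt hfin
    _ = Real.sqrt C0 * δ ^ ((3 + (μ : ℝ)) / 2) := by rw [Real.sqrt_mul hC0p, hpow]
    _ ≤ _ := by
      have : 0 ≤ δ ^ ((3 + (μ : ℝ)) / 2) := Real.rpow_nonneg hδ0.le _
      nlinarith
end
end

section
/- (Quantitative non-convergence for polygonal neighborhoods, second-order kernel case.) Let N ≥ 3 be an integer and L₂ > 0. Let γ : (0,1] → [0,∞) satisfy ∫₀¹ ρ³ γ(ρ) dρ < ∞, γ continuously differentiable on an open interval containing [cos(π/N), 1], γ(1) = 0, and (d/dt)(π t³ γ(t)) ≤ −L₂ for all t ∈ [cos(π/N), 1]. Let S ⊂ ℝ² be a finite set with at most N elements, all lying on the unit circle {ξ : |ξ| = 1}, and let P be the convex hull of S. Then for each coordinate index i ∈ {1,2}, ∫_{B̄₁(0) \ P} ξ_i² γ(|ξ|) dξ ≥ (2 L₂ / π) · σ_{L,2}(π/N), where B̄₁(0) is the closed unit disk and σ_{L,2}(s) = (5/8) sin(2s) − (s/4) cos(2s) − cos(s)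 · log(tan(s/2 + π/4)). -/
open MeasureTheory Metric Set Real

noncomputable section

/-- `σ_{L,2}(s) = (5/8)·sin(2s) − (s/4)·cos(2s) − cos(s)·log(tan(s/2 + π/4))`. -/
def sigmaL2 (s : ℝ) : ℝ :=
  (5 / 8) * Real.sin (2 * s) - (s / 4) * Real.cos (2 * s) -
    Real.cos s * Real.log (Real.tan (s / 2 + π / 4))

lemma exists_gap_aux (A : Finset ℝ) (N : ℕ) (hN : 1 ≤ N) (hA : A.card ≤ N) :
    ∃ φ : ℝ, ∀ α ∈ A, Real.cos (φ - α) ≤ Real.cos (π / N) := by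
  rcases A.eq_empty_or_nonempty with rfl | hne
  · exact ⟨0, by simp⟩
  have hpi := Real.pi_pos
  have : Fact (0 < 2 * π) := ⟨by positivity⟩
  have hN' : (0 : ℝ) < N := by exact_mod_cast hN
  let B : Set (AddCircle (2 * π)) := (fun x : ℝ => (x : AddCircle (2 * π))) '' (A : Set ℝ)
  have hBne : B.Nonempty := by
    obtain ⟨x, hx⟩ := hne
    exact ⟨_, x, hx, rfl⟩
  have hBc : IsCompact B := (A.finite_toSet.image _).isCompact
  obtain ⟨p, -, hp⟩ := (isCompact_univ (X := AddCircle (2 * π))).exists_isMaxOn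
    ⟨0, mem_univ _⟩ (Metric.continuous_infDist_pt B).continuousOn
  have key : π / N ≤ infDist p B := by
    by_contra! hlt
    have hcov : (univ : Set (AddCircle (2 * π))) ⊆
        ⋃ a ∈ A, closedBall ((a : ℝ) : AddCircle (2 * π)) (infDist p B) := by
      intro q _
      obtain ⟨y, ⟨a, ha, rfl⟩, hy⟩ := hBc.exists_infDist_eq_dist hBne q
      have h2 : infDist q B ≤ infDist p B := hp (mem_univ q)
      simp only [mem_iUnion]
      exact ⟨a, ha, by rw [mem_closedBall, ← hy]; exact h2⟩
    have h3 := (measure_mono (μ := volume) hcov).trans (measure_biUnion_finset_le A _)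
    simp only [AddCircle.measure_univ, AddCircle.volume_closedBall, Finset.sum_const,
      nsmul_eq_mul] at h3
    rw [← ENNReal.ofReal_natCast, ← ENNReal.ofReal_mul (by positivity),
      ENNReal.ofReal_le_ofReal_iff (by have := infDist_nonneg (x := p) (s := B); positivity)] at h3
    have h4 : (A.card : ℝ) * min (2 * π) (2 * infDist p B) ≤ N * (2 * infDist p B) := by
      have := infDist_nonneg (x := p) (s := B)
      apply mul_le_mul (by exact_mod_cast hA) (min_le_right _ _) (by positivity) (by positivity)
    have h5 : N * infDist p B < π := by
      rw [lt_div_iff₀ hN'] at hlt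
      linarith
    linarith
  obtain ⟨φ, rfl⟩ := QuotientAddGroup.mk_surjective p
  refine ⟨φ, fun α hα => ?_⟩
  have h1 : π / N ≤ ‖((φ - α : ℝ) : AddCircle (2 * π))‖ := by
    refine key.trans ((infDist_le_dist_of_mem (show (α : AddCircle (2 * π)) ∈ B from ⟨α, hα, rfl⟩)).trans ?_)
    rw [dist_eq_norm]
    exact le_of_eq rfl
  have h2 : Real.cos (φ - α) = Real.cos ‖((φ - α : ℝ) : AddCircle (2 * π))‖ := by
    rw [AddCircle.norm_eq, Real.cos_abs, Real.cos_sub_int_mul_two_pi]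
  rw [h2]
  apply Real.cos_le_cos_of_nonneg_of_le_pi (by positivity) _ h1
  have := AddCircle.norm_le_half_period (2 * π) (by positivity) (x := ((φ - α : ℝ) : AddCircle (2 * π)))
  rw [abs_of_pos (by positivity)] at this
  linarith

lemma oneD_anti (s K k u : ℝ) (hu0 : 0 ≤ u) (hu : u < π / 2) :
    HasDerivAt (fun u => ((u / 2 - Real.sin (2 * u) / 4) -
        2 * Real.cos s * (Real.log (Real.tan (u / 2 + π / 4)) - Real.sin u) +
        Real.cos s ^ 2 * (Real.tan u - u)) + k * K * (Real.sin (2 * u) / 2))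
      (Real.sin u ^ 2 * (1 - Real.cos s / Real.cos u) ^ 2 + k * K * Real.cos (2 * u)) u := by
  have hpi := Real.pi_pos
  have hc : 0 < Real.cos u := Real.cos_pos_of_mem_Ioo ⟨by linarith, hu⟩
  have hc2 : 0 < Real.cos (u / 2 + π / 4) := Real.cos_pos_of_mem_Ioo ⟨by linarith, by linarith⟩
  have hs2 : 0 < Real.sin (u / 2 + π / 4) := Real.sin_pos_of_pos_of_lt_pi (by linarith) (by linarith)
  have ht2 : Real.tan (u / 2 + π / 4) ≠ 0 := by
    rw [Real.tan_eq_sin_div_cos]; positivity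
  have h1 : HasDerivAt (fun u : ℝ => Real.sin (2 * u)) (Real.cos (2 * u) * (2 * 1)) u :=
    ((hasDerivAt_id u).const_mul 2).sin
  have h2 : HasDerivAt (fun u : ℝ => u / 2 + π / 4) (1 / 2) u :=
    ((hasDerivAt_id u).div_const 2).add_const _
  have h3 : HasDerivAt (fun u : ℝ => Real.tan (u / 2 + π / 4))
      (1 / Real.cos (u / 2 + π / 4) ^ 2 * (1 / 2)) u :=
    HasDerivAt.comp (h₂ := Real.tan) u (Real.hasDerivAt_tan (x := u / 2 + π / 4) hc2.ne') h2
  have h4 := h3.log ht2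
  have h5 := Real.hasDerivAt_tan hc.ne'
  have h6 := ((((hasDerivAt_id u).div_const 2).sub (h1.div_const 4)).sub
    ((h4.sub (Real.hasDerivAt_sin u)).const_mul (2 * Real.cos s))).add
    ((h5.sub (hasDerivAt_id u)).const_mul (Real.cos s ^ 2))
  have h7 := h6.add ((h1.div_const 2).const_mul (k * K))
  refine h7.congr_deriv ?_
  have e1 : 1 / Real.cos (u / 2 + π / 4) ^ 2 * (1 / 2) / Real.tan (u / 2 + π / 4) =
      1 / Real.cos u := by
    have : Real.cos u = 2 * Real.sin (u / 2 + π / 4) * Real.cos (u / 2 + π / 4) := by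
      rw [← Real.sin_two_mul, ← Real.sin_add_pi_div_two]
      congr 1; ring
    rw [this, Real.tan_eq_sin_div_cos]
    field_simp
  rw [e1]
  have e2 : Real.sin u ^ 2 = 1 - Real.cos u ^ 2 := Real.sin_sq u
  rw [e2, Real.cos_two_mul]
  field_simp
  ring

lemma oneD (s φ : ℝ) (hs0 : 0 < s) (hs : s < π / 2) :
    2 * sigmaL2 s ≤ ∫ u in (-s)..s,
      Real.cos (u + φ) ^ 2 * ((1 - Real.cos s / Real.cos u) ^ 2 / 2) := by
  have hpi := Real.pi_pos
  set f : ℝ → ℝ := fun u => Real.cos (u + φ) ^ 2 * ((1 - Real.cos s / Real.cos u) ^ 2 / 2) with hf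
  have hcpos : ∀ u ∈ Icc (-s) s, 0 < Real.cos u := fun u hu =>
    Real.cos_pos_of_mem_Ioo ⟨by linarith [hu.1], by linarith [hu.2]⟩
  have hfc : ContinuousOn f (Icc (-s) s) := by
    refine ContinuousOn.mul (by fun_prop) (ContinuousOn.div_const (ContinuousOn.pow
      (continuousOn_const.sub (ContinuousOn.div continuousOn_const (by fun_prop)
        fun u hu => (hcpos u hu).ne')) 2) _)
  have hfi1 : IntervalIntegrable f volume (-s) 0 :=
    (hfc.mono (by rw [uIcc_of_le (by linarith)]; exact Icc_subset_Icc le_rfl hs0.le)).intervalIntegrable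
  have hfi2 : IntervalIntegrable f volume 0 s :=
    (hfc.mono (by rw [uIcc_of_le (by linarith)]; exact Icc_subset_Icc (by linarith) le_rfl)).intervalIntegrable
  have hfi3 : IntervalIntegrable (fun u => f (-u)) volume 0 s := by
    apply ContinuousOn.intervalIntegrable
    rw [uIcc_of_le hs0.le]
    exact hfc.comp continuousOn_neg fun u hu => ⟨by linarith [hu.2], by linarith [hu.1]⟩
  have hsplit : ∫ u in (-s)..s, f u = ∫ u in (0 : ℝ)..s, (f u + f (-u)) := by
    rw [← intervalIntegral.integral_add_adjacent_intervals hfi1 hfi2,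
      intervalIntegral.integral_add hfi2 hfi3, intervalIntegral.integral_comp_neg, neg_zero, add_comm]
  set m : ℝ := min s (π / 4) with hm
  have hm0 : 0 < m := lt_min hs0 (by linarith)
  set K : ℝ := (1 - Real.cos s / Real.cos m) ^ 2 with hK
  set k : ℝ := Real.cos φ ^ 2 with hk
  have hKk : 0 ≤ k * K := by positivity
  set g : ℝ → ℝ := fun u => Real.sin u ^ 2 * (1 - Real.cos s / Real.cos u) ^ 2 + k * K * Real.cos (2 * u) with hg
  have hgc : ContinuousOn g (Icc 0 s) := by
    have hq : ContinuousOn (fun u => (1 - Real.cos s / Real.cos u) ^ 2) (Icc 0 s) :=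
      ContinuousOn.pow (continuousOn_const.sub (ContinuousOn.div continuousOn_const (by fun_prop)
        fun u hu => (hcpos u ⟨by linarith [hu.1], hu.2⟩).ne')) 2
    exact ContinuousOn.add (ContinuousOn.mul (by fun_prop) hq) (by fun_prop)
  have hgi : IntervalIntegrable g volume 0 s := by
    apply ContinuousOn.intervalIntegrable
    rwa [uIcc_of_le hs0.le]
  have hwmono : ∀ u v, 0 ≤ u → u ≤ v → v ≤ s →
      (1 - Real.cos s / Real.cos v) ^ 2 ≤ (1 - Real.cos s / Real.cos u) ^ 2 := by
    intro u v hu huv hv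
    have h1 := hcpos u ⟨by linarith, by linarith⟩
    have h2 := hcpos v ⟨by linarith, by linarith⟩
    have h0 := hcpos s ⟨by linarith, by linarith⟩
    have h3 : Real.cos v ≤ Real.cos u := Real.cos_le_cos_of_nonneg_of_le_pi hu (by linarith) huv
    have h4 : Real.cos s ≤ Real.cos v := Real.cos_le_cos_of_nonneg_of_le_pi (by linarith) (by linarith) hv
    have h5 : Real.cos s / Real.cos v ≤ 1 := (div_le_one h2).2 h4
    have h6 : Real.cos s / Real.cos u ≤ Real.cos s / Real.cos v := by gcongr
    apply pow_le_pow_left₀ <;> linarith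
  have hmono : ∀ u ∈ Icc 0 s, g u ≤ f u + f (-u) := by
    intro u hu
    have e1 : f u + f (-u) = Real.sin u ^ 2 * (1 - Real.cos s / Real.cos u) ^ 2 +
        k * (Real.cos (2 * u) * (1 - Real.cos s / Real.cos u) ^ 2) := by
      simp only [hf, hk, Real.cos_add, Real.cos_neg, Real.sin_neg, Real.cos_two_mul, neg_mul]
      have := Real.sin_sq u
      have h' := Real.sin_sq φ
      generalize (1 - Real.cos s / Real.cos u) ^ 2 = w
      linear_combination (w * (Real.sin φ ^ 2 - 1)) * this + (w * (1 - Real.cos u ^ 2)) * h'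
    rw [e1]
    simp only [hg]
    have : K * Real.cos (2 * u) ≤ Real.cos (2 * u) * (1 - Real.cos s / Real.cos u) ^ 2 := by
      rw [mul_comm]
      rcases le_total u (π / 4) with h | h
      · have hc : 0 ≤ Real.cos (2 * u) := Real.cos_nonneg_of_mem_Icc ⟨by linarith [hu.1], by linarith⟩
        exact mul_le_mul_of_nonneg_left (hwmono u m hu.1 (le_min hu.2 h) (min_le_left _ _)) hc
      · have hc : Real.cos (2 * u) ≤ 0 :=
          Real.cos_nonpos_of_pi_div_two_le_of_le (by linarith) (by linarith [hu.2])
        exact mul_le_mul_of_nonpos_left (hwmono m u hm0.le ((min_le_right _ _).trans h) hu.2) hc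
    have hk0 : 0 ≤ k := by positivity
    have := mul_le_mul_of_nonneg_left this hk0
    linarith
  rw [hsplit]
  refine le_trans ?_ (intervalIntegral.integral_mono_on hs0.le hgi (hfi2.add hfi3) hmono)
  rw [intervalIntegral.integral_eq_sub_of_hasDerivAt (fun u hu => by
    rw [uIcc_of_le hs0.le] at hu
    exact oneD_anti s K k u hu.1 (by linarith [hu.2])) hgi]
  have hcs := hcpos s ⟨by linarith, le_rfl⟩
  have hs2 : 0 ≤ Real.sin (2 * s) := Real.sin_nonneg_of_nonneg_of_le_pi (by linarith) (by linarith)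
  have hlast : 0 ≤ k * K * (Real.sin (2 * s) / 2) := by positivity
  have ht : Real.tan (0 / 2 + π / 4) = 1 := by rw [zero_div, zero_add, Real.tan_pi_div_four]
  have hts : Real.cos s ^ 2 * Real.tan s = Real.sin (2 * s) / 2 := by
    rw [Real.tan_eq_sin_div_cos, Real.sin_two_mul]; field_simp
  simp only [ht, Real.log_one, Real.sin_zero, mul_zero, Real.tan_zero, sigmaL2]
  rw [Real.cos_two_mul]
  have h2 := Real.sin_two_mul s
  nlinarith [hlast, hts, h2]

def capRot (φ : ℝ) : ℂ ≃ₗᵢ[ℝ] EuclideanSpace ℝ (Fin 2) :=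
  (rotation (Circle.exp φ)).trans Complex.orthonormalBasisOneI.repr

lemma capRot_polar_zero (φ r u : ℝ) :
    capRot φ (Complex.polarCoord.symm (r, u)) 0 = r * Real.cos (u + φ) := by
  have h : ∀ z : ℂ, Complex.orthonormalBasisOneI.repr z 0 = z.re := fun z => by simp
  simp only [capRot, LinearIsometryEquiv.trans_apply, h, rotation_apply, Circle.coe_exp,
    Complex.polarCoord_symm_apply]
  rw [Real.cos_add]
  simp [Complex.exp_mul_I, Complex.mul_re, Complex.add_re, ← Complex.ofReal_cos, ← Complex.ofReal_sin]
  ring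

lemma capRot_polar_one (φ r u : ℝ) :
    capRot φ (Complex.polarCoord.symm (r, u)) 1 = r * Real.sin (u + φ) := by
  have h : ∀ z : ℂ, Complex.orthonormalBasisOneI.repr z 1 = z.im := fun z => by simp
  simp only [capRot, LinearIsometryEquiv.trans_apply, h, rotation_apply, Circle.coe_exp,
    Complex.polarCoord_symm_apply]
  rw [Real.sin_add]
  simp [Complex.exp_mul_I, Complex.mul_re, Complex.add_re, ← Complex.ofReal_cos, ← Complex.ofReal_sin]
  ring

lemma capInt (s φ : ℝ) (hs0 : 0 < s) (hs : s < π / 2) (i : Fin 2) :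
    2 * sigmaL2 s ≤ ∫ ξ : EuclideanSpace ℝ (Fin 2),
      indicator {ξ : EuclideanSpace ℝ (Fin 2) |
        Real.cos s < ξ 0 * Real.cos φ + ξ 1 * Real.sin φ ∧ ‖ξ‖ ≤ 1}
        (fun ξ => (ξ i) ^ 2 * ((1 - ‖ξ‖) / ‖ξ‖ ^ 3)) ξ := by
  have hpi := Real.pi_pos
  have hcs : 0 < Real.cos s := Real.cos_pos_of_mem_Ioo ⟨by linarith, by linarith⟩
  obtain ⟨ψ, hψ⟩ : ∃ ψ : ℝ, ∀ r u, capRot φ (Complex.polarCoord.symm (r, u)) i =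
      r * Real.cos (u + ψ) := by
    fin_cases i
    · exact ⟨φ, fun r u => capRot_polar_zero φ r u⟩
    · refine ⟨φ - π / 2, fun r u => (capRot_polar_one φ r u).trans ?_⟩
      rw [← add_sub_assoc, Real.cos_sub_pi_div_two]
  rw [← (capRot φ).measurePreserving.integral_comp
    (capRot φ).toHomeomorph.measurableEmbedding, ← Complex.integral_comp_polarCoord_symm,
    ← integral_indicator polarCoord.open_target.measurableSet]
  set R : Set (ℝ × ℝ) := {p | p.2 ∈ Ioo (-s) s ∧ Real.cos s < p.1 * Real.cos p.2 ∧ p.1 ≤ 1} with hR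
  set h : ℝ × ℝ → ℝ := fun p => (1 - p.1) * Real.cos (p.2 + ψ) ^ 2 with hh
  have hcpos : ∀ u ∈ Ioo (-s) s, 0 < Real.cos u := fun u hu =>
    Real.cos_pos_of_mem_Ioo ⟨by linarith [hu.1], by linarith [hu.2]⟩
  have hRpos : ∀ p ∈ R, 0 < p.1 := fun p hp =>
    pos_of_mul_pos_left (hcs.trans hp.2.1) (hcpos _ hp.1).le
  have hRm : MeasurableSet R := by
    have : R = (Prod.snd ⁻¹' Ioo (-s) s) ∩ {p | Real.cos s < p.1 * Real.cos p.2} ∩ {p | p.1 ≤ 1} := by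
      ext p; simp [hR, and_assoc]
    rw [this]
    refine ((measurable_snd measurableSet_Ioo).inter ?_).inter ?_
    · exact measurableSet_lt (by fun_prop) (by fun_prop)
    · exact measurableSet_le (by fun_prop) (by fun_prop)
  have heq : (fun p : ℝ × ℝ => indicator polarCoord.target (fun p : ℝ × ℝ => p.1 •
      indicator {ξ : EuclideanSpace ℝ (Fin 2) |
        Real.cos s < ξ 0 * Real.cos φ + ξ 1 * Real.sin φ ∧ ‖ξ‖ ≤ 1}
        (fun ξ => (ξ i) ^ 2 * ((1 - ‖ξ‖) / ‖ξ‖ ^ 3)) (capRot φ (Complex.polarCoord.symm p))) p)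
      = indicator R h := by
    funext ⟨r, u⟩
    by_cases hp : (r, u) ∈ polarCoord.target
    · rw [indicator_of_mem hp]
      have hr : 0 < r := hp.1
      have hu : u ∈ Ioo (-π) π := hp.2
      have hnorm : ‖capRot φ (Complex.polarCoord.symm (r, u))‖ = r := by
        rw [LinearIsometryEquiv.norm_map, Complex.norm_polarCoord_symm, abs_of_pos hr]
      have hin : capRot φ (Complex.polarCoord.symm (r, u)) 0 * Real.cos φ +
          capRot φ (Complex.polarCoord.symm (r, u)) 1 * Real.sin φ = r * Real.cos u := by
        rw [capRot_polar_zero, capRot_polar_one]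
        have : Real.cos u = Real.cos (u + φ - φ) := by congr 1; ring
        rw [this, Real.cos_sub]; ring
      by_cases hm : (r, u) ∈ R
      · rw [indicator_of_mem hm, indicator_of_mem, hnorm, hψ]
        · simp only [hh, smul_eq_mul]
          field_simp
        · simp only [mem_setOf_eq, hnorm, hin]
          exact hm.2
      · rw [indicator_of_notMem hm, indicator_of_notMem, smul_zero]
        simp only [mem_setOf_eq, hnorm, hin]
        rintro ⟨h1, h2⟩
        apply hm
        refine ⟨?_, h1, h2⟩
        have hcu : 0 < Real.cos u := pos_of_mul_pos_right (hcs.trans h1) hr.le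
        have h3 : Real.cos s < Real.cos |u| := by
          rw [Real.cos_abs]; nlinarith
        have : |u| < s := by
          by_contra! hle
          exact absurd (Real.cos_le_cos_of_nonneg_of_le_pi hs0.le
            (abs_le.2 ⟨hu.1.le, hu.2.le⟩) hle) (not_le.2 h3)
        exact abs_lt.1 this
    · rw [indicator_of_notMem hp, indicator_of_notMem]
      intro hm
      exact hp ⟨hRpos _ hm, by linarith [hm.1.1], by linarith [hm.1.2]⟩
  rw [heq]
  have hint : Integrable (indicator R h) (volume.prod volume) := by
    rw [integrable_indicator_iff hRm]
    have hK : IsCompact (Icc (0 : ℝ) 1 ×ˢ Icc (-s) s) := isCompact_Icc.prod isCompact_Icc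
    have hc : Continuous h := by fun_prop
    refine IntegrableOn.mono_set (hc.continuousOn.integrableOn_compact hK) ?_
    intro p hp
    exact ⟨⟨(hRpos p hp).le, hp.2.2⟩, hp.1.1.le, hp.1.2.le⟩
  refine (oneD s ψ hs0 hs).trans (le_of_eq ?_)
  rw [Measure.volume_eq_prod, integral_prod_symm _ hint,
    intervalIntegral.integral_of_le (by linarith), integral_Ioc_eq_integral_Ioo,
    ← integral_indicator measurableSet_Ioo]
  congr 1
  funext u
  by_cases hu : u ∈ Ioo (-s) s
  · rw [indicator_of_mem hu]
    have hcu := hcpos u hu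
    have hle : Real.cos s / Real.cos u ≤ 1 := by
      rw [div_le_one hcu, ← Real.cos_abs u]
      exact Real.cos_le_cos_of_nonneg_of_le_pi (abs_nonneg _) (by linarith) (abs_lt.2 hu).le
    have e : (fun r => indicator R h (r, u)) =
        indicator (Ioc (Real.cos s / Real.cos u) 1) (fun r => (1 - r) * Real.cos (u + ψ) ^ 2) := by
      funext r
      by_cases hr : r ∈ Ioc (Real.cos s / Real.cos u) 1
      · rw [indicator_of_mem hr, indicator_of_mem]
        exact ⟨hu, (div_lt_iff₀ hcu).1 hr.1, hr.2⟩
      · rw [indicator_of_notMem hr, indicator_of_notMem]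
        intro hm
        exact hr ⟨(div_lt_iff₀ hcu).2 hm.2.1, hm.2.2⟩
    rw [e, integral_indicator measurableSet_Ioc, ← intervalIntegral.integral_of_le hle,
      intervalIntegral.integral_mul_const, intervalIntegral.integral_sub (by simp) (by simp),
      integral_id, intervalIntegral.integral_const]
    simp only [smul_eq_mul]
    ring
  · rw [indicator_of_notMem hu]
    have e : (fun r => indicator R h (r, u)) = 0 := by
      funext r
      exact indicator_of_notMem (fun hm => hu hm.1) _
    rw [e]; simp

lemma gamma_lower (c L₂ : ℝ) (γ : ℝ → ℝ) (hc : c < 1)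
    (hsmooth : ∃ a b : ℝ, a < c ∧ 1 < b ∧ ContDiffOn ℝ 1 γ (Ioo a b))
    (hγ1 : γ 1 = 0)
    (hder : ∀ t ∈ Icc c 1, deriv (fun t => π * t ^ 3 * γ t) t ≤ -L₂) :
    ∀ t ∈ Icc c 1, L₂ * (1 - t) ≤ π * t ^ 3 * γ t := by
  obtain ⟨a, b, ha, hb, hs⟩ := hsmooth
  have hd : ∀ t ∈ Icc c 1, DifferentiableAt ℝ (fun t => π * t ^ 3 * γ t) t := by
    intro t ht
    have : DifferentiableAt ℝ γ t := (hs.differentiableOn (by norm_num)).differentiableAt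
      (Ioo_mem_nhds (by linarith [ht.1]) (by linarith [ht.2]))
    fun_prop
  intro t ht
  have := (convex_Icc c 1).image_sub_le_mul_sub_of_deriv_le
    (fun t ht => (hd t ht).continuousAt.continuousWithinAt)
    (fun t ht => (hd t (interior_subset ht)).differentiableWithinAt)
    (fun t ht => hder t (interior_subset ht)) t ht 1 ⟨hc.le, le_rfl⟩ ht.2
  simp only [hγ1] at this
  linarith

lemma F_integrable (γ : ℝ → ℝ)
    (hint : IntegrableOn (fun ρ => ρ ^ 3 * γ ρ) (Ioc (0 : ℝ) 1)) (i : Fin 2) :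
    IntegrableOn (fun ξ : EuclideanSpace ℝ (Fin 2) => (ξ i) ^ 2 * γ ‖ξ‖) (closedBall 0 1) := by
  have h1 : Integrable (fun ξ : EuclideanSpace ℝ (Fin 2) =>
      (indicator (Iic 1) (fun y => y ^ 2 * γ y)) ‖ξ‖) := by
    rw [integrable_fun_norm_addHaar]
    have e : (fun y : ℝ => y ^ (Module.finrank ℝ (EuclideanSpace ℝ (Fin 2)) - 1) •
        (indicator (Iic 1) (fun y => y ^ 2 * γ y)) y) =
        indicator (Iic 1) (fun ρ => ρ ^ 3 * γ ρ) := by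
      funext y
      by_cases hy : y ∈ Iic (1 : ℝ)
      · rw [indicator_of_mem hy, indicator_of_mem hy]
        simp
        ring
      · rw [indicator_of_notMem hy, indicator_of_notMem hy, smul_zero]
    rw [e, IntegrableOn, integrable_indicator_iff measurableSet_Iic, IntegrableOn,
      Measure.restrict_restrict measurableSet_Iic, inter_comm, Ioi_inter_Iic]
    exact hint
  have h2 := h1.bdd_mul (f := fun ξ : EuclideanSpace ℝ (Fin 2) => (ξ i) ^ 2 / ‖ξ‖ ^ 2) (c := 1)
    (Measurable.aestronglyMeasurable (by fun_prop)) (Filter.Eventually.of_forall fun ξ => by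
      rw [Real.norm_of_nonneg (by positivity)]
      refine div_le_one_of_le₀ ?_ (by positivity)
      have := PiLp.norm_apply_le ξ i
      rw [Real.norm_eq_abs] at this
      rw [← sq_abs (ξ i)]
      gcongr)
  refine (h2.integrableOn (s := closedBall 0 1)).congr_fun ?_ measurableSet_closedBall
  intro ξ hξ
  have hn : ‖ξ‖ ∈ Iic (1 : ℝ) := by simpa using hξ
  simp only [indicator_of_mem hn]
  rcases eq_or_ne ξ 0 with rfl | h0
  · simp
  · have : 0 < ‖ξ‖ := norm_pos_iff.2 h0
    field_simp

/-- quantitative non-convergence for polygonal neighborhoods,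
second-order kernel case. -/
theorem stmt14 (N : ℕ) (hN : 3 ≤ N) (L₂ : ℝ) (hL₂ : 0 < L₂)
    (γ : ℝ → ℝ) (hγ0 : ∀ ρ, 0 < ρ → ρ ≤ 1 → 0 ≤ γ ρ)
    (hint : IntegrableOn (fun ρ => ρ ^ 3 * γ ρ) (Ioc (0 : ℝ) 1))
    (hsmooth : ∃ a b : ℝ, a < Real.cos (π / N) ∧ 1 < b ∧ ContDiffOn ℝ 1 γ (Ioo a b))
    (hγ1 : γ 1 = 0)
    (hder : ∀ t ∈ Icc (Real.cos (π / N)) 1, deriv (fun t => π * t ^ 3 * γ t) t ≤ -L₂)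
    (S : Set (EuclideanSpace ℝ (Fin 2))) (hSfin : S.Finite) (hScard : S.ncard ≤ N)
    (hScirc : ∀ ξ ∈ S, ‖ξ‖ = 1) (i : Fin 2) :
    (2 * L₂ / π) * sigmaL2 (π / N) ≤
      ∫ ξ in closedBall (0 : EuclideanSpace ℝ (Fin 2)) 1 \ convexHull ℝ S,
        (ξ i) ^ 2 * γ ‖ξ‖ := by
  have hpi := Real.pi_pos
  have hN3 : (3 : ℝ) ≤ N := by exact_mod_cast hN
  set s : ℝ := π / N with hs
  have hs0 : 0 < s := by positivity
  have hs2 : s < π / 2 := by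
    rw [hs]; gcongr; linarith
  have hcs : 0 < Real.cos s := Real.cos_pos_of_mem_Ioo ⟨by linarith, by linarith⟩
  have hcs1 : Real.cos s < 1 := by
    rw [← Real.cos_zero]
    exact Real.cos_lt_cos_of_nonneg_of_le_pi le_rfl (by linarith) hs0
  have hγ := gamma_lower _ L₂ γ hcs1 hsmooth hγ1 hder
  let ang : EuclideanSpace ℝ (Fin 2) → ℝ := fun ξ => Complex.arg ⟨ξ 0, ξ 1⟩
  have hang : ∀ ξ ∈ S, ξ 0 = Real.cos (ang ξ) ∧ ξ 1 = Real.sin (ang ξ) := by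
    intro ξ hξ
    have h1 := hScirc ξ hξ
    have h2 : ‖(⟨ξ 0, ξ 1⟩ : ℂ)‖ = 1 := by
      rw [← h1, EuclideanSpace.norm_eq, Complex.norm_eq_sqrt_sq_add_sq]
      simp [Fin.sum_univ_two]
    have h3 := Complex.norm_mul_cos_arg ⟨ξ 0, ξ 1⟩
    have h4 := Complex.norm_mul_sin_arg ⟨ξ 0, ξ 1⟩
    rw [h2, one_mul] at h3 h4
    exact ⟨h3.symm, h4.symm⟩
  obtain ⟨φ, hφ⟩ := exists_gap_aux (hSfin.toFinset.image ang) N (by omega) (by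
    refine Finset.card_image_le.trans ?_
    rwa [← Set.ncard_eq_toFinset_card S hSfin])
  have hhull : convexHull ℝ S ⊆ {ξ | ξ 0 * Real.cos φ + ξ 1 * Real.sin φ ≤ Real.cos s} := by
    apply convexHull_min
    · intro ξ hξ
      have h1 := hφ (ang ξ) (Finset.mem_image_of_mem _ (by simpa using hξ))
      rw [Real.cos_sub] at h1
      simp only [mem_setOf_eq, (hang ξ hξ).1, (hang ξ hξ).2]
      linarith
    · apply convex_halfSpace_le
      constructor
      · intro x y; simp; ring
      · intro a x; simp; ring
  set cap : Set (EuclideanSpace ℝ (Fin 2)) := {ξ : EuclideanSpace ℝ (Fin 2) |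
        Real.cos s < ξ 0 * Real.cos φ + ξ 1 * Real.sin φ ∧ ‖ξ‖ ≤ 1} with hcap
  have hDm : MeasurableSet (closedBall (0 : EuclideanSpace ℝ (Fin 2)) 1 \ convexHull ℝ S) :=
    measurableSet_closedBall.diff (hSfin.isCompact_convexHull ℝ).isClosed.measurableSet
  have hF := (F_integrable γ hint i).mono_set
    (diff_subset : closedBall (0 : EuclideanSpace ℝ (Fin 2)) 1 \ convexHull ℝ S ⊆ _)
  have hcapn : ∀ ξ ∈ cap, Real.cos s ≤ ‖ξ‖ := by
    intro ξ hξ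
    have h1 : ‖ξ‖ ^ 2 = ξ 0 ^ 2 + ξ 1 ^ 2 := by
      rw [EuclideanSpace.norm_sq_eq]; simp [Fin.sum_univ_two]
    have h2 : (ξ 0 * Real.cos φ + ξ 1 * Real.sin φ) ^ 2 ≤ ‖ξ‖ ^ 2 := by
      rw [h1]
      nlinarith [sq_nonneg (ξ 0 * Real.sin φ - ξ 1 * Real.cos φ), Real.sin_sq_add_cos_sq φ]
    have h3 := abs_le_of_sq_le_sq' h2 (norm_nonneg _)
    linarith [hξ.1, h3.2]
  have hmain : ∫ ξ, (L₂ / π) * indicator cap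
      (fun ξ : EuclideanSpace ℝ (Fin 2) => (ξ i) ^ 2 * ((1 - ‖ξ‖) / ‖ξ‖ ^ 3)) ξ ≤
      ∫ ξ, indicator (closedBall (0 : EuclideanSpace ℝ (Fin 2)) 1 \ convexHull ℝ S)
        (fun ξ => (ξ i) ^ 2 * γ ‖ξ‖) ξ := by
    refine integral_mono_of_nonneg (Filter.Eventually.of_forall fun ξ => ?_)
      ((integrable_indicator_iff hDm).2 hF) (Filter.Eventually.of_forall fun ξ => ?_)
    · refine mul_nonneg (by positivity) (indicator_nonneg (fun ξ hξ => ?_) ξ)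
      have : 0 ≤ 1 - ‖ξ‖ := sub_nonneg.2 hξ.2
      positivity
    · by_cases hξ : ξ ∈ cap
      · have hn := hcapn ξ hξ
        have hn0 : 0 < ‖ξ‖ := hcs.trans_le hn
        have hD : ξ ∈ closedBall (0 : EuclideanSpace ℝ (Fin 2)) 1 \ convexHull ℝ S :=
          ⟨by simpa using hξ.2, fun h => absurd (hhull h) (not_le.2 hξ.1)⟩
        simp only [indicator_of_mem hξ, indicator_of_mem hD]
        have h1 := hγ ‖ξ‖ ⟨hn, hξ.2⟩
        have h2 : L₂ / π * ((1 - ‖ξ‖) / ‖ξ‖ ^ 3) ≤ γ ‖ξ‖ := by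
          rw [div_mul_div_comm, div_le_iff₀ (by positivity)]
          linarith
        calc _ = (ξ i) ^ 2 * (L₂ / π * ((1 - ‖ξ‖) / ‖ξ‖ ^ 3)) := by ring
          _ ≤ _ := mul_le_mul_of_nonneg_left h2 (sq_nonneg _)
      · simp only [indicator_of_notMem hξ, mul_zero]
        refine indicator_nonneg (fun ξ hξ => ?_) ξ
        rcases eq_or_ne ξ 0 with rfl | h0
        · simp
        · exact mul_nonneg (sq_nonneg _) (hγ0 _ (norm_pos_iff.2 h0) (by simpa using hξ.1))
  rw [integral_indicator hDm, integral_const_mul] at hmain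
  refine le_trans ?_ hmain
  have := mul_le_mul_of_nonneg_left (capInt s φ hs0 hs2 i) (by positivity : 0 ≤ L₂ / π)
  refine le_trans (le_of_eq ?_) this
  ring
end
end

section
/- (Consistency of the nonlocal operator with symmetrically truncated neighborhood.) There is an absolute constant C > 0 with the following property. Let δ > 0, r ∈ (0, δ], and let γ̃ satisfy the radial kernel conditions with horizon δ in dimension 2. Let m : ℝ² → [0,1] be measurable with m(−z) = m(z) for all z, m(z) = 1 for |z| ≤ r, and m(z) = 0 for |z| ≥ δ, and set D := ∫_{r ≤ |z| ≤ δ} |z|² γ̃(|z|) dz. Let x ∈ ℝ² and let u : ℝ² → ℝ be four times continuously differentiable on the closed ball B̄_δ(x), with M_j := sup_{|y−x|≤δ} ‖D^j u(y)‖ for j = 2, 4. Then |2∫_{ℝ²} (u(x+z) − u(x)) γ̃(|z|) m(z) dz − Δu(x)| ≤ C (δ² M₄ + D M₂). -/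
open MeasureTheory Metric Set

noncomputable section

abbrev E2 := EuclideanSpace ℝ (Fin 2)

def rotLE : E2 ≃ₗ[ℝ] E2 where
  toFun z := !₂[-z 1, z 0]
  invFun z := !₂[z 1, -z 0]
  map_add' a b := by ext i; fin_cases i <;> simp <;> ring
  map_smul' a b := by ext i; fin_cases i <;> simp
  left_inv a := by ext i; fin_cases i <;> simp
  right_inv a := by ext i; fin_cases i <;> simp

def rotLI : E2 ≃ₗᵢ[ℝ] E2 where
  toLinearEquiv := rotLE
  norm_map' z := by
    simp [rotLE, EuclideanSpace.norm_eq, Fin.sum_univ_two, add_comm]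

lemma rot_sum (L : E2 →L[ℝ] E2 →L[ℝ] ℝ) (z : E2) :
    L z z + L (rotLI z) (rotLI z) = (∑ i : Fin 2, L (EuclideanSpace.single i 1) (EuclideanSpace.single i 1)) * ‖z‖ ^ 2 := by
  have h (a : E2) : a = a 0 • EuclideanSpace.single (0 : Fin 2) (1:ℝ) + a 1 • EuclideanSpace.single (1 : Fin 2) (1:ℝ) := by
    ext i; fin_cases i <;> simp
  have h0 : (rotLI z) 0 = - z 1 := by simp [rotLI, rotLE]
  have h1 : (rotLI z) 1 = z 0 := by simp [rotLI, rotLE]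
  have e1 := h z
  have e2 := h (rotLI z)
  rw [h0, h1] at e2
  rw [EuclideanSpace.norm_sq_eq, e2]
  generalize z 0 = a at *
  generalize z 1 = b at *
  rw [e1]
  simp [Fin.sum_univ_two]
  ring

lemma taylor_line (δ : ℝ) (hδ : 0 < δ) (x : E2) (u : E2 → ℝ)
    (hu : ContDiffOn ℝ 4 u (closedBall x δ)) (z : E2) (hz : ‖z‖ ≤ δ) (k : ℕ) (hk : k ≤ 4) :
    EqOn (iteratedDerivWithin k (fun t : ℝ => u (x + t • z)) (Icc 0 1))
      (fun t => iteratedFDerivWithin ℝ k u (closedBall x δ) (x + t • z) (fun _ => z)) (Icc 0 1) := by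
  have hB : UniqueDiffOn ℝ (closedBall x δ) :=
    uniqueDiffOn_convex (convex_closedBall _ _) (by rw [interior_closedBall _ hδ.ne']; exact ⟨x, mem_ball_self hδ⟩)
  have hmaps : MapsTo (fun t : ℝ => x + t • z) (Icc 0 1) (closedBall x δ) := by
    intro t ht
    simp only [mem_closedBall, dist_self_add_left, norm_smul, Real.norm_eq_abs, abs_of_nonneg ht.1]
    nlinarith [ht.1, ht.2, norm_nonneg z]
  induction k with
  | zero => intro t ht; simp
  | succ k ih =>
    intro t ht
    have ih := ih (by omega)
    rw [iteratedDerivWithin_succ, derivWithin_congr ih (ih ht)]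
    have hd : DifferentiableWithinAt ℝ (iteratedFDerivWithin ℝ k u (closedBall x δ)) (closedBall x δ) (x + t • z) :=
      hu.differentiableOn_iteratedFDerivWithin (by exact_mod_cast (show k < 4 by omega)) hB _ (hmaps ht)
    have hl : HasDerivWithinAt (fun t : ℝ => x + t • z) z (Icc 0 1) t := by
      simpa using (((hasDerivAt_id t).smul_const z).const_add x).hasDerivWithinAt
    have hc := hd.hasFDerivWithinAt.comp_hasDerivWithinAt t hl hmaps
    have hc2 := ((ContinuousMultilinearMap.apply ℝ (fun _ : Fin k => E2) ℝ (fun _ => z)).hasFDerivAt).comp_hasDerivWithinAt t hc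
    have := hc2.derivWithin (uniqueDiffOn_Icc_zero_one t ht)
    exact this

lemma taylor_one (δ : ℝ) (hδ : 0 < δ) (x : E2) (u : E2 → ℝ)
    (hu : ContDiffOn ℝ 4 u (closedBall x δ)) (z : E2) (hz : ‖z‖ ≤ δ) (M : ℝ)
    (hM : ∀ y ∈ closedBall x δ, ‖iteratedFDerivWithin ℝ 4 u (closedBall x δ) y‖ ≤ M) :
    |u (x + z) - (u x + iteratedFDerivWithin ℝ 1 u (closedBall x δ) x (fun _ => z)
      + iteratedFDerivWithin ℝ 2 u (closedBall x δ) x (fun _ => z) / 2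
      + iteratedFDerivWithin ℝ 3 u (closedBall x δ) x (fun _ => z) / 6)| ≤ M * ‖z‖ ^ 4 / 6 := by
  have hmaps : MapsTo (fun t : ℝ => x + t • z) (Icc 0 1) (closedBall x δ) := by
    intro t ht
    simp only [mem_closedBall, dist_self_add_left, norm_smul, Real.norm_eq_abs, abs_of_nonneg ht.1]
    nlinarith [ht.1, ht.2, norm_nonneg z]
  have hc : ContDiffOn ℝ ((3:ℕ) + 1) (fun t : ℝ => u (x + t • z)) (Icc 0 1) := by
    have : ContDiffOn ℝ 4 (fun t : ℝ => u (x + t • z)) (Icc 0 1) :=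
      hu.comp (by fun_prop) hmaps
    exact this.of_le (by norm_num)
  have h0 : (0:ℝ) ∈ Icc (0:ℝ) 1 := by simp
  have T := taylor_mean_remainder_bound (C := M * ‖z‖ ^ 4) zero_le_one hc (x := 1) (by simp) (by
    intro t ht
    rw [taylor_line δ hδ x u hu z hz 4 le_rfl ht]
    refine (ContinuousMultilinearMap.le_opNorm _ _).trans ?_
    simp only [Finset.prod_const, Finset.card_univ, Fintype.card_fin]
    gcongr
    exact hM _ (hmaps ht))
  simp only [taylorWithinEval_succ, taylor_within_zero_eval] at T
  rw [taylor_line δ hδ x u hu z hz _ (by norm_num) h0, taylor_line δ hδ x u hu z hz _ (by norm_num) h0,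
    taylor_line δ hδ x u hu z hz _ (by norm_num) h0] at T
  norm_num [Nat.factorial] at T
  convert T using 1
  congr 1
  ring

lemma taylor_sym (δ : ℝ) (hδ : 0 < δ) (x : E2) (u : E2 → ℝ)
    (hu : ContDiffOn ℝ 4 u (closedBall x δ)) (z : E2) (hz : ‖z‖ ≤ δ) (M : ℝ)
    (hM : ∀ y ∈ closedBall x δ, ‖iteratedFDerivWithin ℝ 4 u (closedBall x δ) y‖ ≤ M) :
    |(u (x + z) - u x) + (u (x + -z) - u x) - iteratedFDerivWithin ℝ 2 u (closedBall x δ) x (fun _ => z)|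
      ≤ M * ‖z‖ ^ 4 / 3 := by
  have h1 := taylor_one δ hδ x u hu z hz M hM
  have h2 := taylor_one δ hδ x u hu (-z) (by simpa using hz) M hM
  have hn (k : ℕ) (A : ContinuousMultilinearMap ℝ (fun _ : Fin k => E2) ℝ) :
      A (fun _ => -z) = (-1) ^ k * A (fun _ => z) := by
    have := A.map_smul_univ (fun _ => (-1:ℝ)) (fun _ => z)
    simpa using this
  rw [hn, hn, hn, norm_neg] at h2
  rw [abs_le] at *
  constructor <;> linarith [h1.1, h1.2, h2.1, h2.2]

lemma ker_int (δ : ℝ) (γ : ℝ → ℝ) (hγ : RadialKernel 2 δ γ) :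
    Integrable (fun z : E2 => γ ‖z‖) := by
  obtain ⟨hm, hpos, hz, hi, _⟩ := hγ
  have := (integrable_fun_norm_addHaar (E := E2) volume (f := γ)).2
  apply this
  simp only [finrank_euclideanSpace, Fintype.card_fin, smul_eq_mul]
  norm_num
  have h1 : IntegrableOn (fun y => y * γ y) (Ioo 0 δ) := by
    apply Integrable.bdd_mul (c := δ) hi
    · exact measurable_id.aestronglyMeasurable
    · filter_upwards [ae_restrict_mem measurableSet_Ioo] with y hy
      rw [Real.norm_eq_abs, abs_of_pos hy.1]; exact hy.2.le
  have h2 := (integrable_indicator_iff measurableSet_Ioo).2 h1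
  refine h2.integrableOn.congr_fun ?_ measurableSet_Ioi
  intro y hy
  by_cases h : y < δ
  · simp [indicator, h, mem_Ioi.1 hy]
  · simp [indicator, h, hz y (not_lt.1 h)]

lemma ker_int2 (δ : ℝ) (γ : ℝ → ℝ) (hγ : RadialKernel 2 δ γ) (F : E2 → ℝ)
    (hF : ContinuousOn F (closedBall 0 δ)) :
    Integrable (fun z : E2 => F z * γ ‖z‖) := by
  have h := ker_int δ γ hγ
  rw [← integrableOn_iff_integrable_of_support_subset (s := closedBall 0 δ)]
  · exact IntegrableOn.continuousOn_mul hF h.integrableOn (isCompact_closedBall _ _)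
  · intro z hz
    by_contra hc
    apply hz
    simp only [mem_closedBall, dist_zero_right, not_le] at hc
    simp [hγ.2.2.1 _ hc.le]

lemma ker_two (δ : ℝ) (γ : ℝ → ℝ) (hγ : RadialKernel 2 δ γ) :
    ∫ z : E2, ‖z‖ ^ 2 * γ ‖z‖ = 2 := by
  have h := integral_fun_norm_addHaar (E := E2) volume (fun s => s ^ 2 * γ s)
  rw [h]
  obtain ⟨hm, hpos, hz, hi, he⟩ := hγ
  have : ∫ y in Ioi (0:ℝ), y ^ (Module.finrank ℝ E2 - 1) • (y ^ 2 * γ y) = ∫ s in Ioo 0 δ, s ^ (2 + 1) * γ s := by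
    rw [← integral_indicator measurableSet_Ioi, ← integral_indicator measurableSet_Ioo]
    congr 1
    ext y
    by_cases h0 : 0 < y
    · by_cases h : y < δ
      · simp [indicator, h, h0]; ring
      · simp [indicator, h, hz y (not_lt.1 h)]
    · simp [indicator, h0]
  rw [this]
  simp only [unitSphereArea] at he
  simp only [finrank_euclideanSpace, Fintype.card_fin, smul_eq_mul, nsmul_eq_mul, Measure.real]
  rw [← mul_assoc]
  exact_mod_cast he

lemma ker_quad (δ : ℝ) (γ : ℝ → ℝ) (hγ : RadialKernel 2 δ γ) (L : E2 →L[ℝ] E2 →L[ℝ] ℝ) :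
    ∫ z : E2, L z z * γ ‖z‖ = ∑ i : Fin 2, L (EuclideanSpace.single i 1) (EuclideanSpace.single i 1) := by
  have h1 : ∫ z : E2, L (rotLI z) (rotLI z) * γ ‖z‖ = ∫ z : E2, L z z * γ ‖z‖ := by
    have := rotLI.measurePreserving.integral_comp rotLI.toHomeomorph.measurableEmbedding
      (fun z : E2 => L z z * γ ‖z‖)
    simpa only [LinearIsometryEquiv.norm_map] using this
  have i1 := ker_int2 δ γ hγ (fun z => L z z) (by fun_prop)
  have i2 := ker_int2 δ γ hγ (fun z => L (rotLI z) (rotLI z)) (by fun_prop)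
  have h2 := integral_add i1 i2
  have h3 : ∀ z : E2, L z z * γ ‖z‖ + L (rotLI z) (rotLI z) * γ ‖z‖ =
      (∑ i : Fin 2, L (EuclideanSpace.single i 1) (EuclideanSpace.single i 1)) * (‖z‖ ^ 2 * γ ‖z‖) := by
    intro z
    rw [← add_mul, rot_sum, mul_assoc]
  simp only [h3] at h2
  rw [integral_const_mul, ker_two δ γ hγ] at h2
  linarith

/-- consistency of the nonlocal operator with a symmetrically
truncated interaction neighborhood. -/
theorem stmt15 :
    ∃ C > 0, ∀ δ r : ℝ, 0 < δ → 0 < r → r ≤ δ →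
      ∀ γ : ℝ → ℝ, RadialKernel 2 δ γ →
      ∀ m : EuclideanSpace ℝ (Fin 2) → ℝ, Measurable m →
        (∀ z, m z ∈ Icc (0 : ℝ) 1) → (∀ z, m (-z) = m z) →
        (∀ z, ‖z‖ ≤ r → m z = 1) → (∀ z, δ ≤ ‖z‖ → m z = 0) →
      ∀ D : ℝ,
        D = (∫ z in {z : EuclideanSpace ℝ (Fin 2) | r ≤ ‖z‖ ∧ ‖z‖ ≤ δ},
          ‖z‖ ^ 2 * γ ‖z‖) →
      ∀ (x : EuclideanSpace ℝ (Fin 2)) (u : EuclideanSpace ℝ (Fin 2) → ℝ),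
        ContDiffOn ℝ 4 u (closedBall x δ) →
      ∀ M₂ M₄ : ℝ,
        (∀ y ∈ closedBall x δ, ‖iteratedFDerivWithin ℝ 2 u (closedBall x δ) y‖ ≤ M₂) →
        (∀ y ∈ closedBall x δ, ‖iteratedFDerivWithin ℝ 4 u (closedBall x δ) y‖ ≤ M₄) →
        |2 * (∫ z, (u (x + z) - u x) * (γ ‖z‖ * m z)) -
            ∑ i : Fin 2, iteratedFDerivWithin ℝ 2 u (closedBall x δ) x
              ![EuclideanSpace.single i 1, EuclideanSpace.single i 1]| ≤
          C * (δ ^ 2 * M₄ + D * M₂) := by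
  refine ⟨1, one_pos, ?_⟩
  intro δ r hδ hr hrδ γ hγ m hm hm01 hmsym hmr hmδ D hD x u hu M₂ M₄ hM2 hM4
  have hB : UniqueDiffOn ℝ (closedBall x δ) :=
    uniqueDiffOn_convex (convex_closedBall _ _) (by rw [interior_closedBall _ hδ.ne']; exact ⟨x, mem_ball_self hδ⟩)
  have hx : x ∈ closedBall x δ := mem_closedBall_self hδ.le
  have hM2' : 0 ≤ M₂ := (norm_nonneg _).trans (hM2 x hx)
  have hM4' : 0 ≤ M₄ := (norm_nonneg _).trans (hM4 x hx)
  set L := fderivWithin ℝ (fderivWithin ℝ u (closedBall x δ)) (closedBall x δ) x with hL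
  have hLap : ∑ i : Fin 2, iteratedFDerivWithin ℝ 2 u (closedBall x δ) x
      ![EuclideanSpace.single i 1, EuclideanSpace.single i 1] = ∫ z : E2, L z z * γ ‖z‖ := by
    rw [ker_quad δ γ hγ]
    simp only [iteratedFDerivWithin_two_apply u hB hx]
    rfl
  have hLz (z : E2) : L z z = iteratedFDerivWithin ℝ 2 u (closedBall x δ) x (fun _ => z) := by
    rw [iteratedFDerivWithin_two_apply u hB hx]
  have hLb (z : E2) : |L z z| ≤ M₂ * ‖z‖ ^ 2 := by
    rw [hLz, ← Real.norm_eq_abs]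
    refine (ContinuousMultilinearMap.le_opNorm _ _).trans ?_
    simp only [Finset.prod_const, Finset.card_univ, Fintype.card_fin]
    gcongr
    exact hM2 x hx
  set S := {z : E2 | r ≤ ‖z‖ ∧ ‖z‖ ≤ δ} with hS
  have hSm : MeasurableSet S :=
    (measurableSet_le measurable_const measurable_norm).inter (measurableSet_le measurable_norm measurable_const)
  set F : E2 → ℝ := fun z => (u (x + z) - u x) * (γ ‖z‖ * m z) with hF
  have hFi : Integrable F := by
    have h0 : Integrable (fun z : E2 => (u (x + z) - u x) * γ ‖z‖) := by
      apply ker_int2 δ γ hγ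
      refine ContinuousOn.sub ?_ continuousOn_const
      refine hu.continuousOn.comp (by fun_prop) ?_
      intro z hz
      simpa using hz
    have h1 := h0.mul_bdd (c := 1) hm.aestronglyMeasurable (Filter.Eventually.of_forall fun z => by
      rw [Real.norm_eq_abs, abs_of_nonneg (hm01 z).1]; exact (hm01 z).2)
    refine h1.congr (Filter.Eventually.of_forall fun z => ?_)
    simp only [hF]; ring
  have hFn : Integrable (fun z => F (-z)) := hFi.comp_neg
  have hP : Integrable (fun z : E2 => ‖z‖ ^ 2 * γ ‖z‖) :=
    ker_int2 δ γ hγ (fun z => ‖z‖ ^ 2) (by fun_prop)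
  have hQ : Integrable (fun z : E2 => L z z * γ ‖z‖) :=
    ker_int2 δ γ hγ (fun z => L z z) (by fun_prop)
  have key : 2 * (∫ z, F z) - ∫ z : E2, L z z * γ ‖z‖ = ∫ z : E2, (F z + F (-z) - L z z * γ ‖z‖) := by
    have hadd : Integrable (fun z => F z + F (-z)) := hFi.add hFn
    rw [integral_sub hadd hQ, integral_add hFi hFn, integral_neg_eq_self F]
    ring
  rw [hLap, key]
  have hPS : Integrable (S.indicator (fun z : E2 => ‖z‖ ^ 2 * γ ‖z‖)) := hP.indicator hSm
  have hbd : ∀ z : E2, ‖F z + F (-z) - L z z * γ ‖z‖‖ ≤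
      M₄ * δ ^ 2 / 3 * (‖z‖ ^ 2 * γ ‖z‖) + M₂ * S.indicator (fun z : E2 => ‖z‖ ^ 2 * γ ‖z‖) z := by
    intro z
    rcases eq_or_ne z 0 with rfl | hz0
    · simp [hF, indicator]
    have hzp : 0 < ‖z‖ := norm_pos_iff.2 hz0
    rcases le_or_gt δ ‖z‖ with hz | hz
    · simp [hF, hγ.2.2.1 _ hz, indicator]
    have hg := hγ.2.1 _ hzp hz
    have hT := taylor_sym δ hδ x u hu z hz.le M₄ hM4
    rw [← hLz] at hT
    have hm0 := (hm01 z).1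
    have hm1 := (hm01 z).2
    have e : F z + F (-z) - L z z * γ ‖z‖ =
        ((u (x + z) - u x) + (u (x + -z) - u x) - L z z) * (γ ‖z‖ * m z) - L z z * (γ ‖z‖ * (1 - m z)) := by
      simp only [hF, norm_neg, hmsym]; ring
    rw [e]
    refine (norm_sub_le _ _).trans (add_le_add ?_ ?_)
    · rw [norm_mul, Real.norm_eq_abs, Real.norm_eq_abs, abs_of_nonneg (by positivity : 0 ≤ γ ‖z‖ * m z)]
      calc _ ≤ (M₄ * ‖z‖ ^ 4 / 3) * (γ ‖z‖ * 1) := by gcongr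
        _ = (M₄ * ‖z‖ ^ 2 / 3) * (‖z‖ ^ 2 * γ ‖z‖) := by ring
        _ ≤ _ := by gcongr
    · rw [norm_mul, Real.norm_eq_abs, Real.norm_eq_abs,
        abs_of_nonneg (mul_nonneg hg.le (by linarith) : 0 ≤ γ ‖z‖ * (1 - m z))]
      rcases le_or_gt ‖z‖ r with h | h
      · rw [hmr z h]
        simp only [sub_self, mul_zero]
        refine mul_nonneg hM2' ?_
        rw [indicator_apply]
        split_ifs <;> positivity
      · rw [indicator_of_mem (show z ∈ S from ⟨h.le, hz.le⟩)]
        calc _ ≤ (M₂ * ‖z‖ ^ 2) * (γ ‖z‖ * 1) := by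
              gcongr
              · exact hLb z
              · linarith
          _ = _ := by ring
  have hfin := norm_integral_le_of_norm_le ((hP.const_mul (M₄ * δ ^ 2 / 3)).add (hPS.const_mul M₂))
    (Filter.Eventually.of_forall hbd)
  have hsum : ∫ z : E2, (M₄ * δ ^ 2 / 3 * (‖z‖ ^ 2 * γ ‖z‖) + M₂ * S.indicator (fun z : E2 => ‖z‖ ^ 2 * γ ‖z‖) z)
      = M₄ * δ ^ 2 / 3 * 2 + M₂ * D := by
    rw [integral_add (hP.const_mul _) (hPS.const_mul M₂), integral_const_mul, integral_const_mul,
      integral_indicator hSm, ker_two δ γ hγ, hD]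
  rw [← Real.norm_eq_abs]
  refine (hfin.trans hsum.le).trans ?_
  nlinarith [mul_nonneg hM4' (sq_nonneg δ)]
end
end

section
/- (Consistency of the nonlocal operator with non-symmetrically truncated neighborhood.) There is an absolute constant C > 0 with the following property. Let δ > 0, r ∈ (0, δ], and let γ̃ satisfy the radial kernel conditions with horizon δ in dimension 2. Let m : ℝ² → [0,1] be measurable with m(z) = 1 for |z| ≤ r and m(z) = 0 for |z| ≥ δ, and set D := ∫_{r ≤ |z| ≤ δ} |z|² γ̃(|z|) dz. Let x ∈ ℝ² and let u : ℝ² → ℝ be four times continuously differentiable on the closed ball B̄_δ(x), with M_j := sup_{|y−x|≤δ} ‖D^j u(y)‖ for j = 1, 2, 3, 4. Then |2∫_{ℝ²} (u(x+z) − u(x)) γ̃(|z|) m(z) dz − Δu(x)| ≤ C (δ² M₄ + D (M₂ + r^{-1} M₁ + δ M₃)). -/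
open MeasureTheory Metric Set

noncomputable section

lemma line_iterated {δ : ℝ} (hδ : 0 < δ) (x z : E2) (hz : ‖z‖ ≤ δ) (u : E2 → ℝ)
    (hu : ContDiffOn ℝ 4 u (closedBall x δ)) (k : ℕ) (hk : k ≤ 4) :
    ∀ t ∈ Icc (0:ℝ) 1, iteratedDerivWithin k (fun t : ℝ => u (x + t • z)) (Icc 0 1) t =
      iteratedFDerivWithin ℝ k u (closedBall x δ) (x + t • z) (fun _ => z) := by
  have hmaps : MapsTo (fun t : ℝ => x + t • z) (Icc 0 1) (closedBall x δ) := by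
    intro t ht
    simp only [mem_closedBall, dist_self_add_left, norm_smul, Real.norm_eq_abs, abs_of_nonneg ht.1]
    nlinarith [ht.2, norm_nonneg z]
  have hud : UniqueDiffOn ℝ (closedBall x δ) :=
    uniqueDiffOn_convex (convex_closedBall x δ) (by
      rw [interior_closedBall x hδ.ne']; exact ⟨x, mem_ball_self hδ⟩)
  have hT := hu.ftaylorSeriesWithin hud
  induction k with
  | zero => intro t ht; simp
  | succ k ih =>
    intro t ht
    rw [iteratedDerivWithin_succ,
      derivWithin_congr (fun s hs => ih (by omega) s hs) (ih (by omega) t ht)]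
    have h1 := hT.fderivWithin k (by
      have : k < 4 := by omega
      exact_mod_cast this) (x + t • z) (hmaps ht)
    have h2 : HasDerivWithinAt (fun t : ℝ => x + t • z) z (Icc 0 1) t := by
      have := ((hasDerivAt_id t).smul_const z).const_add x
      simpa using this.hasDerivWithinAt
    have h3 := h1.comp_hasDerivWithinAt t h2 hmaps
    have h4 := ((ContinuousMultilinearMap.apply ℝ (fun _ : Fin k => E2) ℝ
      (fun _ => z)).hasFDerivAt).comp_hasDerivWithinAt t h3
    have h5 := h4.derivWithin (uniqueDiffOn_Icc_zero_one t ht)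
    refine Eq.trans h5 ?_
    simp only [ContinuousMultilinearMap.apply_apply,
      ContinuousMultilinearMap.curryLeft_apply]
    simp only [ftaylorSeriesWithin]
    congr 1
    ext i
    refine Fin.cases ?_ (fun j => ?_) i <;> simp

lemma taylor4 {δ : ℝ} (hδ : 0 < δ) (x z : E2) (hz : ‖z‖ ≤ δ) (u : E2 → ℝ)
    (hu : ContDiffOn ℝ 4 u (closedBall x δ)) (M : ℝ)
    (hM : ∀ y ∈ closedBall x δ, ‖iteratedFDerivWithin ℝ 4 u (closedBall x δ) y‖ ≤ M) :
    |(u (x + z) - u x) -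
      (iteratedFDerivWithin ℝ 1 u (closedBall x δ) x (fun _ => z)
       + iteratedFDerivWithin ℝ 2 u (closedBall x δ) x (fun _ => z) / 2
       + iteratedFDerivWithin ℝ 3 u (closedBall x δ) x (fun _ => z) / 6)| ≤ M * ‖z‖ ^ 4 / 6 := by
  have hmaps : MapsTo (fun t : ℝ => x + t • z) (Icc 0 1) (closedBall x δ) := by
    intro t ht
    simp only [mem_closedBall, dist_self_add_left, norm_smul, Real.norm_eq_abs, abs_of_nonneg ht.1]
    nlinarith [ht.2, norm_nonneg z]
  have hl := line_iterated hδ x z hz u hu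
  have hc : ContDiffOn ℝ ((3:ℕ) + 1) (fun t : ℝ => u (x + t • z)) (Icc 0 1) := by
    have h : ContDiff ℝ 4 (fun t : ℝ => x + t • z) := by fun_prop
    have := hu.comp h.contDiffOn hmaps
    have e4 : (((3:ℕ) : WithTop ℕ∞) + 1) = 4 := by norm_num
    rw [e4]
    exact this
  have := taylor_mean_remainder_bound (C := M * ‖z‖ ^ 4) zero_le_one hc (right_mem_Icc.2 zero_le_one) (by
    intro t ht
    rw [hl 4 le_rfl t ht]
    refine (ContinuousMultilinearMap.le_opNorm _ _).trans ?_
    simp only [Finset.prod_const, Finset.card_univ, Fintype.card_fin]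
    gcongr
    exact hM _ (hmaps ht))
  simp only [taylorWithinEval_succ, taylor_within_zero_eval] at this
  rw [hl 1 (by norm_num) 0 (by simp), hl 2 (by norm_num) 0 (by simp),
    hl 3 (by norm_num) 0 (by simp)] at this
  simp only [zero_smul, add_zero, one_smul, Real.norm_eq_abs, Nat.factorial, smul_eq_mul] at this
  norm_num at this
  convert this using 2
  ring

lemma rk_nonneg {δ : ℝ} {γ : ℝ → ℝ} (h : RadialKernel 2 δ γ) (z : E2) (hz : z ≠ 0) :
    0 ≤ γ ‖z‖ := by
  rcases lt_or_ge ‖z‖ δ with h1 | h1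
  · exact (h.2.1 _ (norm_pos_iff.2 hz) h1).le
  · exact (h.2.2.1 _ h1).ge

lemma rk_int {δ : ℝ} (hδ : 0 < δ) {γ : ℝ → ℝ} (h : RadialKernel 2 δ γ) (k : ℕ) :
    Integrable (fun z : E2 => ‖z‖ ^ k * γ ‖z‖) := by
  obtain ⟨hm, -, h0, hi, -⟩ := h
  rw [integrable_fun_norm_addHaar (volume : Measure E2) (f := fun s => s ^ k * γ s)]
  have hfr : Module.finrank ℝ E2 = 2 := by simp [E2]
  rw [hfr]
  rw [← Ioo_union_Ici_eq_Ioi hδ, integrableOn_union]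
  constructor
  · refine Integrable.mono' (hi.norm.const_mul (δ ^ (k+1))) (by fun_prop) ?_
    refine (ae_restrict_iff' measurableSet_Ioo).2 (.of_forall fun s hs => ?_)
    simp only [smul_eq_mul, norm_mul, norm_pow, Real.norm_eq_abs, abs_of_pos hs.1]
    rw [← mul_assoc, ← pow_add]
    rw [show 2 - 1 + k = k + 1 by omega]
    gcongr
    · exact hs.1.le
    · exact hs.2.le
  · refine integrableOn_zero.congr_fun (fun s hs => ?_) measurableSet_Ici
    simp [h0 s hs]

lemma rk_two {δ : ℝ} (hδ : 0 < δ) {γ : ℝ → ℝ} (h : RadialKernel 2 δ γ) :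
    ∫ z : E2, ‖z‖ ^ 2 * γ ‖z‖ = 2 := by
  obtain ⟨hm, -, h0, hi, he⟩ := h
  rw [integral_fun_norm_addHaar (volume : Measure E2) (f := fun s => s ^ 2 * γ s)]
  have hfr : Module.finrank ℝ E2 = 2 := by simp [E2]
  rw [hfr]
  have : ∫ y in Ioi (0:ℝ), y ^ (2 - 1) • (y ^ 2 * γ y) = ∫ s in Ioo 0 δ, s ^ (2 + 1) * γ s := by
    rw [setIntegral_eq_of_subset_of_forall_sdiff_eq_zero measurableSet_Ioi
      (Ioo_subset_Ioi_self : Ioo 0 δ ⊆ Ioi 0)]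
    · refine setIntegral_congr_fun measurableSet_Ioo fun s _ => ?_
      simp only [smul_eq_mul]; ring
    · intro s hs
      have : δ ≤ s := by
        by_contra hc
        exact hs.2 ⟨hs.1, not_le.1 hc⟩
      simp [h0 s this]
  rw [this]
  unfold unitSphereArea at he
  simp only [nsmul_eq_mul, smul_eq_mul, Measure.real]
  push_cast at he ⊢
  linarith

lemma rk_odd {γ : ℝ → ℝ} (f : E2 → ℝ) (hf : ∀ z, f (-z) = - f z) :
    ∫ z : E2, f z * γ ‖z‖ = 0 := by
  have := integral_neg_eq_self (fun z : E2 => f z * γ ‖z‖) volume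
  simp only [hf, norm_neg, neg_mul, integral_neg] at this
  linarith

/-- rotation by a quarter turn -/
def rot : E2 ≃ₗᵢ[ℝ] E2 :=
  (LinearIsometryEquiv.piLpCongrLeft 2 ℝ ℝ (Equiv.swap (0 : Fin 2) 1)).trans
    (LinearIsometryEquiv.piLpCongrRight 2
      (fun i : Fin 2 => if i = 0 then LinearIsometryEquiv.neg ℝ else LinearIsometryEquiv.refl ℝ ℝ))

lemma rot0 (z : E2) : rot z 0 = - z 1 := by
  simp [rot, LinearIsometryEquiv.piLpCongrRight_apply]

lemma rot1 (z : E2) : rot z 1 = z 0 := by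
  simp [rot, LinearIsometryEquiv.piLpCongrRight_apply]

lemma rk_rot (f : E2 → ℝ) : ∫ z, f (rot z) = ∫ z, f z :=
  (rot.measurePreserving).integral_comp rot.toHomeomorph.measurableEmbedding f

lemma rk_cross {γ : ℝ → ℝ} : ∫ z : E2, z 0 * z 1 * γ ‖z‖ = 0 := by
  have := rk_rot (fun z => z 0 * z 1 * γ ‖z‖)
  simp only [rot0, rot1, LinearIsometryEquiv.norm_map] at this
  have h2 : ∫ z : E2, -z 1 * z 0 * γ ‖z‖ = - ∫ z : E2, z 0 * z 1 * γ ‖z‖ := by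
    rw [← integral_neg]; congr 1; ext z; ring
  linarith

lemma rk_dom {δ : ℝ} (hδ : 0 < δ) {γ : ℝ → ℝ} (h : RadialKernel 2 δ γ) (k : ℕ) (f : E2 → ℝ)
    (hf : Measurable f) (C : ℝ) (hC : ∀ z, |f z| ≤ C * ‖z‖ ^ k) :
    Integrable (fun z : E2 => f z * γ ‖z‖) := by
  have hm := h.1
  refine Integrable.mono' ((rk_int hδ h k).norm.const_mul C) (by fun_prop) (.of_forall fun z => ?_)
  simp only [norm_mul, norm_pow, norm_norm, ← mul_assoc]
  exact mul_le_mul_of_nonneg_right (hC z) (norm_nonneg _)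

lemma coord_le (z : E2) (i : Fin 2) : |z i| ≤ ‖z‖ := by
  simpa using PiLp.norm_apply_le z i

lemma rk_prod_int {δ : ℝ} (hδ : 0 < δ) {γ : ℝ → ℝ} (h : RadialKernel 2 δ γ) (i j : Fin 2) :
    Integrable (fun z : E2 => z i * z j * γ ‖z‖) := by
  refine rk_dom hδ h 2 (fun z => z i * z j) (by fun_prop) 1 fun z => ?_
  rw [abs_mul, one_mul, sq]
  gcongr <;> exact coord_le _ _

lemma rk_sq {δ : ℝ} (hδ : 0 < δ) {γ : ℝ → ℝ} (h : RadialKernel 2 δ γ) :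
    ∫ z : E2, z 0 * z 0 * γ ‖z‖ = 1 ∧ ∫ z : E2, z 1 * z 1 * γ ‖z‖ = 1 := by
  have h1 := rk_rot (fun z => z 0 * z 0 * γ ‖z‖)
  simp only [rot0, LinearIsometryEquiv.norm_map, neg_mul_neg] at h1
  have h2 : ∫ z : E2, z 0 * z 0 * γ ‖z‖ + z 1 * z 1 * γ ‖z‖ = 2 := by
    rw [← rk_two hδ h]
    congr 1; ext z
    rw [EuclideanSpace.real_norm_sq_eq, Fin.sum_univ_two]
    ring
  rw [integral_add (rk_prod_int hδ h 0 0) (rk_prod_int hδ h 1 1)] at h2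
  constructor <;> linarith

lemma bil_expand (H : ContinuousMultilinearMap ℝ (fun _ : Fin 2 => E2) ℝ) (z : E2) :
    H (fun _ => z) = ∑ i : Fin 2, ∑ j : Fin 2, z i * z j *
      H ![EuclideanSpace.single i 1, EuclideanSpace.single j 1] := by
  have hz : z = z 0 • EuclideanSpace.single (0 : Fin 2) (1:ℝ) + z 1 • EuclideanSpace.single (1 : Fin 2) (1:ℝ) := by
    ext i; fin_cases i <;> simp
  have e : ∀ a b : E2, H ![a, b] = (H.curryLeft a) ![b] := fun a b => by simp
  have e2 : ∀ (G : ContinuousMultilinearMap ℝ (fun _ : Fin 1 => E2) ℝ) (b : E2),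
      G ![b] = G.curryLeft b ![] := fun G b => by simp
  have c1 : ∀ (G G' : ContinuousMultilinearMap ℝ (fun _ : Fin 1 => E2) ℝ) (b : E2),
      (G + G').curryLeft b ![] = G.curryLeft b ![] + G'.curryLeft b ![] := fun _ _ _ => rfl
  have c2 : ∀ (c : ℝ) (G : ContinuousMultilinearMap ℝ (fun _ : Fin 1 => E2) ℝ) (b : E2),
      (c • G).curryLeft b ![] = c * G.curryLeft b ![] := fun _ _ _ => rfl
  have e1 : (fun _ : Fin 2 => z) = ![z, z] := by ext i; fin_cases i <;> rfl
  rw [e1]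
  simp only [Fin.sum_univ_two, e, e2]
  conv_lhs => rw [hz]
  simp only [map_add, map_smul, add_apply,
    smul_apply, smul_eq_mul, c1, c2]
  ring

lemma ml_bound {k : ℕ} (H : ContinuousMultilinearMap ℝ (fun _ : Fin k => E2) ℝ) (z : E2) (M : ℝ)
    (hM : ‖H‖ ≤ M) : |H (fun _ => z)| ≤ M * ‖z‖ ^ k := by
  have := H.le_opNorm (fun _ => z)
  simp only [Finset.prod_const, Finset.card_univ, Fintype.card_fin, Real.norm_eq_abs] at this
  refine this.trans ?_
  gcongr

lemma ml_meas {k : ℕ} (H : ContinuousMultilinearMap ℝ (fun _ : Fin k => E2) ℝ) :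
    Measurable (fun z : E2 => H (fun _ => z)) := by
  have : Continuous (fun z : E2 => H (fun _ => z)) := H.cont.comp (by fun_prop)
  exact this.measurable

lemma ml_int {δ : ℝ} (hδ : 0 < δ) {γ : ℝ → ℝ} (h : RadialKernel 2 δ γ) {k : ℕ}
    (H : ContinuousMultilinearMap ℝ (fun _ : Fin k => E2) ℝ) :
    Integrable (fun z : E2 => H (fun _ => z) * γ ‖z‖) :=
  rk_dom hδ h k _ (ml_meas H) ‖H‖ fun z => ml_bound H z _ le_rfl

lemma ml_odd {k : ℕ} (hk : Odd k) (H : ContinuousMultilinearMap ℝ (fun _ : Fin k => E2) ℝ) (z : E2) :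
    H (fun _ => -z) = - H (fun _ => z) := by
  have := H.map_smul_univ (fun _ => (-1:ℝ)) (fun _ => z)
  simpa [hk.neg_one_pow] using this

lemma rk_hess {δ : ℝ} (hδ : 0 < δ) {γ : ℝ → ℝ} (h : RadialKernel 2 δ γ)
    (H : ContinuousMultilinearMap ℝ (fun _ : Fin 2 => E2) ℝ) :
    ∫ z : E2, H (fun _ => z) * γ ‖z‖ =
      ∑ i : Fin 2, H ![EuclideanSpace.single i 1, EuclideanSpace.single i 1] := by
  have e : ∀ z : E2, H (fun _ => z) * γ ‖z‖ =
      ∑ i : Fin 2, ∑ j : Fin 2, z i * z j * γ ‖z‖ *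
      H ![EuclideanSpace.single i 1, EuclideanSpace.single j 1] := by
    intro z
    rw [bil_expand]
    simp only [Fin.sum_univ_two]
    ring
  simp only [e]
  rw [integral_finsetSum _ (fun i _ => integrable_finsetSum _ fun j _ =>
    (rk_prod_int hδ h i j).mul_const _)]
  simp_rw [integral_finsetSum _ (fun j _ => (rk_prod_int hδ h _ j).mul_const _)]
  simp only [integral_mul_const, Fin.sum_univ_two]
  have hc : ∫ z : E2, z 1 * z 0 * γ ‖z‖ = 0 := by
    rw [← rk_cross (γ := γ)]; congr 1; ext z; ring
  rw [hc, rk_cross, (rk_sq hδ h).1, (rk_sq hδ h).2]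
  ring

/-- consistency of the nonlocal operator with a non-symmetrically
truncated interaction neighborhood. -/
theorem stmt16 :
    ∃ C > 0, ∀ δ r : ℝ, 0 < δ → 0 < r → r ≤ δ →
      ∀ γ : ℝ → ℝ, RadialKernel 2 δ γ →
      ∀ m : EuclideanSpace ℝ (Fin 2) → ℝ, Measurable m →
        (∀ z, m z ∈ Icc (0 : ℝ) 1) →
        (∀ z, ‖z‖ ≤ r → m z = 1) → (∀ z, δ ≤ ‖z‖ → m z = 0) →
      ∀ D : ℝ,
        D = (∫ z in {z : EuclideanSpace ℝ (Fin 2) | r ≤ ‖z‖ ∧ ‖z‖ ≤ δ},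
          ‖z‖ ^ 2 * γ ‖z‖) →
      ∀ (x : EuclideanSpace ℝ (Fin 2)) (u : EuclideanSpace ℝ (Fin 2) → ℝ),
        ContDiffOn ℝ 4 u (closedBall x δ) →
      ∀ M₁ M₂ M₃ M₄ : ℝ,
        (∀ y ∈ closedBall x δ, ‖iteratedFDerivWithin ℝ 1 u (closedBall x δ) y‖ ≤ M₁) →
        (∀ y ∈ closedBall x δ, ‖iteratedFDerivWithin ℝ 2 u (closedBall x δ) y‖ ≤ M₂) →
        (∀ y ∈ closedBall x δ, ‖iteratedFDerivWithin ℝ 3 u (closedBall x δ) y‖ ≤ M₃) →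
        (∀ y ∈ closedBall x δ, ‖iteratedFDerivWithin ℝ 4 u (closedBall x δ) y‖ ≤ M₄) →
        |2 * (∫ z, (u (x + z) - u x) * (γ ‖z‖ * m z)) -
            ∑ i : Fin 2, iteratedFDerivWithin ℝ 2 u (closedBall x δ) x
              ![EuclideanSpace.single i 1, EuclideanSpace.single i 1]| ≤
          C * (δ ^ 2 * M₄ + D * (M₂ + r⁻¹ * M₁ + δ * M₃)) := by
  refine ⟨2, by norm_num, ?_⟩
  intro δ r hδ hr hrδ γ hγ m hm hm01 hm1 hm0 D hD x u hu M₁ M₂ M₃ M₄ h1 h2 h3 h4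
  have hγm := hγ.1
  have hx : x ∈ closedBall x δ := mem_closedBall_self hδ.le
  set H1 := iteratedFDerivWithin ℝ 1 u (closedBall x δ) x with hH1
  set H2 := iteratedFDerivWithin ℝ 2 u (closedBall x δ) x with hH2
  set H3 := iteratedFDerivWithin ℝ 3 u (closedBall x δ) x with hH3
  have n1 := h1 x hx
  have n2 := h2 x hx
  have n3 := h3 x hx
  rw [← hH1] at n1
  rw [← hH2] at n2
  rw [← hH3] at n3
  have p1 : 0 ≤ M₁ := (norm_nonneg _).trans n1
  have p2 : 0 ≤ M₂ := (norm_nonneg _).trans n2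
  have p3 : 0 ≤ M₃ := (norm_nonneg _).trans n3
  have p4 : 0 ≤ M₄ := (norm_nonneg _).trans (h4 x hx)
  set A : Set E2 := {z : E2 | r ≤ ‖z‖ ∧ ‖z‖ ≤ δ} with hA
  have hAm : MeasurableSet A :=
    (measurableSet_le measurable_const measurable_norm).inter
      (measurableSet_le measurable_norm measurable_const)
  let P : E2 → ℝ := fun z => H1 (fun _ => z) + H2 (fun _ => z) / 2 + H3 (fun _ => z) / 6
  have i1 := ml_int hδ hγ H1
  have i2 := (ml_int hδ hγ H2).div_const 2
  have i3 := (ml_int hδ hγ H3).div_const 6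
  have ePf : (fun z => P z * γ ‖z‖) = fun z : E2 => H1 (fun _ => z) * γ ‖z‖
      + H2 (fun _ => z) * γ ‖z‖ / 2 + H3 (fun _ => z) * γ ‖z‖ / 6 := by
    ext z; simp only [P]; ring
  have iP : Integrable (fun z => P z * γ ‖z‖) := by
    rw [ePf]; exact (i1.add i2).add i3
  have eP : 2 * ∫ z, P z * γ ‖z‖ =
      ∑ i : Fin 2, H2 ![EuclideanSpace.single i 1, EuclideanSpace.single i 1] := by
    have i12 : Integrable (fun z : E2 => H1 (fun _ => z) * γ ‖z‖ + H2 (fun _ => z) * γ ‖z‖ / 2) :=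
      i1.add i2
    rw [ePf, integral_add i12 i3, integral_add i1 i2, integral_div, integral_div,
      rk_hess hδ hγ, rk_odd _ (ml_odd (by decide) H1), rk_odd _ (ml_odd (by decide) H3)]
    ring
  let B : E2 → ℝ := fun z => (M₄ * δ ^ 2 / 6) * (‖z‖ ^ 2 * γ ‖z‖) +
    (M₁ * r⁻¹ + M₂ / 2 + δ * M₃ / 6) * A.indicator (fun z => ‖z‖ ^ 2 * γ ‖z‖) z
  have iB : Integrable B :=
    ((rk_int hδ hγ 2).const_mul _).add (((rk_int hδ hγ 2).indicator hAm).const_mul _)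
  have eB : ∫ z, B z = M₄ * δ ^ 2 / 3 + (M₁ * r⁻¹ + M₂ / 2 + δ * M₃ / 6) * D := by
    rw [integral_add ((rk_int hδ hγ 2).const_mul _)
      (((rk_int hδ hγ 2).indicator hAm).const_mul _), integral_const_mul, integral_const_mul,
      rk_two hδ hγ, integral_indicator hAm, ← hD]
    ring
  have hD0 : 0 ≤ D := by
    rw [hD]
    refine setIntegral_nonneg hAm fun z hz => ?_
    have : z ≠ 0 := norm_pos_iff.1 (hr.trans_le hz.1)
    exact mul_nonneg (by positivity) (rk_nonneg hγ z this)
  have bound : ∀ᵐ z : E2, ‖(u (x + z) - u x) * (γ ‖z‖ * m z) - P z * γ ‖z‖‖ ≤ B z := by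
    have hne : ∀ᵐ z : E2, z ≠ 0 := by
      simp [ae_iff]
    filter_upwards [hne] with z hz
    have g0 := rk_nonneg hγ z hz
    rcases le_or_gt δ ‖z‖ with hzδ | hzδ
    · have : γ ‖z‖ = 0 := hγ.2.2.1 _ hzδ
      simp [this, B, indicator]
    have hT := taylor4 hδ x z hzδ.le u hu M₄ h4
    have hT' : |(u (x + z) - u x) - P z| ≤ M₄ * ‖z‖ ^ 4 / 6 := hT
    have hm' := hm01 z
    have hz0 := norm_nonneg z
    have e : (u (x + z) - u x) * (γ ‖z‖ * m z) - P z * γ ‖z‖ =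
      ((u (x + z) - u x) - P z) * (γ ‖z‖ * m z) + (m z - 1) * (P z * γ ‖z‖) := by ring
    rw [e]
    refine (norm_add_le _ _).trans (add_le_add ?_ ?_)
    · rw [Real.norm_eq_abs, abs_mul, abs_of_nonneg (mul_nonneg g0 hm'.1)]
      calc _ ≤ (M₄ * ‖z‖ ^ 4 / 6) * (γ ‖z‖ * 1) := by
            refine mul_le_mul hT' (mul_le_mul_of_nonneg_left hm'.2 g0) (mul_nonneg g0 hm'.1) ?_
            positivity
        _ = M₄ * ‖z‖ ^ 2 / 6 * (‖z‖ ^ 2 * γ ‖z‖) := by ring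
        _ ≤ _ := by gcongr
    · rcases le_or_gt ‖z‖ r with hzr | hzr
      · rw [hm1 z hzr]
        simp only [sub_self, zero_mul, norm_zero]
        refine mul_nonneg (by positivity) ?_
        rw [indicator_apply]
        split_ifs
        · positivity
        · exact le_rfl
      · have hzA : z ∈ A := ⟨hzr.le, hzδ.le⟩
        rw [indicator_of_mem hzA, norm_mul, norm_mul, Real.norm_eq_abs, Real.norm_eq_abs,
          Real.norm_eq_abs, abs_of_nonneg g0]
        have ha : |m z - 1| ≤ 1 := by rw [abs_le]; constructor <;> linarith [hm'.1, hm'.2]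
        have b1 := ml_bound H1 z M₁ n1
        have b2 := ml_bound H2 z M₂ n2
        have b3 := ml_bound H3 z M₃ n3
        have hP : |P z| ≤ (M₁ * r⁻¹ + M₂ / 2 + δ * M₃ / 6) * ‖z‖ ^ 2 := by
          have t1 : |P z| ≤ |H1 (fun _ => z)| + |H2 (fun _ => z)| / 2 + |H3 (fun _ => z)| / 6 := by
            refine (abs_add_le _ _).trans (add_le_add ((abs_add_le _ _).trans (add_le_add le_rfl ?_)) ?_)
            · rw [abs_div]; norm_num
            · rw [abs_div]; norm_num
          have t2 : M₁ * ‖z‖ ≤ M₁ * r⁻¹ * ‖z‖ ^ 2 := by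
            have : 1 ≤ r⁻¹ * ‖z‖ := by
              rw [← div_eq_inv_mul, one_le_div hr]; exact hzr.le
            calc M₁ * ‖z‖ = M₁ * ‖z‖ * 1 := by ring
              _ ≤ M₁ * ‖z‖ * (r⁻¹ * ‖z‖) := by gcongr
              _ = _ := by ring
          have t3 : M₃ * ‖z‖ ^ 3 ≤ δ * M₃ * ‖z‖ ^ 2 := by
            calc M₃ * ‖z‖ ^ 3 = ‖z‖ * M₃ * ‖z‖ ^ 2 := by ring
              _ ≤ _ := by gcongr
          rw [pow_one] at b1
          nlinarith
        calc _ ≤ 1 * (((M₁ * r⁻¹ + M₂ / 2 + δ * M₃ / 6) * ‖z‖ ^ 2) * γ ‖z‖) := by gcongr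
          _ = _ := by ring
  have meas : AEStronglyMeasurable (fun z : E2 => (u (x + z) - u x) * (γ ‖z‖ * m z)) := by
    have hcont : ContinuousOn (fun z : E2 => u (x + z) - u x) (closedBall 0 δ) := by
      refine ContinuousOn.sub (hu.continuousOn.comp (by fun_prop) ?_) continuousOn_const
      intro z hz
      simpa using hz
    have e : (fun z : E2 => (u (x + z) - u x) * (γ ‖z‖ * m z)) = fun z =>
      (closedBall (0:E2) δ).indicator (fun z : E2 => u (x + z) - u x) z * (γ ‖z‖ * m z) := by
      ext z
      by_cases hz : z ∈ closedBall (0:E2) δ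
      · rw [indicator_of_mem hz]
      · have : δ ≤ ‖z‖ := by
          rw [mem_closedBall_zero_iff] at hz
          linarith
        simp [hγ.2.2.1 _ this]
    rw [e]
    have hg : Measurable (fun z : E2 => γ ‖z‖ * m z) := by fun_prop
    have h' := (aestronglyMeasurable_indicator_iff measurableSet_closedBall).2
      (hcont.aestronglyMeasurable (μ := volume) measurableSet_closedBall)
    exact h'.mul hg.aestronglyMeasurable
  have iDiff : Integrable (fun z : E2 => (u (x + z) - u x) * (γ ‖z‖ * m z) - P z * γ ‖z‖) :=
    Integrable.mono' iB (meas.sub iP.aestronglyMeasurable) bound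
  have iU : Integrable (fun z : E2 => (u (x + z) - u x) * (γ ‖z‖ * m z)) := by
    have := iDiff.add iP
    refine this.congr (.of_forall fun z => ?_)
    simp
  have key := norm_integral_le_of_norm_le iB bound
  rw [integral_sub iU iP, eB, Real.norm_eq_abs] at key
  rw [← eP, ← mul_sub, abs_mul, abs_two]
  have q : 0 ≤ r⁻¹ := by positivity
  have : M₄ * δ ^ 2 / 3 + (M₁ * r⁻¹ + M₂ / 2 + δ * M₃ / 6) * D ≤
      δ ^ 2 * M₄ + D * (M₂ + r⁻¹ * M₁ + δ * M₃) := by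
    have a1 : 0 ≤ M₄ * δ ^ 2 := by positivity
    have a2 : 0 ≤ D * M₂ := by positivity
    have a3 : 0 ≤ D * (δ * M₃) := by positivity
    nlinarith
  linarith
end
end
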